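/- arXiv:1407.1914 — 2 statements merged into one kernel-verified Lean document; each statement's English description precedes it below -/
import Mathlib

section
/- Let K be a real number. If θ(x) < x for all x with e^{2.4} ≤ x ≤ K, then π(x) < li(x) for all x with e^{2.4} ≤ x ≤ K. -/
open Real Finset

/-- The Chebyshev function `θ(x) = ∑_{p ≤ x, p prime} log p`. -/
noncomputable def chebyshevTheta (x : ℝ) : ℝ :=
  ∑ p ∈ (Finset.range (⌊x⌋₊ + 1)).filter Nat.Prime, Real.log p

/-- The logarithmic integral `li(x) = ∫_2^x dt / log t`. -/
noncomputable def li (x : ℝ) : ℝ := ∫ t in (2 : ℝ)..x, 1 / Real.log t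

theorem aux_log (m : ℝ) (a b : ℕ) (hm : 0 < m) (hb : 0 < b)
    (h : m ^ b ≤ 2.7182818283 ^ a) : Real.log m ≤ a / b := by
  have h1 : m ^ b ≤ Real.exp a := by
    refine h.trans ?_
    rw [← Real.exp_one_pow]
    exact pow_le_pow_left₀ (by norm_num) Real.exp_one_gt_d9.le _
  have h2 := Real.log_le_log (by positivity) h1
  rw [Real.log_exp, Real.log_pow] at h2
  rw [le_div_iff₀ (by exact_mod_cast hb)]
  linarith

theorem aux_int (a b : ℝ) (ha : 1 < a) (hb : 1 < b) :
    IntervalIntegrable (fun t : ℝ => 1 / Real.log t) MeasureTheory.volume a b := by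
  apply ContinuousOn.intervalIntegrable
  intro t ht
  have h1 : 1 < t := lt_of_lt_of_le (lt_min ha hb) ht.1
  have h0 : t ≠ 0 := by linarith
  have := (Real.log_pos h1).ne'
  apply ContinuousAt.continuousWithinAt
  fun_prop (disch := assumption)

theorem aux_add (a b : ℝ) (ha : 1 < a) (hb : 1 < b) :
    li b = li a + ∫ t in a..b, 1 / Real.log t := by
  unfold li
  rw [intervalIntegral.integral_add_adjacent_intervals (aux_int _ _ (by norm_num) ha)
    (aux_int _ _ ha hb)]

theorem aux_step (a b s : ℝ) (p q : ℕ) (ha : 1 < a) (hab : a ≤ b) (hs : s ≤ li a)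
    (hp : 0 < p) (hq : 0 < q)
    (h : ((a + b) / 2) ^ q ≤ 2.7182818283 ^ p) : s + (b - a) * q / p ≤ li b := by
  have hl := aux_log ((a + b) / 2) p q (by linarith) hq h
  rw [aux_add a b ha (by linarith)]
  set m := (a + b) / 2 with hm
  have hp' : (0 : ℝ) < p := by exact_mod_cast hp
  have hq' : (0 : ℝ) < q := by exact_mod_cast hq
  set c : ℝ := p / q with hc
  have hc0 : 0 < c := by positivity
  have hm0 : 0 < m := by rw [hm]; linarith
  have key : ∫ t in a..b, (1 / c - (t - m) / (m * c ^ 2)) ≤ ∫ t in a..b, 1 / Real.log t := by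
    apply intervalIntegral.integral_mono_on hab
    · apply Continuous.intervalIntegrable
      fun_prop
    · exact aux_int _ _ ha (by linarith)
    · intro t ht
      have ht1 : 1 < t := by linarith [ht.1]
      have hlt := Real.log_pos ht1
      have h1 : Real.log t ≤ c + (t - m) / m := by
        have h2 := Real.log_le_sub_one_of_pos (show 0 < t / m by positivity)
        rw [Real.log_div (by linarith) hm0.ne'] at h2
        have : (t - m) / m = t / m - 1 := by field_simp
        linarith
      have h3 : 1 / c - (t - m) / (m * c ^ 2) = 2 / c - (c + (t - m) / m) / c ^ 2 := by
        field_simp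
        ring
      rw [h3]
      have h4 : Real.log t / c ^ 2 ≤ (c + (t - m) / m) / c ^ 2 := by gcongr
      have h5 : 1 / Real.log t - (2 / c - Real.log t / c ^ 2)
          = (Real.log t - c) ^ 2 / (Real.log t * c ^ 2) := by
        field_simp
        ring
      have h6 : 0 ≤ (Real.log t - c) ^ 2 / (Real.log t * c ^ 2) := by positivity
      linarith
  have e : ∫ t in a..b, (1 / c - (t - m) / (m * c ^ 2)) = (b - a) * q / p := by
    rw [intervalIntegral.integral_sub (by simp) (by apply Continuous.intervalIntegrable; fun_prop),
      intervalIntegral.integral_div (μ := MeasureTheory.volume) (m * c ^ 2) (fun t => t - m),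
      intervalIntegral.integral_sub (by simp) (by simp)]
    simp only [intervalIntegral.integral_const, integral_id, smul_eq_mul]
    have : (b ^ 2 - a ^ 2) / 2 - (b - a) * m = 0 := by rw [hm]; ring
    rw [this, hc]
    field_simp
    ring
  linarith

theorem aux_mono (a b : ℝ) (ha : 1 < a) (hab : a ≤ b) : li a ≤ li b := by
  rw [aux_add a b ha (by linarith)]
  have : 0 ≤ ∫ t in a..b, 1 / Real.log t := by
    apply intervalIntegral.integral_nonneg hab
    intro t ht
    have := Real.log_pos (show 1 < t by linarith [ht.1])
    positivity
  linarith

theorem aux_theta (x : ℝ) : chebyshevTheta x = Chebyshev.theta x := by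
  rw [Chebyshev.theta_eq_sum_Icc, chebyshevTheta, Nat.range_succ_eq_Icc_zero]

theorem aux_ftc (a b : ℝ) (ha : 1 < a) (hab : a ≤ b) :
    ∫ t in a..b, 1 / Real.log t
      = b / Real.log b - a / Real.log a + ∫ t in a..b, 1 / Real.log t ^ 2 := by
  have i1 := aux_int a b ha (by linarith)
  have i2 := Chebyshev.intervalIntegrable_one_div_log_sq ha (show 1 < b by linarith)
  have : ∫ t in a..b, (1 / Real.log t - 1 / Real.log t ^ 2)
      = b / Real.log b - a / Real.log a := by
    apply intervalIntegral.integral_eq_sub_of_hasDerivAt (f := fun t => t / Real.log t)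
    · intro t ht
      rw [Set.uIcc_of_le hab] at ht
      have ht1 : 1 < t := by linarith [ht.1]
      have hl := (Real.log_pos ht1).ne'
      have h0 : t ≠ 0 := by linarith
      have := (hasDerivAt_id t).div (Real.hasDerivAt_log h0) hl
      refine HasDerivAt.congr_deriv (f := fun t => t / Real.log t) this ?_
      simp only [id]
      field_simp
    · exact i1.sub i2
  rw [intervalIntegral.integral_sub i1 i2] at this
  linarith

theorem aux_tail (N x : ℝ) (hN : 2 ≤ N) (hNx : N ≤ x)
    (h : ∀ t, N ≤ t → t ≤ x → Chebyshev.theta t < t)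
    (hE : Nat.primeCounting ⌊N⌋₊ + (N - Chebyshev.theta N) / Real.log N < li N) :
    (Nat.primeCounting ⌊x⌋₊ : ℝ) < li x := by
  have e1 := Chebyshev.primeCounting_eq_theta_div_log_add_integral hN
  have e2 := Chebyshev.primeCounting_eq_theta_div_log_add_integral (hN.trans hNx)
  have ii : ∀ a b : ℝ, 2 ≤ a → a ≤ b → IntervalIntegrable
      (fun t => Chebyshev.theta t / (t * Real.log t ^ 2)) MeasureTheory.volume a b := by
    intro a b ha hab
    rw [intervalIntegrable_iff_integrableOn_Icc_of_le hab]
    exact (Chebyshev.integrableOn_theta_div_id_mul_log_sq b).mono_set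
      (Set.Icc_subset_Icc_left ha)
  rw [← intervalIntegral.integral_add_adjacent_intervals (ii 2 N le_rfl hN) (ii N x hN hNx)] at e2
  have e3 := aux_add N x (by linarith) (by linarith)
  rw [aux_ftc N x (by linarith) hNx] at e3
  have e4 : ∫ t in N..x, Chebyshev.theta t / (t * Real.log t ^ 2)
      ≤ ∫ t in N..x, 1 / Real.log t ^ 2 := by
    apply intervalIntegral.integral_mono_on hNx (ii N x hN hNx)
      (Chebyshev.intervalIntegrable_one_div_log_sq (by linarith) (by linarith))
    intro t ht
    have h0 : 0 < t := by linarith [ht.1]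
    have hl := Real.log_pos (show 1 < t by linarith [ht.1])
    rw [div_le_div_iff₀ (by positivity) (by positivity)]
    have := h t ht.1 ht.2
    have : 0 < Real.log t ^ 2 := by positivity
    nlinarith
  have hlx := Real.log_pos (show 1 < x by linarith)
  have e5 : Chebyshev.theta x / Real.log x < x / Real.log x := by
    have := h x hNx le_rfl
    gcongr
  rw [sub_div] at hE
  linarith

theorem aux_theta64 : 76 * Real.log 2 ≤ Chebyshev.theta 64 := by
  rw [Chebyshev.theta_eq_log_primorial]
  have : (⌊(64 : ℝ)⌋₊) = 64 := by norm_num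
  rw [this]
  have h : (2 : ℝ) ^ 76 ≤ (primorial 64 : ℕ) := by
    have : 2 ^ 76 ≤ primorial 64 := by decide +kernel
    exact_mod_cast this
  have h2 := Real.log_le_log (by positivity) h
  rw [Real.log_pow] at h2
  exact_mod_cast h2

theorem aux_small (x : ℝ) (n k : ℕ) (s : ℝ) (a : ℝ) (hx : x < n + 1) (hs : s ≤ li a) (ha : 1 < a)
    (hax : a ≤ x) (hk : Nat.primeCounting n ≤ k) (hks : (k : ℝ) < s) :
    (Nat.primeCounting ⌊x⌋₊ : ℝ) < li x := by
  have h1 : ⌊x⌋₊ ≤ n := by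
    have : ⌊x⌋₊ < n + 1 := by
      rw [Nat.floor_lt (by linarith)]
      exact_mod_cast hx
    omega
  have h2 : (Nat.primeCounting ⌊x⌋₊ : ℝ) ≤ k := by
    exact_mod_cast (Nat.monotone_primeCounting h1).trans hk
  have := aux_mono a x ha hax
  linarith

theorem pi_lt_li_of_theta_lt (K : ℝ)
    (hθ : ∀ x : ℝ, Real.exp 2.4 ≤ x → x ≤ K → chebyshevTheta x < x) :
    ∀ x : ℝ, Real.exp 2.4 ≤ x → x ≤ K → (Nat.primeCounting ⌊x⌋₊ : ℝ) < li x := by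
  intro x hx hxK
  have hx11 : (11 : ℝ) ≤ x := by
    have h := aux_log 11 12 5 (by norm_num) (by norm_num) (by norm_num)
    rw [Real.log_le_iff_le_exp (by norm_num)] at h
    refine h.trans (le_trans (le_of_eq ?_) hx)
    norm_num
  have l2 : (0 : ℝ) ≤ li 2 := by simp [li]
  have l3 : (109/100 : ℝ) ≤ li 3 := by
    refine le_trans ?_ (aux_step 2 3 _ 11 12 (by norm_num) (by norm_num) l2
      (by norm_num) (by norm_num) (by norm_num))
    norm_num
  have l4 : (377/200 : ℝ) ≤ li 4 := by
    refine le_trans ?_ (aux_step 3 4 _ 49 39 (by norm_num) (by norm_num) l3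
      (by norm_num) (by norm_num) (by norm_num))
    norm_num
  have l5 : (637/250 : ℝ) ≤ li 5 := by
    refine le_trans ?_ (aux_step 4 5 _ 95 63 (by norm_num) (by norm_num) l4
      (by norm_num) (by norm_num) (by norm_num))
    norm_num
  have l7 : (3663/1000 : ℝ) ≤ li 7 := by
    refine le_trans ?_ (aux_step 5 7 _ 52 29 (by norm_num) (by norm_num) l5
      (by norm_num) (by norm_num) (by norm_num))
    norm_num
  have l9 : (4623/1000 : ℝ) ≤ li 9 := by
    refine le_trans ?_ (aux_step 7 9 _ 25 12 (by norm_num) (by norm_num) l7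
      (by norm_num) (by norm_num) (by norm_num))
    norm_num
  have l11 : (549/100 : ℝ) ≤ li 11 := by
    refine le_trans ?_ (aux_step 9 11 _ 53 23 (by norm_num) (by norm_num) l9
      (by norm_num) (by norm_num) (by norm_num))
    norm_num
  have l13 : (3147/500 : ℝ) ≤ li 13 := by
    refine le_trans ?_ (aux_step 11 13 _ 87 35 (by norm_num) (by norm_num) l11
      (by norm_num) (by norm_num) (by norm_num))
    norm_num
  have l15 : (141/20 : ℝ) ≤ li 15 := by
    refine le_trans ?_ (aux_step 13 15 _ 37 14 (by norm_num) (by norm_num) l13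
      (by norm_num) (by norm_num) (by norm_num))
    norm_num
  have l17 : (7771/1000 : ℝ) ≤ li 17 := by
    refine le_trans ?_ (aux_step 15 17 _ 61 22 (by norm_num) (by norm_num) l15
      (by norm_num) (by norm_num) (by norm_num))
    norm_num
  have l19 : (4231/500 : ℝ) ≤ li 19 := by
    refine le_trans ?_ (aux_step 17 19 _ 81 28 (by norm_num) (by norm_num) l17
      (by norm_num) (by norm_num) (by norm_num))
    norm_num
  have l21 : (1141/125 : ℝ) ≤ li 21 := by
    refine le_trans ?_ (aux_step 19 21 _ 3 1 (by norm_num) (by norm_num) l19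
      (by norm_num) (by norm_num) (by norm_num))
    norm_num
  have l23 : (4887/500 : ℝ) ≤ li 23 := by
    refine le_trans ?_ (aux_step 21 23 _ 99 32 (by norm_num) (by norm_num) l21
      (by norm_num) (by norm_num) (by norm_num))
    norm_num
  have l26 : (10711/1000 : ℝ) ≤ li 26 := by
    refine le_trans ?_ (aux_step 23 26 _ 16 5 (by norm_num) (by norm_num) l23
      (by norm_num) (by norm_num) (by norm_num))
    norm_num
  have l29 : (2323/200 : ℝ) ≤ li 29 := by
    refine le_trans ?_ (aux_step 26 29 _ 63 19 (by norm_num) (by norm_num) l26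
      (by norm_num) (by norm_num) (by norm_num))
    norm_num
  have l33 : (6389/500 : ℝ) ≤ li 33 := by
    refine le_trans ?_ (aux_step 29 33 _ 55 16 (by norm_num) (by norm_num) l29
      (by norm_num) (by norm_num) (by norm_num))
    norm_num
  have l37 : (13903/1000 : ℝ) ≤ li 37 := by
    refine le_trans ?_ (aux_step 33 37 _ 32 9 (by norm_num) (by norm_num) l33
      (by norm_num) (by norm_num) (by norm_num))
    norm_num
  have l43 : (1941/125 : ℝ) ≤ li 43 := by
    refine le_trans ?_ (aux_step 37 43 _ 48 13 (by norm_num) (by norm_num) l37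
      (by norm_num) (by norm_num) (by norm_num))
    norm_num
  have l48 : (16837/1000 : ℝ) ≤ li 48 := by
    refine le_trans ?_ (aux_step 43 48 _ 42 11 (by norm_num) (by norm_num) l43
      (by norm_num) (by norm_num) (by norm_num))
    norm_num
  have l53 : (18111/1000 : ℝ) ≤ li 53 := by
    refine le_trans ?_ (aux_step 48 53 _ 51 13 (by norm_num) (by norm_num) l48
      (by norm_num) (by norm_num) (by norm_num))
    norm_num
  have l61 : (2511/125 : ℝ) ≤ li 61 := by
    refine le_trans ?_ (aux_step 53 61 _ 89 22 (by norm_num) (by norm_num) l53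
      (by norm_num) (by norm_num) (by norm_num))
    norm_num
  have l64 : (20813/1000 : ℝ) ≤ li 64 := by
    refine le_trans ?_ (aux_step 61 64 _ 91 22 (by norm_num) (by norm_num) l61
      (by norm_num) (by norm_num) (by norm_num))
    norm_num
  rcases lt_or_ge x 13 with h13 | h13
  · exact aux_small x 12 5 _ 11 (by norm_num; exact h13) l11 (by norm_num)
      hx11 (by decide +kernel) (by norm_num)
  rcases lt_or_ge x 17 with h17 | h17
  · exact aux_small x 16 6 _ 13 (by norm_num; exact h17) l13 (by norm_num)
      h13 (by decide +kernel) (by norm_num)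
  rcases lt_or_ge x 19 with h19 | h19
  · exact aux_small x 18 7 _ 17 (by norm_num; exact h19) l17 (by norm_num)
      h17 (by decide +kernel) (by norm_num)
  rcases lt_or_ge x 23 with h23 | h23
  · exact aux_small x 22 8 _ 19 (by norm_num; exact h23) l19 (by norm_num)
      h19 (by decide +kernel) (by norm_num)
  rcases lt_or_ge x 29 with h29 | h29
  · exact aux_small x 28 9 _ 23 (by norm_num; exact h29) l23 (by norm_num)
      h23 (by decide +kernel) (by norm_num)
  rcases lt_or_ge x 37 with h37 | h37
  · exact aux_small x 36 11 _ 29 (by norm_num; exact h37) l29 (by norm_num)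
      h29 (by decide +kernel) (by norm_num)
  rcases lt_or_ge x 43 with h43 | h43
  · exact aux_small x 42 13 _ 37 (by norm_num; exact h43) l37 (by norm_num)
      h37 (by decide +kernel) (by norm_num)
  rcases lt_or_ge x 53 with h53 | h53
  · exact aux_small x 52 15 _ 43 (by norm_num; exact h53) l43 (by norm_num)
      h43 (by decide +kernel) (by norm_num)
  rcases lt_or_ge x 61 with h61 | h61
  · exact aux_small x 60 17 _ 53 (by norm_num; exact h61) l53 (by norm_num)
      h53 (by decide +kernel) (by norm_num)
  rcases lt_or_ge x 64 with h64 | h64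
  · exact aux_small x 63 18 _ 61 (by norm_num; exact h64) l61 (by norm_num)
      h61 (by decide +kernel) (by norm_num)
  have hexp : Real.exp 2.4 ≤ 64 := by
    rw [← Real.le_log_iff_exp_le (by norm_num), show (64 : ℝ) = 2 ^ 6 by norm_num, Real.log_pow]
    have := Real.log_two_gt_d9
    norm_num at this ⊢
    linarith
  apply aux_tail 64 x (by norm_num) h64
  · intro t h1 h2
    rw [← aux_theta]
    exact hθ t (hexp.trans h1) (h2.trans hxK)
  · have hf : (⌊(64 : ℝ)⌋₊) = 64 := by norm_num
    have hp : Nat.primeCounting 64 = 18 := by decide +kernel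
    rw [hf, hp]
    have ht := aux_theta64
    have h2 := Real.log_two_gt_d9
    have hl : Real.log 64 = 6 * Real.log 2 := by
      rw [show (64 : ℝ) = 2 ^ 6 by norm_num, Real.log_pow]
      norm_num
    have : (64 - Chebyshev.theta 64) / Real.log 64 ≤ 2.73 := by
      rw [div_le_iff₀ (by rw [hl]; linarith), hl]
      norm_num at h2 ⊢
      linarith
    norm_num at this l64 ⊢
    linarith
end

section
/- For every real number x > 1, θ(x) − x > −θ(x^{1/2}) − lim_{T→∞} ∑_{ρ : |Im ρ| ≤ T} x^ρ/ρ − log(2π) − 3·x^{1/3}, where the limit is over the partial sums taken over the nontrivial zeros ρ of the Riemann zeta function with |Im ρ| ≤ T, counted with multiplicity (this limit exists and is real). -/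
open Real Finset Filter

/-- `ρ` is a nontrivial zero of the Riemann zeta function. -/
def IsNontrivialZetaZero (ρ : ℂ) : Prop :=
  riemannZeta ρ = 0 ∧ 0 < ρ.re ∧ ρ.re < 1

open Classical in
/-- The multiplicity of `ρ` as a zero of the Riemann zeta function. -/
noncomputable def zetaZeroMultiplicity (ρ : ℂ) : ℕ :=
  if h : AnalyticAt ℂ riemannZeta ρ then (analyticOrderAt riemannZeta ρ).toNat else 0

namespace TEL

/-- Divide out the full order at a point. -/
lemma factor_one (F : ℂ → ℂ) (hF : Differentiable ℂ F) (a : ℂ) (ha : analyticOrderAt F a ≠ ⊤) :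
    ∃ g : ℂ → ℂ, Differentiable ℂ g ∧ (∀ z, F z = (z - a) ^ (analyticOrderNatAt F a) * g z) ∧
      g a ≠ 0 := by
  classical
  obtain ⟨g0, hg0, hga, hev⟩ := ((hF.analyticAt a).analyticOrderNatAt_eq_iff ha).1 rfl
  set n := analyticOrderNatAt F a
  set g : ℂ → ℂ := fun z => if z = a then g0 a else F z / (z - a) ^ n with hg
  have hgev : g =ᶠ[nhds a] g0 := by
    filter_upwards [hev] with z hz
    by_cases h : z = a
    · simp [hg, h]
    · have : (z - a) ^ n ≠ 0 := pow_ne_zero _ (sub_ne_zero.2 h)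
      simp only [hg, h, if_false, hz, smul_eq_mul]
      field_simp
  refine ⟨g, ?_, ?_, ?_⟩
  · intro z
    by_cases h : z = a
    · subst h
      exact (hg0.differentiableAt).congr_of_eventuallyEq hgev
    · have h1 : g =ᶠ[nhds z] fun w => F w / (w - a) ^ n := by
        filter_upwards [isOpen_ne.mem_nhds h] with w hw
        simp only [hg]
        rw [if_neg hw]
      refine DifferentiableAt.congr_of_eventuallyEq ?_ h1
      refine (hF z).div (by fun_prop) (pow_ne_zero _ (sub_ne_zero.2 h))
  · intro z
    by_cases h : z = a
    · subst h
      have := hev.self_of_nhds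
      simpa [hg] using this
    · have : (z - a) ^ n ≠ 0 := pow_ne_zero _ (sub_ne_zero.2 h)
      simp only [hg, h, if_false]
      field_simp
  · simpa [hg] using hga

lemma factor_fin (F : ℂ → ℂ) (hF : Differentiable ℂ F) (ha : ∀ a, analyticOrderAt F a ≠ ⊤)
    (S : Finset ℂ) :
    ∃ g : ℂ → ℂ, Differentiable ℂ g ∧
      (∀ z, F z = (∏ ρ ∈ S, (z - ρ) ^ (analyticOrderNatAt F ρ)) * g z) ∧
      ∀ ρ ∈ S, g ρ ≠ 0 := by
  classical
  induction S using Finset.induction_on with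
  | empty => exact ⟨F, hF, by simp, by simp⟩
  | insert a S haS ih =>
    obtain ⟨g, hg, hFg, hne⟩ := ih
    set P : ℂ → ℂ := fun z => ∏ ρ ∈ S, (z - ρ) ^ (analyticOrderNatAt F ρ) with hP
    have hPd : Differentiable ℂ P := by
      simp only [hP]
      fun_prop
    have hPa : P a ≠ 0 := by
      simp only [hP]
      refine Finset.prod_ne_zero_iff.2 fun ρ hρ => pow_ne_zero _ (sub_ne_zero.2 ?_)
      rintro rfl
      exact haS hρ
    have hord : analyticOrderAt F a = analyticOrderAt g a := by
      have : F = P * g := funext hFg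
      rw [this, analyticOrderAt_mul (hPd.analyticAt a) (hg.analyticAt a),
        ((hPd.analyticAt a).analyticOrderAt_eq_zero).2 hPa, zero_add]
    have hord' : analyticOrderNatAt F a = analyticOrderNatAt g a := by
      simp [analyticOrderNatAt, hord]
    obtain ⟨h, hh, hgh, hha⟩ := factor_one g hg a (hord ▸ ha a)
    refine ⟨h, hh, ?_, ?_⟩
    · intro z
      rw [Finset.prod_insert haS, hFg z, hgh z, hord']
      ring
    · intro ρ hρ
      rcases Finset.mem_insert.1 hρ with rfl | hρ
      · exact hha
      · intro h0
        apply hne ρ hρ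
        rw [hgh, h0, mul_zero]

lemma order_ne_top (F : ℂ → ℂ) (hF : Differentiable ℂ F) {c : ℂ} (hc : F c ≠ 0) (a : ℂ) :
    analyticOrderAt F a ≠ ⊤ := by
  intro h
  rw [analyticOrderAt_eq_top] at h
  have hA : AnalyticOnNhd ℂ F Set.univ := fun z _ => hF.analyticAt z
  have := hA.eqOn_zero_of_preconnected_of_eventuallyEq_zero isPreconnected_univ (Set.mem_univ a) h
  exact hc (this (Set.mem_univ c))

/-- Jensen-type bound for the number of zeros. -/
lemma count_bound (F : ℂ → ℂ) (hF : Differentiable ℂ F) {c : ℂ} (hc : F c ≠ 0) {r R M : ℝ}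
    (hr : 0 < r) (hrR : r < R) (hM : ∀ z, ‖z - c‖ = R → ‖F z‖ ≤ M) (S : Finset ℂ)
    (hS : ∀ ρ ∈ S, ‖ρ - c‖ ≤ r) :
    ‖F c‖ * (R / r) ^ (∑ ρ ∈ S, analyticOrderNatAt F ρ) ≤ M := by
  obtain ⟨g, hg, hFg, -⟩ := factor_fin F hF (order_ne_top F hF hc) S
  have hR : 0 < R := hr.trans hrR
  set B : ℂ → ℂ := fun z =>
    (∏ ρ ∈ S, (((R : ℂ) ^ 2 - (starRingEnd ℂ) (ρ - c) * (z - c)) / R) ^ (analyticOrderNatAt F ρ))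
      * g z with hB
  have hBd : Differentiable ℂ B := by
    simp only [hB]
    fun_prop
  have hBs : ∀ z ∈ Metric.sphere c R, ‖B z‖ ≤ M := by
    intro z hz
    have hz' : ‖z - c‖ = R := by simpa [dist_eq_norm] using hz
    refine le_trans (le_of_eq ?_) (hM z hz')
    rw [hFg z]
    simp only [hB, norm_mul, norm_prod, norm_pow]
    congr 1
    refine Finset.prod_congr rfl fun ρ hρ => ?_
    congr 1
    have h1 : (R : ℂ) ^ 2 - (starRingEnd ℂ) (ρ - c) * (z - c) =
        (starRingEnd ℂ) (z - ρ) * (z - c) := by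
      have : (R : ℂ) ^ 2 = (starRingEnd ℂ) (z - c) * (z - c) := by
        rw [← Complex.normSq_eq_conj_mul_self, Complex.normSq_eq_norm_sq, hz']
        push_cast; rfl
      rw [this, ← sub_mul]
      congr 1
      simp
    rw [h1, norm_div, norm_mul, hz', RCLike.norm_conj, Complex.norm_real, Real.norm_eq_abs,
      abs_of_pos hR]
    field_simp
  have hBc : ‖B c‖ ≤ M := by
    refine Complex.norm_le_of_forall_mem_frontier_norm_le (U := Metric.ball c R)
      Metric.isBounded_ball hBd.diffContOnCl ?_ ?_
    · rw [frontier_ball _ hR.ne']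
      exact hBs
    · exact subset_closure (Metric.mem_ball_self hR)
  refine le_trans ?_ hBc
  rw [hFg c]
  simp only [hB, norm_mul, norm_prod, norm_pow, sub_self, mul_zero, sub_zero]
  rw [← Finset.prod_pow_eq_pow_sum, mul_right_comm, ← Finset.prod_mul_distrib]
  refine mul_le_mul_of_nonneg_right ?_ (norm_nonneg _)
  refine Finset.prod_le_prod (fun ρ _ => by positivity) fun ρ hρ => ?_
  rw [← mul_pow]
  refine pow_le_pow_left₀ (by positivity) ?_ _
  rw [norm_div, norm_pow, Complex.norm_real, Real.norm_eq_abs, abs_of_pos hR, norm_sub_rev]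
  have := hS ρ hρ
  rw [mul_div_assoc', div_le_div_iff₀ hr hR]
  nlinarith [mul_le_mul_of_nonneg_right this (sq_nonneg R)]

/-- existence of a logarithm on a ball -/
lemma exists_log (G : ℂ → ℂ) (hG : Differentiable ℂ G) {R : ℝ} (hR : 0 < R)
    (hne : ∀ z ∈ Metric.ball (0 : ℂ) R, G z ≠ 0) :
    ∃ h : ℂ → ℂ, h 0 = 0 ∧ (∀ z ∈ Metric.ball (0 : ℂ) R, HasDerivAt h (logDeriv G z) z) ∧
      ∀ z ∈ Metric.ball (0 : ℂ) R, G z = G 0 * Complex.exp (h z) := by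
  have hd : DifferentiableOn ℂ (logDeriv G) (Metric.ball 0 R) := by
    intro z hz
    have : DifferentiableAt ℂ (deriv G) z := (hG.analyticAt z).deriv.differentiableAt
    exact (this.div (hG z) (hne z hz)).differentiableWithinAt
  obtain ⟨h0, hh0⟩ := hd.isExactOn_ball
  have h00 : (0 : ℂ) ∈ Metric.ball (0 : ℂ) R := Metric.mem_ball_self hR
  refine ⟨fun z => h0 z - h0 0, by simp, fun z hz => (hh0 z hz).sub_const _, ?_⟩
  set k : ℂ → ℂ := fun z => G z * Complex.exp (-(h0 z - h0 0)) with hk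
  have hkd : ∀ z ∈ Metric.ball (0 : ℂ) R, HasDerivAt k 0 z := by
    intro z hz
    have h1 := (hG z).hasDerivAt.mul ((((hh0 z hz).sub_const (h0 0)).neg).cexp)
    convert! h1 using 1
    have := hne z hz
    simp only [logDeriv_apply]
    field_simp
    ring
  intro z hz
  have hconst : k z = k 0 := by
    refine (convex_ball (0 : ℂ) R).is_const_of_fderivWithin_eq_zero (𝕜 := ℂ)
      (fun w hw => (hkd w hw).differentiableAt.differentiableWithinAt) ?_ hz h00
    intro w hw
    rw [fderivWithin_of_isOpen Metric.isOpen_ball hw]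
    ext
    simp [(hkd w hw).deriv]
  have h2 : k 0 = G 0 := by simp [hk]
  rw [← h2, ← hconst, hk]
  simp only
  rw [mul_assoc, ← Complex.exp_add]
  simp

end TEL

namespace TEL

lemma log_variation (G : ℂ → ℂ) (hG : Differentiable ℂ G) {R A : ℝ} (hR : 0 < R) (hA : 0 < A)
    (hne : ∀ z ∈ Metric.ball (0 : ℂ) R, G z ≠ 0)
    (hb : ∀ z ∈ Metric.ball (0 : ℂ) R, ‖G z‖ ≤ ‖G 0‖ * Real.exp A)
    {s : ℂ} (hs : ‖s‖ < R / 4) :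
    ‖logDeriv G s - logDeriv G 0‖ ≤ 68 * A / R ^ 2 * ‖s‖ := by
  obtain ⟨h, h0, hd, hexp⟩ := exists_log G hG hR hne
  have h00 : (0 : ℂ) ∈ Metric.ball (0 : ℂ) R := Metric.mem_ball_self hR
  have hG0 : 0 < ‖G 0‖ := norm_pos_iff.2 (hne 0 h00)
  have hre : Set.MapsTo h (Metric.ball 0 R) {z | z.re ≤ A} := by
    intro z hz
    have h1 := hb z hz
    rw [hexp z hz, norm_mul, Complex.norm_exp] at h1
    have h2 := le_of_mul_le_mul_left h1 hG0
    exact Real.exp_le_exp.1 h2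
  have hdo : DifferentiableOn ℂ h (Metric.ball 0 R) := fun z hz =>
    (hd z hz).differentiableAt.differentiableWithinAt
  have hbound : ∀ z : ℂ, ‖z‖ ≤ R / 2 → ‖h z‖ ≤ 2 * A := by
    intro z hz
    have hz' : z ∈ Metric.ball (0 : ℂ) R := by
      rw [mem_ball_zero_iff]; linarith
    refine (Complex.borelCaratheodory_zero hA hdo hre hR hz' h0).trans ?_
    rw [div_le_iff₀ (by linarith)]
    nlinarith
  have hd1 : ∀ z : ℂ, ‖z‖ ≤ R / 4 → ‖logDeriv G z‖ ≤ 8 * A / R := by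
    intro z hz
    have hzb : z ∈ Metric.ball (0 : ℂ) R := by
      rw [mem_ball_zero_iff]; linarith
    have hsub : Metric.closedBall z (R / 4) ⊆ Metric.ball (0 : ℂ) R := by
      intro w hw
      rw [mem_closedBall_iff_norm] at hw
      rw [mem_ball_zero_iff]
      have := norm_add_le (w - z) z
      rw [sub_add_cancel] at this
      linarith
    have := Complex.norm_deriv_le_of_forall_mem_sphere_norm_le (f := h) (c := z) (R := R / 4)
      (C := 2 * A) (by positivity)
      (DifferentiableOn.diffContOnCl_ball hdo hsub) (by
        intro w hw
        rw [mem_sphere_iff_norm] at hw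
        have := norm_add_le (w - z) z
        rw [sub_add_cancel] at this
        exact hbound w (by linarith))
    rw [(hd z hzb).deriv] at this
    refine this.trans (le_of_eq ?_)
    field_simp
    ring
  have hdiff : DifferentiableOn ℂ (logDeriv G) (Metric.ball 0 (R / 4)) := by
    intro z hz
    have hzb : z ∈ Metric.ball (0 : ℂ) R := by
      rw [mem_ball_zero_iff] at hz ⊢; linarith
    have : DifferentiableAt ℂ (deriv G) z := (hG.analyticAt z).deriv.differentiableAt
    exact (this.div (hG z) (hne z hzb)).differentiableWithinAt
  have hmaps : Set.MapsTo (logDeriv G) (Metric.ball 0 (R / 4))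
      (Metric.ball (logDeriv G 0) (17 * A / R)) := by
    intro z hz
    rw [mem_ball_zero_iff] at hz
    rw [mem_ball_iff_norm]
    have h1 := hd1 z hz.le
    have h2 := hd1 0 (by simp; positivity)
    have h3 := norm_sub_le (logDeriv G z) (logDeriv G 0)
    have h4 : 0 < A / R := by positivity
    have e1 : 8 * A / R = 8 * (A / R) := by ring
    have e2 : 17 * A / R = 17 * (A / R) := by ring
    linarith
  have hfin := Complex.dist_le_div_mul_dist_of_mapsTo_ball hdiff (hmaps.mono_right Metric.ball_subset_closedBall)
    (z := s) (by rw [mem_ball_zero_iff]; exact hs)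
  rw [dist_eq_norm, dist_eq_norm, sub_zero] at hfin
  refine hfin.trans (le_of_eq ?_)
  field_simp
  ring

lemma hadamard_step (F : ℂ → ℂ) (hF : Differentiable ℂ F) (h0 : F 0 ≠ 0) {R A : ℝ} (hR : 0 < R)
    (hA : 0 < A) (hb : ∀ z : ℂ, ‖z‖ = 2 * R → ‖F z‖ ≤ ‖F 0‖ * Real.exp A) (S : Finset ℂ)
    (hS : ∀ ρ, ρ ∈ S ↔ F ρ = 0 ∧ ‖ρ‖ ≤ R) {s : ℂ} (hs : F s ≠ 0) (hsR : ‖s‖ < R / 4) :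
    ‖logDeriv F s - logDeriv F 0 -
      ∑ ρ ∈ S, (analyticOrderNatAt F ρ : ℂ) * (1 / (s - ρ) + 1 / ρ)‖ ≤ 68 * A / R ^ 2 * ‖s‖ := by
  obtain ⟨g, hg, hFg, hgne⟩ := factor_fin F hF (order_ne_top F hF h0) S
  have hρ0 : ∀ ρ ∈ S, ρ ≠ 0 := by
    rintro ρ hρ rfl
    exact h0 ((hS 0).1 hρ).1
  set m := analyticOrderNatAt F
  -- log derivative
  have hld : ∀ z, F z ≠ 0 → logDeriv F z = ∑ ρ ∈ S, (m ρ : ℂ) * (1 / (z - ρ)) + logDeriv g z := by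
    intro z hz
    have hP : (∏ ρ ∈ S, (z - ρ) ^ (m ρ)) ≠ 0 := fun h => hz (by rw [hFg z, h, zero_mul])
    have hgz : g z ≠ 0 := fun h => hz (by rw [hFg z, h, mul_zero])
    have hPi : ∀ ρ ∈ S, (z - ρ) ^ (m ρ) ≠ 0 := Finset.prod_ne_zero_iff.1 hP
    have hF' : F = fun z => (∏ ρ ∈ S, (z - ρ) ^ (m ρ)) * g z := funext hFg
    conv_lhs => rw [hF']
    rw [logDeriv_mul z hP hgz (by fun_prop) (hg z)]
    congr 1
    have := logDeriv_prod (s := S) (f := fun ρ z => (z - ρ) ^ (m ρ)) (x := z) hPi (by intros; fun_prop)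
    simp only [logDeriv_apply] at this ⊢
    rw [show (fun z => ∏ ρ ∈ S, (z - ρ) ^ m ρ) = fun z => ∏ ρ ∈ S, (z - ρ) ^ m ρ from rfl, this]
    refine Finset.sum_congr rfl fun ρ hρ => ?_
    have hd : HasDerivAt (fun z : ℂ => (z - ρ) ^ (m ρ)) ((m ρ : ℂ) * (z - ρ) ^ (m ρ - 1) * 1) z :=
      ((hasDerivAt_id z).sub_const ρ).pow (m ρ)
    rw [hd.deriv]
    rcases Nat.eq_zero_or_pos (m ρ) with h | h
    · simp [h]
    · have hzρ : z - ρ ≠ 0 := by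
        intro h2
        have := hPi ρ hρ
        rw [h2, zero_pow h.ne'] at this
        exact this rfl
      obtain ⟨k, hk⟩ : ∃ k, m ρ = k + 1 := ⟨m ρ - 1, by omega⟩
      rw [hk]
      simp only [Nat.add_sub_cancel, pow_succ]
      field_simp
  set K : ℂ := ∏ ρ ∈ S, (-ρ) ^ (m ρ) with hK
  have hK0 : K ≠ 0 := Finset.prod_ne_zero_iff.2 fun ρ hρ => pow_ne_zero _ (neg_ne_zero.2 (hρ0 ρ hρ))
  have hF0 : F 0 = K * g 0 := by rw [hFg 0]; simp [hK]
  have hg0 : g 0 ≠ 0 := fun h => h0 (by rw [hF0, h, mul_zero])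
  -- bound for g on the big sphere
  have hgS : ∀ z ∈ Metric.sphere (0 : ℂ) (2 * R), ‖g z‖ ≤ ‖g 0‖ * Real.exp A := by
    intro z hz
    have hz' : ‖z‖ = 2 * R := by simpa using hz
    have h1 := hb z hz'
    rw [hF0, hFg z, norm_mul, norm_mul] at h1
    have h2 : ‖K‖ ≤ ‖∏ ρ ∈ S, (z - ρ) ^ (m ρ)‖ := by
      simp only [hK, norm_prod, norm_pow]
      refine Finset.prod_le_prod (fun _ _ => by positivity) fun ρ hρ => ?_
      refine pow_le_pow_left₀ (norm_nonneg _) ?_ _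
      have h3 := ((hS ρ).1 hρ).2
      have h4 := norm_sub_norm_le z ρ
      rw [norm_neg]
      linarith
    have hKp : 0 < ‖K‖ := norm_pos_iff.2 hK0
    have h5 : ‖K‖ * ‖g z‖ ≤ ‖K‖ * (‖g 0‖ * Real.exp A) := by
      refine (mul_le_mul_of_nonneg_right h2 (norm_nonneg _)).trans (h1.trans (le_of_eq ?_))
      ring
    exact le_of_mul_le_mul_left h5 hKp
  have hgb : ∀ z ∈ Metric.ball (0 : ℂ) R, ‖g z‖ ≤ ‖g 0‖ * Real.exp A := by
    intro z hz
    refine Complex.norm_le_of_forall_mem_frontier_norm_le (U := Metric.ball 0 (2 * R))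
      Metric.isBounded_ball hg.diffContOnCl ?_ ?_
    · rw [frontier_ball _ (by positivity)]
      exact hgS
    · refine subset_closure (Metric.ball_subset_ball (by linarith) hz)
  have hgn : ∀ z ∈ Metric.ball (0 : ℂ) R, g z ≠ 0 := by
    intro z hz hgz
    have hFz : F z = 0 := by rw [hFg z, hgz, mul_zero]
    have : z ∈ S := (hS z).2 ⟨hFz, by rw [mem_ball_zero_iff] at hz; exact hz.le⟩
    exact hgne z this hgz
  have := log_variation g hg hR hA hgn hgb hsR
  refine le_trans (le_of_eq ?_) this
  congr 1
  rw [hld s hs, hld 0 h0]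
  simp only [mul_add, Finset.sum_add_distrib, zero_sub, one_div, inv_neg, mul_neg, Finset.sum_neg_distrib]
  ring

theorem hadamard (F : ℂ → ℂ) (hF : Differentiable ℂ F) (h0 : F 0 ≠ 0) {C p : ℝ} (hC : 0 < C)
    (hp : p < 2)
    (hb : ∀ z : ℂ, 1 ≤ ‖z‖ → ‖F z‖ ≤ Real.exp (C * ‖z‖ ^ p)) (S : ℕ → Finset ℂ)
    (hS : ∀ n ρ, ρ ∈ S n ↔ F ρ = 0 ∧ ‖ρ‖ ≤ n) {s : ℂ} (hs : F s ≠ 0) :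
    Tendsto (fun n => ∑ ρ ∈ S n, (analyticOrderNatAt F ρ : ℂ) * (1 / (s - ρ) + 1 / ρ)) atTop
      (nhds (logDeriv F s - logDeriv F 0)) := by
  have hF0 : 0 < ‖F 0‖ := norm_pos_iff.2 h0
  set D : ℝ := |Real.log ‖F 0‖| + 1 with hD
  have hDpos : 0 < D := by positivity
  have key : ∀ᶠ n : ℕ in atTop, ‖logDeriv F s - logDeriv F 0 -
      ∑ ρ ∈ S n, (analyticOrderNatAt F ρ : ℂ) * (1 / (s - ρ) + 1 / ρ)‖ ≤
      68 * (C * (2 : ℝ) ^ p * (n : ℝ) ^ p + D) / (n : ℝ) ^ 2 * ‖s‖ := by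
    obtain ⟨N, hN⟩ := exists_nat_gt (4 * ‖s‖)
    filter_upwards [eventually_ge_atTop (max N 1)] with n hn
    have hnN : (N : ℝ) ≤ n := by exact_mod_cast (le_max_left _ _).trans hn
    have hn1 : (1 : ℝ) ≤ n := by exact_mod_cast (le_max_right _ _).trans hn
    refine hadamard_step F hF h0 (by linarith) (by positivity) ?_ (S n) (hS n) hs (by linarith)
    intro z hz
    refine (hb z (by linarith)).trans ?_
    have h1 : ‖F 0‖ = Real.exp (Real.log ‖F 0‖) := (Real.exp_log hF0).symm
    rw [h1, ← Real.exp_add, Real.exp_le_exp, hz, Real.mul_rpow (by norm_num) (by linarith)]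
    have := neg_abs_le (Real.log ‖F 0‖)
    have h2 : C * (2 ^ p * (n : ℝ) ^ p) = C * 2 ^ p * (n : ℝ) ^ p := by ring
    rw [h2]
    linarith
  have hlim : Tendsto (fun n : ℕ => 68 * (C * (2 : ℝ) ^ p * (n : ℝ) ^ p + D) / (n : ℝ) ^ 2 * ‖s‖)
      atTop (nhds 0) := by
    have h1 : Tendsto (fun n : ℕ => (n : ℝ) ^ (-(2 - p))) atTop (nhds 0) :=
      (tendsto_rpow_neg_atTop (by linarith)).comp tendsto_natCast_atTop_atTop
    have h2 : Tendsto (fun n : ℕ => (n : ℝ) ^ (-(2 : ℝ))) atTop (nhds 0) :=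
      (tendsto_rpow_neg_atTop (by norm_num)).comp tendsto_natCast_atTop_atTop
    have h3 := ((h1.const_mul (68 * C * 2 ^ p * ‖s‖)).add (h2.const_mul (68 * D * ‖s‖)))
    simp only [mul_zero, add_zero] at h3
    refine h3.congr' ?_
    filter_upwards [eventually_ge_atTop 1] with n hn
    have hn0 : (0 : ℝ) < n := by exact_mod_cast hn
    rw [show -(2 - p) = p - 2 by ring, Real.rpow_sub hn0, Real.rpow_neg hn0.le, Real.rpow_two]
    field_simp
  rw [tendsto_iff_norm_sub_tendsto_zero]
  refine squeeze_zero' (Eventually.of_forall fun _ => norm_nonneg _) ?_ hlim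
  filter_upwards [key] with n hn
  rwa [norm_sub_rev]

end TEL

namespace TEL

/-- boundary integral over a rectangle -/
noncomputable def rect (f : ℂ → ℂ) (p q u v : ℝ) : ℂ :=
  (∫ x : ℝ in p..q, f (x + u * Complex.I)) - (∫ x : ℝ in p..q, f (x + v * Complex.I)) +
    Complex.I * (∫ y : ℝ in u..v, f (q + y * Complex.I)) -
    Complex.I * (∫ y : ℝ in u..v, f (p + y * Complex.I))

lemma rect_eq_zero (f : ℂ → ℂ) (p q u v : ℝ)
    (h : DifferentiableOn ℂ f (Set.uIcc p q ×ℂ Set.uIcc u v)) : rect f p q u v = 0 := by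
  have := Complex.integral_boundary_rect_eq_zero_of_differentiableOn f ⟨p, u⟩ ⟨q, v⟩ h
  simpa [rect] using this

lemma rect_inv (p q u v : ℝ) (hp : p < 0) (hq : 0 < q) (hu : u < 0) (hv : 0 < v) :
    rect (fun w => w⁻¹) p q u v = 2 * π * Complex.I := by
  have hor : ∀ c : ℝ, c ≠ 0 → (∫ x : ℝ in p..q, ((x : ℂ) + c * Complex.I)⁻¹) =
      Complex.log (q + c * Complex.I) - Complex.log (p + c * Complex.I) := by
    intro c hc
    have hsl : ∀ x : ℝ, ((x : ℂ) + c * Complex.I) ∈ Complex.slitPlane := by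
      intro x; right; simpa using hc
    have hne : ∀ x : ℝ, ((x : ℂ) + c * Complex.I) ≠ 0 := fun x =>
      Complex.slitPlane_ne_zero (hsl x)
    refine intervalIntegral.integral_eq_sub_of_hasDerivAt
      (f := fun x : ℝ => Complex.log (x + c * Complex.I)) ?_ ?_
    · intro x _
      have h1 : HasDerivAt (fun x : ℝ => (x : ℂ) + c * Complex.I) 1 x :=
        (Complex.ofRealCLM.hasDerivAt (x := x)).add_const _
      have := h1.clog_real (hsl x)
      simpa using this
    · refine Continuous.intervalIntegrable ?_ _ _
      exact Continuous.inv₀ (by fun_prop) hne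
  have hright : Complex.I * (∫ y : ℝ in u..v, ((q : ℂ) + y * Complex.I)⁻¹) =
      Complex.log (q + v * Complex.I) - Complex.log (q + u * Complex.I) := by
    have hsl : ∀ y : ℝ, ((q : ℂ) + y * Complex.I) ∈ Complex.slitPlane := by
      intro y; left; simpa using hq
    have hne : ∀ x : ℝ, ((q : ℂ) + x * Complex.I) ≠ 0 := fun x =>
      Complex.slitPlane_ne_zero (hsl x)
    rw [← intervalIntegral.integral_const_mul]
    refine intervalIntegral.integral_eq_sub_of_hasDerivAt
      (f := fun y : ℝ => Complex.log (q + y * Complex.I)) ?_ ?_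
    · intro y _
      have h1 : HasDerivAt (fun y : ℝ => (q : ℂ) + y * Complex.I) (1 * Complex.I) y :=
        ((Complex.ofRealCLM.hasDerivAt (x := y)).mul_const _).const_add _
      have := h1.clog_real (hsl y)
      simpa [div_eq_mul_inv] using this
    · refine Continuous.intervalIntegrable ?_ _ _
      exact continuous_const.mul (Continuous.inv₀ (by fun_prop) hne)
  have hleft : Complex.I * (∫ y : ℝ in u..v, ((p : ℂ) + y * Complex.I)⁻¹) =
      Complex.log (-(p + v * Complex.I)) - Complex.log (-(p + u * Complex.I)) := by
    have hsl : ∀ y : ℝ, (-((p : ℂ) + y * Complex.I)) ∈ Complex.slitPlane := by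
      intro y; left; simpa using hp
    have hne : ∀ x : ℝ, ((p : ℂ) + x * Complex.I) ≠ 0 := fun x h =>
      Complex.slitPlane_ne_zero (hsl x) (by rw [h, neg_zero])
    rw [← intervalIntegral.integral_const_mul]
    refine intervalIntegral.integral_eq_sub_of_hasDerivAt
      (f := fun y : ℝ => Complex.log (-(p + y * Complex.I))) ?_ ?_
    · intro y _
      have h1 : HasDerivAt (fun y : ℝ => -((p : ℂ) + y * Complex.I)) (-(1 * Complex.I)) y :=
        (((Complex.ofRealCLM.hasDerivAt (x := y)).mul_const _).const_add _).neg
      have := h1.clog_real (hsl y)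
      convert! this using 1
      rw [neg_div_neg_eq, one_mul, div_eq_mul_inv]
    · refine Continuous.intervalIntegrable ?_ _ _
      exact continuous_const.mul (Continuous.inv₀ (by fun_prop) hne)
  have e1 : Complex.log (-(p + u * Complex.I)) = Complex.log (p + u * Complex.I) + π * Complex.I := by
    have hne : ((p : ℂ) + u * Complex.I) ≠ 0 := by
      intro h
      have := congrArg Complex.im h
      simp at this; linarith
    rw [Complex.log, Complex.log, norm_neg,
      Complex.arg_neg_eq_arg_add_pi_of_im_neg (by simpa using hu)]
    push_cast; ring
  have e2 : Complex.log (-(p + v * Complex.I)) = Complex.log (p + v * Complex.I) - π * Complex.I := by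
    rw [Complex.log, Complex.log, norm_neg,
      Complex.arg_neg_eq_arg_sub_pi_of_im_pos (by simpa using hv)]
    push_cast; ring
  simp only [rect]
  rw [hor u hu.ne, hor v hv.ne', hright, hleft, e1, e2]
  ring

lemma rect_exp (l p q u v : ℝ) (hp : p < 0) (hq : 0 < q) (hu : u < 0) (hv : 0 < v) :
    rect (fun w => Complex.exp (l * w) / w) p q u v = 2 * π * Complex.I := by
  set E : ℂ → ℂ := fun w => Complex.exp (l * w) with hE
  have hEd : Differentiable ℂ E := by simp only [hE]; fun_prop
  have hD : Differentiable ℂ (dslope E 0) := by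
    intro z
    have : DifferentiableOn ℂ (dslope E 0) Set.univ :=
      (Complex.differentiableOn_dslope Filter.univ_mem).2 hEd.differentiableOn
    exact this.differentiableAt Filter.univ_mem
  have h0 := rect_eq_zero (dslope E 0) p q u v hD.differentiableOn
  have h1 := rect_inv p q u v hp hq hu hv
  have hpt : ∀ w : ℂ, w ≠ 0 → E w / w = dslope E 0 w + w⁻¹ := by
    intro w hw
    rw [dslope_of_ne _ hw, slope_def_field]
    simp only [hE, mul_zero, Complex.exp_zero, sub_zero]
    field_simp
    ring
  have hc : ∀ c : ℝ, c ≠ 0 → ∀ x : ℝ, ((x : ℂ) + c * Complex.I) ≠ 0 := by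
    intro c hc x h
    have := congrArg Complex.im h
    simp at this; exact hc this
  have hc' : ∀ c : ℝ, c ≠ 0 → ∀ x : ℝ, ((c : ℂ) + x * Complex.I) ≠ 0 := by
    intro c hc x h
    have := congrArg Complex.re h
    simp at this; exact hc this
  have hor : ∀ c : ℝ, c ≠ 0 → (∫ x : ℝ in p..q, E (x + c * Complex.I) / (x + c * Complex.I)) =
      (∫ x : ℝ in p..q, dslope E 0 (x + c * Complex.I)) +
        ∫ x : ℝ in p..q, ((x : ℂ) + c * Complex.I)⁻¹ := by
    intro c hc0
    rw [← intervalIntegral.integral_add]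
    · exact intervalIntegral.integral_congr fun x _ => hpt _ (hc c hc0 x)
    · exact (hD.continuous.comp (by fun_prop)).intervalIntegrable _ _
    · exact (Continuous.inv₀ (by fun_prop) (hc c hc0)).intervalIntegrable _ _
  have ver : ∀ c : ℝ, c ≠ 0 → (∫ x : ℝ in u..v, E (c + x * Complex.I) / (c + x * Complex.I)) =
      (∫ x : ℝ in u..v, dslope E 0 (c + x * Complex.I)) +
        ∫ x : ℝ in u..v, ((c : ℂ) + x * Complex.I)⁻¹ := by
    intro c hc0
    rw [← intervalIntegral.integral_add]
    · exact intervalIntegral.integral_congr fun x _ => hpt _ (hc' c hc0 x)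
    · exact (hD.continuous.comp (by fun_prop)).intervalIntegrable _ _
    · exact (Continuous.inv₀ (by fun_prop) (hc' c hc0)).intervalIntegrable _ _
  simp only [rect] at h0 h1 ⊢
  rw [hor u hu.ne, hor v hv.ne', ver p hp.ne, ver q hq.ne']
  linear_combination h0 + h1

lemma hor_bound (l : ℝ) (hl : l ≠ 0) (p q c : ℝ) (hpq : p ≤ q) (hc : c ≠ 0) :
    ‖∫ x : ℝ in p..q, Complex.exp (l * (x + c * Complex.I)) / (x + c * Complex.I)‖ ≤
      (Real.exp (l * q) - Real.exp (l * p)) / l * (1 / |c|) := by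
  have h1 : ∀ x : ℝ, ‖Complex.exp (l * (x + c * Complex.I)) / (x + c * Complex.I)‖ ≤
      Real.exp (l * x) * (1 / |c|) := by
    intro x
    rw [norm_div, Complex.norm_exp, div_eq_mul_one_div]
    have h2 : |c| ≤ ‖(x : ℂ) + c * Complex.I‖ := by
      have := Complex.abs_im_le_norm ((x : ℂ) + c * Complex.I)
      simpa using this
    have h3 : ((l : ℂ) * (x + c * Complex.I)).re = l * x := by simp
    rw [h3]
    have : 0 < |c| := abs_pos.2 hc
    gcongr
  refine (intervalIntegral.norm_integral_le_of_norm_le hpq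
    (Eventually.of_forall fun x _ => h1 x) ?_).trans (le_of_eq ?_)
  · exact Continuous.intervalIntegrable (by fun_prop) _ _
  · rw [intervalIntegral.integral_mul_const]
    congr 1
    have h3 : ∀ x ∈ Set.uIcc p q, HasDerivAt (fun x => Real.exp (l * x) / l) (Real.exp (l * x)) x := by
      intro x _
      have := (((hasDerivAt_id x).const_mul l).exp).div_const l
      convert! this using 1
      simp; field_simp
    rw [intervalIntegral.integral_eq_sub_of_hasDerivAt h3
      (Continuous.intervalIntegrable (by fun_prop) _ _)]
    ring

lemma ver_bound (l c u v : ℝ) (huv : u ≤ v) (hc : c ≠ 0) :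
    ‖∫ y : ℝ in u..v, Complex.exp (l * (c + y * Complex.I)) / (c + y * Complex.I)‖ ≤
      Real.exp (l * c) / |c| * (v - u) := by
  have := intervalIntegral.norm_integral_le_of_norm_le_const (a := u) (b := v)
    (C := Real.exp (l * c) / |c|)
    (f := fun y : ℝ => Complex.exp (l * (c + y * Complex.I)) / (c + y * Complex.I)) (by
      intro y _
      rw [norm_div, Complex.norm_exp]
      have h2 : |c| ≤ ‖(c : ℂ) + y * Complex.I‖ := by
        have := Complex.abs_re_le_norm ((c : ℂ) + y * Complex.I)
        simpa using this
      have h3 : ((l : ℂ) * (c + y * Complex.I)).re = l * c := by simp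
      rw [h3]
      have : 0 < |c| := abs_pos.2 hc
      gcongr)
  rwa [abs_of_nonneg (show 0 ≤ v - u by linarith)] at this

open Classical in
/-- Perron kernel, `l > 0`. -/
lemma kernel_pos (l b u v : ℝ) (hl : 0 < l) (hb : 0 < b) (hu : u ≠ 0) (hv : v ≠ 0) (huv : u < v) :
    ‖(∫ y : ℝ in u..v, Complex.exp (l * (b + y * Complex.I)) / (b + y * Complex.I)) -
      (if u < 0 ∧ 0 < v then 2 * π else 0 : ℝ)‖ ≤
      Real.exp (l * b) / l * (1 / |u| + 1 / |v|) := by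
  set f : ℂ → ℂ := fun w => Complex.exp (l * w) / w with hf
  set J := ∫ y : ℝ in u..v, Complex.exp (l * (b + y * Complex.I)) / (b + y * Complex.I) with hJ
  set d : ℝ := if u < 0 ∧ 0 < v then 2 * π else 0 with hd
  have hrect : ∀ M : ℝ, 0 < M → rect f (-M) b u v = d * Complex.I := by
    intro M hM
    by_cases h : u < 0 ∧ 0 < v
    · rw [rect_exp l (-M) b u v (by linarith) hb h.1 h.2, hd, if_pos h]
      push_cast; rfl
    · rw [hd, if_neg h, rect_eq_zero]
      · simp
      · intro z hz
        have hz0 : z ≠ 0 := by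
          rintro rfl
          have h2 := hz.2
          rw [Set.mem_preimage, Set.uIcc_of_le huv.le] at h2
          simp only [Complex.zero_im, Set.mem_Icc] at h2
          exact h ⟨lt_of_le_of_ne h2.1 hu, lt_of_le_of_ne h2.2 hv.symm⟩
        refine DifferentiableAt.differentiableWithinAt ?_
        simp only [hf]
        exact DifferentiableAt.div (by fun_prop) differentiableAt_id hz0
  have hM : ∀ M : ℝ, 1 < M → ‖J - d‖ ≤ Real.exp (l * b) / l * (1 / |u| + 1 / |v|) +
      Real.exp (-l * M) * (v - u) := by
    intro M hM1
    have hM0 : 0 < M := by linarith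
    have h1 := hrect M hM0
    simp only [rect, hf] at h1
    rw [← hJ] at h1
    have h2 := hor_bound l hl.ne' (-M) b u (by linarith) hu
    have h3 := hor_bound l hl.ne' (-M) b v (by linarith) hv
    have h4 := ver_bound l (-M) u v huv.le (by linarith)
    set Hu := ∫ x : ℝ in (-M)..b, Complex.exp (l * (x + u * Complex.I)) / (x + u * Complex.I)
    set Hv := ∫ x : ℝ in (-M)..b, Complex.exp (l * (x + v * Complex.I)) / (x + v * Complex.I)
    set V := ∫ y : ℝ in u..v, Complex.exp (l * ((-M : ℝ) + y * Complex.I)) / ((-M : ℝ) + y * Complex.I)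
    have h5 : J - d = -Complex.I * (Hv - Hu) + V := by
      have hI : Complex.I * Complex.I = -1 := Complex.I_mul_I
      linear_combination (-Complex.I) * h1 + (J - V - d) * hI
    rw [h5]
    have h6 : ‖-Complex.I * (Hv - Hu) + V‖ ≤ ‖Hv‖ + ‖Hu‖ + ‖V‖ := by
      refine (norm_add_le _ _).trans ?_
      rw [norm_mul, norm_neg, Complex.norm_I, one_mul]
      gcongr
      exact norm_sub_le _ _
    have h7 : (Real.exp (l * b) - Real.exp (l * -M)) / l ≤ Real.exp (l * b) / l := by
      gcongr
      linarith [Real.exp_pos (l * -M)]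
    have h8 : Real.exp (l * -M) / |(-M)| * (v - u) ≤ Real.exp (-l * M) * (v - u) := by
      rw [show l * -M = -l * M by ring, abs_neg, abs_of_pos hM0]
      refine mul_le_mul_of_nonneg_right ?_ (by linarith)
      exact div_le_self (Real.exp_pos _).le hM1.le
    have h9 := mul_le_mul_of_nonneg_right h7 (show 0 ≤ 1 / |u| by positivity)
    have h10 := mul_le_mul_of_nonneg_right h7 (show 0 ≤ 1 / |v| by positivity)
    rw [mul_add]
    linarith
  have hlim : Tendsto (fun M : ℝ => Real.exp (l * b) / l * (1 / |u| + 1 / |v|) +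
      Real.exp (-l * M) * (v - u)) atTop (nhds (Real.exp (l * b) / l * (1 / |u| + 1 / |v|) + 0 * (v - u))) := by
    refine Tendsto.const_add _ (Tendsto.mul_const _ ?_)
    refine Real.tendsto_exp_atBot.comp ?_
    exact tendsto_id.const_mul_atTop_of_neg (by linarith)
  rw [zero_mul, add_zero] at hlim
  refine ge_of_tendsto hlim ?_
  filter_upwards [eventually_gt_atTop 1] with M h using hM M h

/-- Perron kernel, `l < 0`. -/
lemma kernel_neg (l b u v : ℝ) (hl : l < 0) (hb : 0 < b) (hu : u ≠ 0) (hv : v ≠ 0) (huv : u < v) :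
    ‖∫ y : ℝ in u..v, Complex.exp (l * (b + y * Complex.I)) / (b + y * Complex.I)‖ ≤
      Real.exp (l * b) / |l| * (1 / |u| + 1 / |v|) := by
  set f : ℂ → ℂ := fun w => Complex.exp (l * w) / w with hf
  set J := ∫ y : ℝ in u..v, Complex.exp (l * (b + y * Complex.I)) / (b + y * Complex.I) with hJ
  have hrect : ∀ M : ℝ, b < M → rect f b M u v = 0 := by
    intro M hM
    rw [rect_eq_zero]
    intro z hz
    have hz0 : z ≠ 0 := by
      rintro rfl
      have h2 := hz.1
      rw [Set.mem_preimage, Set.uIcc_of_le hM.le] at h2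
      simp only [Complex.zero_re, Set.mem_Icc] at h2
      linarith
    refine DifferentiableAt.differentiableWithinAt ?_
    simp only [hf]
    exact DifferentiableAt.div (by fun_prop) differentiableAt_id hz0
  have hM : ∀ M : ℝ, max b 1 < M → ‖J‖ ≤ Real.exp (l * b) / |l| * (1 / |u| + 1 / |v|) +
      Real.exp (l * M) * (v - u) := by
    intro M hM1
    have hbM : b < M := lt_of_le_of_lt (le_max_left _ _) hM1
    have h1M : 1 < M := lt_of_le_of_lt (le_max_right _ _) hM1
    have h1 := hrect M hbM
    simp only [rect, hf] at h1
    rw [← hJ] at h1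
    have h2 := hor_bound l hl.ne b M u hbM.le hu
    have h3 := hor_bound l hl.ne b M v hbM.le hv
    have h4 := ver_bound l M u v huv.le (by linarith)
    set Hu := ∫ x : ℝ in b..M, Complex.exp (l * (x + u * Complex.I)) / (x + u * Complex.I)
    set Hv := ∫ x : ℝ in b..M, Complex.exp (l * (x + v * Complex.I)) / (x + v * Complex.I)
    set V := ∫ y : ℝ in u..v, Complex.exp (l * (M + y * Complex.I)) / (M + y * Complex.I)
    have h5 : J = -Complex.I * (Hu - Hv) + V := by
      have hI : Complex.I * Complex.I = -1 := Complex.I_mul_I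
      linear_combination (Complex.I) * h1 + (J - V) * hI
    rw [h5]
    have h6 : ‖-Complex.I * (Hu - Hv) + V‖ ≤ ‖Hu‖ + ‖Hv‖ + ‖V‖ := by
      refine (norm_add_le _ _).trans ?_
      rw [norm_mul, norm_neg, Complex.norm_I, one_mul]
      gcongr
      exact norm_sub_le _ _
    have h7 : (Real.exp (l * M) - Real.exp (l * b)) / l ≤ Real.exp (l * b) / |l| := by
      rw [abs_of_neg hl, ← neg_div_neg_eq]
      refine div_le_div_of_nonneg_right ?_ (by linarith)
      linarith [Real.exp_pos (l * M)]
    have h8 : Real.exp (l * M) / |M| * (v - u) ≤ Real.exp (l * M) * (v - u) := by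
      rw [abs_of_pos (by linarith)]
      refine mul_le_mul_of_nonneg_right ?_ (by linarith)
      exact div_le_self (Real.exp_pos _).le h1M.le
    have h9 := mul_le_mul_of_nonneg_right h7 (show 0 ≤ 1 / |u| by positivity)
    have h10 := mul_le_mul_of_nonneg_right h7 (show 0 ≤ 1 / |v| by positivity)
    rw [mul_add]
    linarith
  have hlim : Tendsto (fun M : ℝ => Real.exp (l * b) / |l| * (1 / |u| + 1 / |v|) +
      Real.exp (l * M) * (v - u)) atTop (nhds (Real.exp (l * b) / |l| * (1 / |u| + 1 / |v|) + 0 * (v - u))) := by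
    refine Tendsto.const_add _ (Tendsto.mul_const _ ?_)
    refine Real.tendsto_exp_atBot.comp ?_
    exact tendsto_id.const_mul_atTop_of_neg hl
  rw [zero_mul, add_zero] at hlim
  refine ge_of_tendsto hlim ?_
  filter_upwards [eventually_gt_atTop (max b 1)] with M h using hM M h

end TEL

namespace TEL

open MeasureTheory in
/-- fractional part on `(1, ∞)` -/
noncomputable def fr : ℝ → ℂ := Set.indicator (Set.Ioi (1:ℝ)) (fun t => ((Int.fract t : ℝ) : ℂ))

lemma fr_norm_le (t : ℝ) : ‖fr t‖ ≤ 1 := by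
  unfold fr
  by_cases h : t ∈ Set.Ioi (1:ℝ)
  · rw [Set.indicator_of_mem h, Complex.norm_real, Real.norm_eq_abs, abs_of_nonneg (Int.fract_nonneg t)]
    exact (Int.fract_lt_one t).le
  · rw [Set.indicator_of_notMem h]; simp

lemma fr_meas : Measurable fr := by
  unfold fr
  exact (Complex.measurable_ofReal.comp measurable_fract).indicator measurableSet_Ioi

lemma mellin_fr_eq (s : ℂ) : mellin fr (-s) =
    ∫ t in Set.Ioi (1:ℝ), ((Int.fract t : ℝ) : ℂ) * (t:ℂ) ^ (-(s+1)) := by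
  unfold mellin fr
  have : ∀ t : ℝ, (t:ℂ) ^ (-s - 1) • Set.indicator (Set.Ioi (1:ℝ)) (fun t => ((Int.fract t : ℝ) : ℂ)) t
      = Set.indicator (Set.Ioi (1:ℝ)) (fun t : ℝ => ((Int.fract t : ℝ) : ℂ) * (t:ℂ) ^ (-(s+1))) t := by
    intro t
    by_cases h : t ∈ Set.Ioi (1:ℝ)
    · rw [Set.indicator_of_mem h, Set.indicator_of_mem h, smul_eq_mul, mul_comm]; ring_nf
    · rw [Set.indicator_of_notMem h, Set.indicator_of_notMem h]; simp
  simp_rw [this]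
  rw [MeasureTheory.setIntegral_indicator measurableSet_Ioi]
  congr 2
  ext t; simp; 

lemma mellin_fr_diff {s : ℂ} (hs : 0 < s.re) : DifferentiableAt ℂ (mellin fr) (-s) := by
  refine mellin_differentiableAt_of_isBigO_rpow (a := 0) (b := -s.re - 1) ?_ ?_ (by simpa using hs) ?_ (by simp)
  · apply MeasureTheory.LocallyIntegrable.locallyIntegrableOn
    apply (MeasureTheory.locallyIntegrable_const (1:ℝ)).mono fr_meas.aestronglyMeasurable
    filter_upwards with t
    simpa using fr_norm_le t
  · apply Asymptotics.IsBigO.of_bound 1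
    filter_upwards with t
    simpa using fr_norm_le t
  · apply Asymptotics.IsBigO.of_bound 1
    have : ∀ᶠ t : ℝ in nhdsWithin 0 (Set.Ioi 0), t < 1 :=
      nhdsWithin_le_nhds (Iio_mem_nhds one_pos)
    filter_upwards [this] with t ht
    rw [fr, Set.indicator_of_notMem (by simp; linarith)]
    simp

lemma mellin_fr_bound {s : ℂ} (hs : 0 < s.re) : ‖mellin fr (-s)‖ ≤ 1 / s.re := by
  rw [mellin_fr_eq]
  have h1 := integral_Ioi_rpow_of_lt (a := -s.re - 1) (by linarith) one_pos
  have h2 : ‖∫ t in Set.Ioi (1:ℝ), ((Int.fract t : ℝ) : ℂ) * (t:ℂ) ^ (-(s+1))‖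
      ≤ ∫ t in Set.Ioi (1:ℝ), t ^ (-s.re - 1) := by
    apply MeasureTheory.norm_integral_le_of_norm_le
    · exact integrableOn_Ioi_rpow_of_lt (by linarith) one_pos
    · filter_upwards [MeasureTheory.ae_restrict_mem measurableSet_Ioi] with t ht
      have ht : (1:ℝ) < t := ht
      rw [norm_mul, Complex.norm_real, Real.norm_eq_abs, abs_of_nonneg (Int.fract_nonneg t),
        Complex.norm_cpow_eq_rpow_re_of_pos (by linarith)]
      have : (-(s+1)).re = -s.re - 1 := by simp; ring
      rw [this]
      have h3 : 0 ≤ t ^ (-s.re - 1) := by positivity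
      nlinarith [Int.fract_lt_one t]
  refine h2.trans ?_
  rw [h1]
  simp

lemma zeta1_eq_of_one_lt {s : ℂ} (hs : 1 < s.re) :
    riemannZeta₁ s = s - s * (s - 1) * mellin fr (-s) := by
  have hs1 : s ≠ 1 := by rintro rfl; simp at hs
  have h1 : riemannZeta s = s * ∫ t in Set.Ioi (1:ℝ), ((⌊t⌋₊ : ℝ) : ℂ) * (t:ℂ) ^ (-(s+1)) := by
    rw [← LSeries_one_eq_riemannZeta hs, LSeries_eq_mul_integral' 1 zero_le_one hs]
    · simp
    · simp
      exact Asymptotics.isBigO_refl _ _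
  have h2 : ∫ t in Set.Ioi (1:ℝ), ((⌊t⌋₊ : ℝ) : ℂ) * (t:ℂ) ^ (-(s+1)) =
      (∫ t in Set.Ioi (1:ℝ), (t:ℂ) ^ (-s)) - mellin fr (-s) := by
    rw [mellin_fr_eq, ← MeasureTheory.integral_sub]
    · apply MeasureTheory.setIntegral_congr_fun measurableSet_Ioi
      intro t ht
      have ht : (1:ℝ) < t := ht
      have h3 : (⌊t⌋₊ : ℝ) = t - Int.fract t := by
        rw [Int.fract, natCast_floor_eq_intCast_floor (by linarith)]; ring
      have h4 : (t:ℂ) ^ (-s) = t * (t:ℂ) ^ (-(s+1)) := by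
        rw [show -s = 1 + -(s+1) by ring, Complex.cpow_add _ _ (by norm_cast; linarith), Complex.cpow_one]
        
      simp only []
      rw [h3, h4]; push_cast; ring
    · exact integrableOn_Ioi_cpow_of_lt (by simpa using hs) one_pos
    · have h5 := integrableOn_Ioi_rpow_of_lt (a := -s.re - 1) (by linarith) one_pos
      refine h5.mono' ?_ ?_
      · apply Measurable.aestronglyMeasurable
        exact (Complex.measurable_ofReal.comp measurable_fract).mul (Complex.measurable_ofReal.pow_const _)
      · filter_upwards [MeasureTheory.ae_restrict_mem measurableSet_Ioi] with t ht
        have ht : (1:ℝ) < t := ht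
        rw [norm_mul, Complex.norm_real, Real.norm_eq_abs, abs_of_nonneg (Int.fract_nonneg t),
          Complex.norm_cpow_eq_rpow_re_of_pos (by linarith)]
        have : (-(s+1)).re = -s.re - 1 := by simp; ring
        rw [this]
        have h3 : 0 ≤ t ^ (-s.re - 1) := by positivity
        nlinarith [Int.fract_lt_one t]
  rw [h2, integral_Ioi_cpow_of_lt (by simpa using hs) one_pos] at h1
  have h6 := riemannZeta_eq_inv_sub_mul hs1
  have h7 : s - 1 ≠ 0 := sub_ne_zero.2 hs1
  have h8 : riemannZeta₁ s = (s - 1) * riemannZeta s := by rw [h6]; field_simp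
  have h9 : -s + 1 ≠ 0 := by intro h; apply h7; linear_combination -h
  rw [h8, h1]
  simp only [Complex.ofReal_one, Complex.one_cpow]
  have : -1 / (-s+1) = 1 / (s - 1) := by field_simp; ring
  rw [this]
  field_simp

lemma zeta1_eq {s : ℂ} (hs : 0 < s.re) :
    riemannZeta₁ s = s - s * (s - 1) * mellin fr (-s) := by
  have hO : IsOpen {s : ℂ | 0 < s.re} := isOpen_lt continuous_const Complex.continuous_re
  have hf : AnalyticOnNhd ℂ riemannZeta₁ {s : ℂ | 0 < s.re} :=
    differentiable_riemannZeta₁.differentiableOn.analyticOnNhd hO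
  have hg : AnalyticOnNhd ℂ (fun s => s - s * (s - 1) * mellin fr (-s)) {s : ℂ | 0 < s.re} := by
    apply DifferentiableOn.analyticOnNhd _ hO
    intro z hz
    apply DifferentiableAt.differentiableWithinAt
    have h1 : DifferentiableAt ℂ (fun s => mellin fr (-s)) z :=
      DifferentiableAt.comp (g := mellin fr) (f := fun s => -s) z (mellin_fr_diff hz) differentiableAt_id.neg
    fun_prop
  have hc : IsPreconnected {s : ℂ | 0 < s.re} := (convex_halfSpace_re_gt 0).isPreconnected
  refine hf.eqOn_of_preconnected_of_eventuallyEq hg hc (z₀ := 2) (by simp) ?_ hs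
  have : {s : ℂ | 1 < s.re} ∈ nhds (2:ℂ) :=
    (isOpen_lt continuous_const Complex.continuous_re).mem_nhds (by simp)
  filter_upwards [this] with z hz
  exact zeta1_eq_of_one_lt hz

/-- polynomial growth to the right of 1/5 -/
lemma zeta1_growth_right {s : ℂ} (hs : 1/5 ≤ s.re) : ‖riemannZeta₁ s‖ ≤ 6 * (1 + ‖s‖)^2 := by
  have h0 : 0 < s.re := by linarith
  rw [zeta1_eq h0]
  have h1 := mellin_fr_bound h0
  have h2 : 1 / s.re ≤ 5 := by rw [div_le_iff₀ h0]; linarith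
  have h3 : ‖s - 1‖ ≤ ‖s‖ + 1 := by simpa using norm_sub_le s 1
  calc _ ≤ ‖s‖ + ‖s * (s-1) * mellin fr (-s)‖ := norm_sub_le _ _
    _ = ‖s‖ + ‖s‖ * ‖s-1‖ * ‖mellin fr (-s)‖ := by rw [norm_mul, norm_mul]
    _ ≤ ‖s‖ + ‖s‖ * (‖s‖ + 1) * 5 := by gcongr; exact h1.trans h2
    _ ≤ _ := by nlinarith [norm_nonneg s]

end TEL

namespace TEL

lemma norm_Gamma_le {s : ℂ} (hs : 0 < s.re) : ‖Complex.Gamma s‖ ≤ Real.Gamma s.re := by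
  rw [Complex.Gamma_eq_integral hs, Real.Gamma_eq_integral hs, Complex.GammaIntegral]
  refine (MeasureTheory.norm_integral_le_integral_norm _).trans (le_of_eq ?_)
  apply MeasureTheory.setIntegral_congr_fun measurableSet_Ioi
  intro t ht
  have ht : (0:ℝ) < t := ht
  simp only []
  rw [norm_mul, Complex.norm_cpow_eq_rpow_re_of_pos ht, Complex.norm_real, Real.norm_eq_abs, abs_of_pos (Real.exp_pos _)]
  simp

lemma norm_cos_le (w : ℂ) : ‖Complex.cos w‖ ≤ Real.exp ‖w‖ := by
  have h1 : ‖Complex.exp (w * Complex.I)‖ ≤ Real.exp ‖w‖ := by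
    refine (Complex.norm_exp_le_exp_norm _).trans ?_
    simp
  have h2 : ‖Complex.exp (-w * Complex.I)‖ ≤ Real.exp ‖w‖ := by
    refine (Complex.norm_exp_le_exp_norm _).trans ?_
    simp
  rw [Complex.cos, norm_div]
  have := norm_add_le (Complex.exp (w * Complex.I)) (Complex.exp (-w * Complex.I))
  simp only [Complex.norm_ofNat]
  linarith

lemma Gamma_le_exp {σ r : ℝ} (hr : 1 ≤ r) (h1 : 4/5 ≤ σ) (h2 : σ ≤ r + 1) :
    Real.Gamma σ ≤ Real.exp (32 * r ^ (5/4 : ℝ)) := by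
  have h0 : 0 < σ := by linarith
  have hG : 0 < Real.Gamma σ := Real.Gamma_pos_of_pos h0
  have e1 : Real.Gamma (σ + 2) = (σ + 1) * (σ * Real.Gamma σ) := by
    rw [show σ + 2 = (σ + 1) + 1 by ring, Real.Gamma_add_one (by linarith), Real.Gamma_add_one (by linarith)]
  have e2 : Real.Gamma σ ≤ Real.Gamma (σ + 2) := by
    rw [e1]
    nlinarith [mul_nonneg (sub_nonneg.2 h1) hG.le, mul_pos h0 hG, mul_nonneg (sub_nonneg.2 h1) (mul_pos h0 hG).le]
  set n := ⌈σ⌉₊ + 1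
  have hn1 : σ + 2 ≤ (n:ℝ) + 1 := by
    have := Nat.le_ceil σ
    push_cast [n]; linarith
  have hn2 : (n:ℝ) ≤ 4 * r := by
    have := Nat.ceil_lt_add_one h0.le
    push_cast [n]; linarith
  have e3 : Real.Gamma (σ + 2) ≤ Real.Gamma ((n:ℝ)+1) :=
    Real.Gamma_strictMonoOn_Ici.monotoneOn (by simp; linarith) (by simp; linarith) hn1
  have e4 : Real.Gamma ((n:ℝ)+1) ≤ (n:ℝ)^n := by
    rw [Real.Gamma_nat_eq_factorial]
    exact_mod_cast Nat.factorial_le_pow n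
  have hnpos : (1:ℝ) ≤ n := by push_cast [n]; linarith [Nat.cast_nonneg (α := ℝ) ⌈σ⌉₊]
  have e5 : (n:ℝ)^n = Real.exp (n * Real.log n) := by
    rw [mul_comm, Real.exp_mul, Real.exp_log (by linarith), Real.rpow_natCast]
  have e6 : Real.log n ≤ (n:ℝ)^(1/4:ℝ) / (1/4) := Real.log_le_rpow_div (by linarith) (by norm_num)
  have e7 : (n:ℝ)^(1/4:ℝ) ≤ (4*r)^(1/4:ℝ) := by gcongr
  have e8 : (4*r)^(1/4:ℝ) ≤ 2 * r^(1/4:ℝ) := by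
    rw [Real.mul_rpow (by norm_num) (by linarith)]
    have : (4:ℝ)^(1/4:ℝ) ≤ 2 := by
      calc (4:ℝ)^(1/4:ℝ) ≤ (16:ℝ)^(1/4:ℝ) := by gcongr; norm_num
        _ = 2 := by rw [show (16:ℝ) = 2^(4:ℝ) by norm_num, ← Real.rpow_mul (by norm_num)]; norm_num
    gcongr
  have e9 : r ^ (5/4:ℝ) = r * r^(1/4:ℝ) := by
    rw [show (5/4:ℝ) = 1 + 1/4 by norm_num, Real.rpow_add (by linarith), Real.rpow_one]
  have e10 : 0 ≤ r^(1/4:ℝ) := by positivity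
  refine e2.trans (e3.trans (e4.trans ?_))
  rw [e5]
  apply Real.exp_le_exp.2
  have hlog : Real.log n ≤ 8 * r^(1/4:ℝ) := by linarith
  calc n * Real.log n ≤ (4*r) * (8 * r^(1/4:ℝ)) := by
        apply mul_le_mul hn2 hlog (Real.log_nonneg hnpos) (by linarith)
    _ = _ := by rw [e9]; ring

lemma zeta1_eq_mul {s : ℂ} (hs : s ≠ 1) : riemannZeta₁ s = (s - 1) * riemannZeta s := by
  have h7 : s - 1 ≠ 0 := sub_ne_zero.2 hs
  rw [riemannZeta_eq_inv_sub_mul hs]; field_simp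

lemma poly_le_exp {r : ℝ} (hr : 1 ≤ r) : 216 * r ^ 3 ≤ Real.exp (9 * r) := by
  have h1 : r ≤ Real.exp r := by linarith [Real.add_one_le_exp r]
  have h2 : (216:ℝ) ≤ Real.exp 6 := by
    have := Real.exp_one_gt_d9
    calc (216:ℝ) ≤ 2.7^6 := by norm_num
      _ ≤ (Real.exp 1)^6 := by gcongr; linarith
      _ = Real.exp 6 := by rw [← Real.exp_nat_mul]; norm_num
  have h3 : Real.exp 6 ≤ Real.exp (6 * r) := Real.exp_le_exp.2 (by linarith)
  calc 216 * r^3 ≤ Real.exp (6*r) * (Real.exp r)^3 := by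
        apply mul_le_mul (h2.trans h3) (by gcongr) (by positivity) (by positivity)
    _ = Real.exp (9*r) := by
        rw [← Real.exp_nat_mul, ← Real.exp_add]; congr 1; push_cast; ring

lemma zeta1_growth (z : ℂ) (hz : 1 ≤ ‖z‖) : ‖riemannZeta₁ z‖ ≤ Real.exp (45 * ‖z‖ ^ (5/4 : ℝ)) := by
  set r := ‖z‖ with hr
  have e9 : r ≤ r ^ (5/4:ℝ) := by
    conv_lhs => rw [← Real.rpow_one r]
    exact Real.rpow_le_rpow_of_exponent_le hz (by norm_num)
  by_cases h : 1/5 ≤ z.re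
  · refine (zeta1_growth_right h).trans ?_
    calc 6 * (1 + r)^2 ≤ 216 * r^3 := by nlinarith [sq_nonneg (r-1), mul_nonneg (sub_nonneg.2 hz) (sq_nonneg r)]
      _ ≤ Real.exp (9*r) := poly_le_exp hz
      _ ≤ _ := Real.exp_le_exp.2 (by linarith)
  · push Not at h
    set s := 1 - z with hs
    have hzs : z = 1 - s := by rw [hs]; ring
    have hsre : 4/5 < s.re := by simp [hs]; linarith
    have hz1 : z ≠ 1 := by rintro rfl; norm_num at h
    have hz0 : z ≠ 0 := by intro h0; rw [hr, h0] at hz; norm_num at hz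
    have hs1 : s ≠ 1 := by intro h1; apply hz0; rw [hzs, h1]; simp
    have hsn : ∀ n : ℕ, s ≠ -n := by
      intro n hn
      have := congrArg Complex.re hn
      simp at this
      have := Nat.cast_nonneg (α := ℝ) n
      linarith
    have hsnorm : ‖s‖ ≤ r + 1 := by
      have := norm_sub_le (1:ℂ) z
      simp at this; linarith
    have hs1n : ‖s - 1‖ = r := by rw [hs, hr]; simp
    have hre : s.re ≤ r + 1 := (Complex.re_le_norm s).trans hsnorm
    have b1 : ‖z - 1‖ ≤ r + 1 := by simpa using norm_sub_le z 1
    have b2 : ‖(2 * π : ℂ) ^ (-s)‖ ≤ 1 := by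
      rw [show (2 * π : ℂ) = ((2 * π : ℝ) : ℂ) by push_cast; ring,
        Complex.norm_cpow_eq_rpow_re_of_pos (by positivity)]
      apply Real.rpow_le_one_of_one_le_of_nonpos
      · linarith [Real.pi_gt_three]
      · simp; linarith
    have b3 : ‖Complex.Gamma s‖ ≤ Real.exp (32 * r ^ (5/4 : ℝ)) :=
      (norm_Gamma_le (by linarith)).trans (Gamma_le_exp hz hsre.le hre)
    have b4 : ‖Complex.cos (π * s / 2)‖ ≤ Real.exp (4 * r) := by
      refine (norm_cos_le _).trans (Real.exp_le_exp.2 ?_)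
      rw [norm_div, norm_mul, Complex.norm_real, Real.norm_eq_abs, abs_of_pos Real.pi_pos]
      simp only [Complex.norm_ofNat]
      have := Real.pi_le_four
      nlinarith [norm_nonneg s]
    have b5 : ‖riemannZeta s‖ ≤ 6 * (2 + r)^2 := by
      rw [riemannZeta_eq_inv_sub_mul hs1, norm_mul, norm_inv, hs1n]
      have h6 := zeta1_growth_right (s := s) (by linarith)
      have h7 : r⁻¹ ≤ 1 := inv_le_one_of_one_le₀ hz
      calc r⁻¹ * ‖riemannZeta₁ s‖ ≤ 1 * (6 * (1 + ‖s‖)^2) := by gcongr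
        _ ≤ _ := by
          have : 1 + ‖s‖ ≤ 2 + r := by linarith
          rw [one_mul]; gcongr
    rw [zeta1_eq_mul hz1]
    conv_lhs => rw [hzs, riemannZeta_one_sub hsn hs1, ← hzs]
    simp only [norm_mul]
    simp only [Complex.norm_ofNat] at *
    have b2' : ‖(2:ℂ) * π‖ = ‖(2:ℂ) * π‖ := rfl
    calc _ ≤ (r+1) * (2 * 1 * Real.exp (32 * r ^ (5/4 : ℝ)) * Real.exp (4 * r) * (6 * (2 + r)^2)) := by
          gcongr
      _ = (12 * (r+1) * (2+r)^2) * (Real.exp (32 * r ^ (5/4 : ℝ)) * Real.exp (4 * r)) := by ring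
      _ ≤ (216 * r^3) * (Real.exp (32 * r ^ (5/4 : ℝ)) * Real.exp (4 * r)) := by
          refine mul_le_mul_of_nonneg_right ?_ (by positivity)
          have h2r : 2 + r ≤ 3 * r := by linarith
          have h1r : r + 1 ≤ 2 * r := by linarith
          calc 12 * (r+1) * (2+r)^2 ≤ 12 * (2*r) * (3*r)^2 := by gcongr
            _ = 216 * r^3 := by ring
      _ ≤ Real.exp (9*r) * (Real.exp (32 * r ^ (5/4 : ℝ)) * Real.exp (4 * r)) := by
          gcongr; exact poly_le_exp hz
      _ = Real.exp (9*r + (32 * r ^ (5/4 : ℝ) + 4 * r)) := by rw [← Real.exp_add, ← Real.exp_add]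
      _ ≤ _ := Real.exp_le_exp.2 (by linarith)

end TEL

namespace TEL

/-- multiplicity of a zero of `(s-1)ζ(s)` -/
noncomputable def mu (ρ : ℂ) : ℕ := analyticOrderNatAt riemannZeta₁ ρ

lemma zeta1_zero : riemannZeta₁ 0 = 1/2 := by
  rw [zeta1_eq_mul (by norm_num), riemannZeta_zero]; norm_num

lemma zeta1_zero_ne : riemannZeta₁ 0 ≠ 0 := by rw [zeta1_zero]; norm_num

lemma mu_ne_zero_iff (ρ : ℂ) : mu ρ ≠ 0 ↔ riemannZeta₁ ρ = 0 := by
  have h1 := order_ne_top riemannZeta₁ differentiable_riemannZeta₁ zeta1_zero_ne ρ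
  have h2 := (differentiable_riemannZeta₁.analyticAt ρ).analyticOrderAt_ne_zero
  rw [← h2, mu, analyticOrderNatAt]
  simp [h1]

lemma mu_eq_zero {ρ : ℂ} (h : riemannZeta₁ ρ ≠ 0) : mu ρ = 0 := by
  by_contra h1
  exact h ((mu_ne_zero_iff ρ).1 h1)

lemma zeros_finite (R : ℝ) : {ρ : ℂ | riemannZeta₁ ρ = 0 ∧ ‖ρ‖ ≤ R}.Finite := by
  have hA : AnalyticOnNhd ℂ riemannZeta₁ Set.univ := fun z _ => differentiable_riemannZeta₁.analyticAt z
  have hc : (riemannZeta₁ ⁻¹' {0})ᶜ ∈ codiscreteWithin (Set.univ : Set ℂ) :=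
    hA.preimage_zero_mem_codiscreteWithin (x := 0) zeta1_zero_ne (by simp) isConnected_univ
  have := (isCompact_closedBall (0:ℂ) R).finite_sdiff_of_mem_codiscreteWithin
    (codiscreteWithin_mono (Set.subset_univ _) hc)
  refine this.subset ?_
  rintro ρ ⟨h1, h2⟩
  simp [h1, h2]

/-- the zeros in a ball -/
noncomputable def Z (R : ℝ) : Finset ℂ := (zeros_finite R).toFinset

lemma mem_Z {R : ℝ} {ρ : ℂ} : ρ ∈ Z R ↔ riemannZeta₁ ρ = 0 ∧ ‖ρ‖ ≤ R := by simp [Z]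

lemma count_ball {R : ℝ} (hR : 1 ≤ R) (S : Finset ℂ) (hS : ∀ ρ ∈ S, ‖ρ‖ ≤ R) :
    (∑ ρ ∈ S, (mu ρ : ℝ)) ≤ 400 * R ^ (5/4 : ℝ) := by
  have h := count_bound riemannZeta₁ differentiable_riemannZeta₁ (c := 0) zeta1_zero_ne (r := R)
    (R := 2 * R) (M := Real.exp (45 * (2 * R) ^ (5/4 : ℝ))) (by linarith) (by linarith) (by
      intro z hz
      rw [sub_zero] at hz
      rw [← hz]
      exact zeta1_growth z (by rw [hz]; linarith)) S (by simpa using hS)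
  rw [zeta1_zero, show (2 * R / R) = 2 by field_simp] at h
  have hN : (∑ ρ ∈ S, (mu ρ : ℝ)) = ((∑ ρ ∈ S, analyticOrderNatAt riemannZeta₁ ρ : ℕ) : ℝ) := by
    push_cast; rfl
  rw [hN]
  generalize (∑ ρ ∈ S, analyticOrderNatAt riemannZeta₁ ρ) = N at *
  have h2 : Real.log (2 ^ N) ≤ Real.log (2 * Real.exp (45 * (2 * R) ^ (5/4 : ℝ))) := by
    apply Real.log_le_log (by positivity)
    simp at h; linarith
  rw [Real.log_mul (by norm_num) (by positivity), Real.log_exp, Real.log_pow] at h2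
  have h3 : (2 * R) ^ (5/4 : ℝ) ≤ 4 * R ^ (5/4 : ℝ) := by
    rw [Real.mul_rpow (by norm_num) (by linarith)]
    gcongr
    calc (2:ℝ) ^ (5/4:ℝ) ≤ 2 ^ (2:ℝ) := Real.rpow_le_rpow_of_exponent_le (by norm_num) (by norm_num)
      _ = 4 := by norm_num
  have h4 : 1 ≤ R ^ (5/4 : ℝ) := Real.one_le_rpow hR (by norm_num)
  have l1 := Real.log_two_gt_d9
  have l2 := Real.log_two_lt_d9
  have : (N:ℝ) * 0.69 ≤ N * Real.log 2 := by gcongr; linarith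
  linarith

lemma dyadic (u : Finset ℂ) (k : ℕ) :
    (∑ ρ ∈ u with ‖ρ‖ ≤ 2 ^ k, (mu ρ : ℝ) / ‖ρ‖ ^ (3/2 : ℝ)) ≤
      (∑ ρ ∈ Z 1, (mu ρ : ℝ) / ‖ρ‖ ^ (3/2 : ℝ)) +
        ∑ j ∈ range k, 1600 * ((2:ℝ) ^ (-(1/4) : ℝ)) ^ j := by
  classical
  induction k with
  | zero =>
    simp only [pow_zero, range_zero, sum_empty, add_zero]
    have : (∑ ρ ∈ u with ‖ρ‖ ≤ 1, (mu ρ : ℝ) / ‖ρ‖ ^ (3/2 : ℝ)) =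
        ∑ ρ ∈ (u.filter (‖·‖ ≤ 1)).filter (fun ρ => mu ρ ≠ 0), (mu ρ : ℝ) / ‖ρ‖ ^ (3/2 : ℝ) := by
      symm
      apply sum_filter_of_ne
      intro ρ _ h h0
      simp [h0] at h
    rw [this]
    apply sum_le_sum_of_subset_of_nonneg
    · intro ρ h
      simp only [mem_filter] at h
      exact mem_Z.2 ⟨(mu_ne_zero_iff ρ).1 h.2, h.1.2⟩
    · intros; positivity
  | succ k ih =>
    rw [sum_range_succ, ← add_assoc]
    rw [← sum_filter_add_sum_filter_not (u.filter (fun ρ => ‖ρ‖ ≤ 2 ^ (k+1))) (fun ρ => ‖ρ‖ ≤ 2 ^ k)]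
    refine add_le_add (le_trans ?_ ih) ?_
    · apply sum_le_sum_of_subset_of_nonneg
      · intro ρ h; simp only [mem_filter] at h ⊢; exact ⟨h.1.1, h.2⟩
      · intros; positivity
    · have hc := count_ball (R := 2 ^ (k+1)) (one_le_pow₀ (by norm_num))
        (filter (fun ρ => ¬ ‖ρ‖ ≤ 2 ^ k) (u.filter (fun ρ => ‖ρ‖ ≤ 2 ^ (k+1)))) (by
          intro ρ h; simp only [mem_filter] at h; exact h.1.2)
      calc _ ≤ ∑ ρ ∈ (filter (fun ρ => ¬ ‖ρ‖ ≤ 2 ^ k) (u.filter (fun ρ => ‖ρ‖ ≤ 2 ^ (k+1)))),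
              (mu ρ : ℝ) * (((2:ℝ)^k) ^ (3/2 : ℝ))⁻¹ := by
            apply sum_le_sum
            intro ρ h
            simp only [mem_filter, not_le] at h
            rw [div_eq_mul_inv]
            have := h.2.le
            gcongr
        _ = (∑ ρ ∈ (filter (fun ρ => ¬ ‖ρ‖ ≤ 2 ^ k) (u.filter (fun ρ => ‖ρ‖ ≤ 2 ^ (k+1)))),
              (mu ρ : ℝ)) * (((2:ℝ)^k) ^ (3/2 : ℝ))⁻¹ := by rw [sum_mul]
        _ ≤ 400 * ((2:ℝ) ^ (k+1)) ^ (5/4 : ℝ) * (((2:ℝ)^k) ^ (3/2 : ℝ))⁻¹ := by gcongr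
        _ ≤ _ := by
          rw [← Real.rpow_natCast, ← Real.rpow_natCast, ← Real.rpow_natCast, ← Real.rpow_mul (by norm_num),
            ← Real.rpow_mul (by norm_num), ← Real.rpow_mul (by norm_num), ← Real.rpow_neg (by norm_num),
            mul_assoc, ← Real.rpow_add (by norm_num)]
          have : (1600:ℝ) = 400 * 2 ^ (2:ℝ) := by norm_num
          rw [this, mul_assoc 400, ← Real.rpow_add (by norm_num)]
          refine mul_le_mul_of_nonneg_left (Real.rpow_le_rpow_of_exponent_le (by norm_num) ?_) (by norm_num)
          push_cast; linarith

lemma mu_summable : Summable (fun ρ : ℂ => (mu ρ : ℝ) / ‖ρ‖ ^ (3/2 : ℝ)) := by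
  set q : ℝ := (2:ℝ) ^ (-(1/4) : ℝ)
  have hq0 : 0 ≤ q := by positivity
  have hq1 : q < 1 := Real.rpow_lt_one_of_one_lt_of_neg (by norm_num) (by norm_num)
  have hs : Summable (fun j : ℕ => 1600 * q ^ j) := (summable_geometric_of_lt_one hq0 hq1).mul_left _
  apply summable_of_sum_le (c := (∑ ρ ∈ Z 1, (mu ρ : ℝ) / ‖ρ‖ ^ (3/2 : ℝ)) + ∑' j : ℕ, 1600 * q ^ j)
  · intro ρ; positivity
  · intro u
    obtain ⟨k, hk⟩ := pow_unbounded_of_one_lt (∑ ρ ∈ u, ‖ρ‖) (one_lt_two)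
    have h1 : u.filter (fun ρ => ‖ρ‖ ≤ 2 ^ k) = u := by
      apply filter_true_of_mem
      intro ρ hρ
      exact (single_le_sum (f := fun ρ : ℂ => ‖ρ‖) (fun _ _ => norm_nonneg _) hρ).trans hk.le
    have h2 := dyadic u k
    rw [h1] at h2
    refine h2.trans ?_
    gcongr
    exact hs.sum_le_tsum _ (fun _ _ => by positivity)

/-- every set of zeros away from a ball is cofinite -/
lemma eventually_large (R : ℝ) {p : ℂ → Prop} (h0 : ∀ ρ, mu ρ = 0 → p ρ)
    (h : ∀ ρ, riemannZeta₁ ρ = 0 → R < ‖ρ‖ → p ρ) : ∀ᶠ ρ in cofinite, p ρ := by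
  rw [eventually_cofinite]
  refine (zeros_finite R).subset ?_
  intro ρ hρ
  have h1 : riemannZeta₁ ρ = 0 := by
    by_contra h2; exact hρ (h0 ρ (mu_eq_zero h2))
  refine ⟨h1, ?_⟩
  by_contra h2
  exact hρ (h ρ h1 (not_le.1 h2))

lemma rpow_le_sq {ρ : ℂ} (h : 1 ≤ ‖ρ‖) : ‖ρ‖ ^ (3/2 : ℝ) ≤ ‖ρ‖ ^ 2 := by
  rw [← Real.rpow_two]
  exact Real.rpow_le_rpow_of_exponent_le h (by norm_num)

lemma mu_summable_two : Summable (fun ρ : ℂ => (mu ρ : ℝ) / ‖ρ‖ ^ 2) := by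
  refine mu_summable.of_norm_bounded_eventually (eventually_large 1 ?_ ?_)
  · intro ρ h; simp [h]
  · intro ρ _ h
    rw [Real.norm_eq_abs, abs_of_nonneg (by positivity)]
    have := rpow_le_sq h.le
    have : 0 < ‖ρ‖ ^ (3/2 : ℝ) := by positivity
    gcongr

lemma tendsto_sum_of_summable {ι : Type*} {l : Filter ι} {g : ℂ → ℂ} (hg : Summable g)
    (S : ι → Finset ℂ) (h : ∀ ρ, g ρ ≠ 0 → ∀ᶠ n in l, ρ ∈ S n) :
    Tendsto (fun n => ∑ ρ ∈ S n, g ρ) l (nhds (∑' ρ, g ρ)) := by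
  classical
  have e : ∀ n, ∑ ρ ∈ S n, g ρ = ∑' ρ, if ρ ∈ S n then g ρ else 0 := by
    intro n
    rw [tsum_eq_sum (s := S n)]
    · exact sum_congr rfl (fun ρ h => by simp [h])
    · intro ρ h; simp [h]
  simp_rw [e]
  refine tendsto_tsum_of_dominated_convergence (bound := fun ρ => ‖g ρ‖) hg.norm ?_ ?_
  · intro ρ
    by_cases h0 : g ρ = 0
    · simp [h0, tendsto_const_nhds]
    · refine tendsto_const_nhds.congr' ?_
      filter_upwards [h ρ h0] with n hn
      simp [hn]
  · filter_upwards with n ρ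
    split_ifs <;> simp

lemma hadamard_summable (s : ℂ) :
    Summable (fun ρ : ℂ => (mu ρ : ℂ) * (1 / (s - ρ) + 1 / ρ)) := by
  refine (mu_summable_two.mul_left (2 * ‖s‖)).of_norm_bounded_eventually (eventually_large (2 * ‖s‖) ?_ ?_)
  · intro ρ h; simp [h]
  · intro ρ h0 h
    have hρ : 0 < ‖ρ‖ := by linarith [norm_nonneg s]
    have h1 : ‖ρ‖ / 2 ≤ ‖s - ρ‖ := by
      have := norm_sub_norm_le ρ s
      rw [norm_sub_rev] at this; linarith
    have hne : s - ρ ≠ 0 := by intro h2; rw [h2] at h1; rw [norm_zero] at h1; linarith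
    have hne' : ρ ≠ 0 := norm_pos_iff.1 hρ
    have : 1 / (s - ρ) + 1 / ρ = s / ((s - ρ) * ρ) := by field_simp; ring
    rw [this]
    rw [norm_mul, norm_div, norm_mul, Complex.norm_natCast]
    calc (mu ρ : ℝ) * (‖s‖ / (‖s - ρ‖ * ‖ρ‖)) ≤ (mu ρ : ℝ) * (‖s‖ / (‖ρ‖ / 2 * ‖ρ‖)) := by gcongr
      _ = _ := by field_simp

lemma logDeriv_zeta1_zero : logDeriv riemannZeta₁ 0 = -1 + Real.log (2 * π) := by
  have e : riemannZeta₁ =ᶠ[nhds 0] fun s => (s - 1) * riemannZeta s := by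
    filter_upwards [isOpen_ne.mem_nhds (show (0:ℂ) ≠ 1 by norm_num)] with s hs
    exact zeta1_eq_mul hs
  have hd : HasDerivAt riemannZeta (-Real.log (2 * π) / 2) 0 := by
    have h1 := (differentiableAt_riemannZeta (s := 0) (by norm_num)).hasDerivAt
    rw [deriv_riemannZeta_zero] at h1
    have h2 : ((Real.log (2 * π) : ℝ) : ℂ) = Complex.log (2 * π) := by
      rw [Complex.ofReal_log (by positivity)]; push_cast; rfl
    rw [h2]
    exact h1
  rw [logDeriv_apply, e.deriv_eq, zeta1_zero]
  have h2 := ((hasDerivAt_id (0:ℂ)).sub_const 1).mul hd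
  have h3 := h2.deriv
  rw [show (fun s => (s - 1) * riemannZeta s) = ((fun x => id x - 1) * riemannZeta) from rfl, h3, riemannZeta_zero]
  simp; ring

lemma hadamard_zeta {s : ℂ} (hs : riemannZeta₁ s ≠ 0) :
    HasSum (fun ρ : ℂ => (mu ρ : ℂ) * (1 / (s - ρ) + 1 / ρ))
      (logDeriv riemannZeta₁ s - (-1 + Real.log (2 * π))) := by
  have h1 := hadamard riemannZeta₁ differentiable_riemannZeta₁ zeta1_zero_ne (C := 45) (p := 5/4)
    (by norm_num) (by norm_num) zeta1_growth (fun n => Z n) (fun n ρ => mem_Z) hs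
  rw [logDeriv_zeta1_zero] at h1
  have hsum := hadamard_summable s
  have h2 := tendsto_sum_of_summable hsum (l := atTop) (fun n : ℕ => Z n) (by
    intro ρ h
    have h0 : mu ρ ≠ 0 := by rintro h0; simp [h0] at h
    filter_upwards [eventually_ge_atTop ⌈‖ρ‖⌉₊] with n hn
    exact mem_Z.2 ⟨(mu_ne_zero_iff ρ).1 h0, Nat.ceil_le.1 hn⟩)
  have := tendsto_nhds_unique h1 h2
  rw [this]
  exact hsum.hasSum

end TEL

namespace TEL

lemma cos_zero_int {s : ℂ} (h : Complex.cos (π * s / 2) = 0) : ∃ k : ℤ, s = 2 * k + 1 := by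
  obtain ⟨k, hk⟩ := Complex.cos_eq_zero_iff.1 h
  refine ⟨k, ?_⟩
  have hpi : (π:ℂ) ≠ 0 := by exact_mod_cast Real.pi_ne_zero
  field_simp at hk
  exact hk

lemma two_pi_cpow_ne (s : ℂ) : (2 * π : ℂ) ^ s ≠ 0 := by
  have hpi : (π:ℂ) ≠ 0 := by exact_mod_cast Real.pi_ne_zero
  rw [Complex.cpow_def_of_ne_zero (by simp [hpi])]
  exact Complex.exp_ne_zero _

lemma zeta1_ne_of_one_le {ρ : ℂ} (h : 1 ≤ ρ.re) : riemannZeta₁ ρ ≠ 0 := by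
  by_cases h1 : ρ = 1
  · rw [h1, riemannZeta₁_one]; norm_num
  · rw [zeta1_eq_mul h1]
    exact mul_ne_zero (sub_ne_zero.2 h1) (riemannZeta_ne_zero_of_one_le_re h)

lemma zeta_zero_of_zeta1 {ρ : ℂ} (h : riemannZeta₁ ρ = 0) : ρ ≠ 1 ∧ riemannZeta ρ = 0 := by
  have h1 : ρ ≠ 1 := by rintro rfl; rw [riemannZeta₁_one] at h; norm_num at h
  refine ⟨h1, ?_⟩
  rw [zeta1_eq_mul h1] at h
  exact (mul_eq_zero.1 h).resolve_left (sub_ne_zero.2 h1)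

lemma zero_class {ρ : ℂ} (h : riemannZeta₁ ρ = 0) :
    (0 < ρ.re ∧ ρ.re < 1) ∨ (ρ.im = 0 ∧ ρ.re ≤ -2) := by
  have h1 : ρ.re < 1 := by
    by_contra h2; exact zeta1_ne_of_one_le (not_lt.1 h2) h
  by_cases h0 : 0 < ρ.re
  · exact Or.inl ⟨h0, h1⟩
  right
  push Not at h0
  have hne : ρ ≠ 0 := by rintro rfl; exact zeta1_zero_ne h
  obtain ⟨hρ1, hz⟩ := zeta_zero_of_zeta1 h
  set s := 1 - ρ with hs
  have hρs : ρ = 1 - s := by rw [hs]; ring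
  have hsre : 1 ≤ s.re := by simp [hs]; exact h0
  have hs1 : s ≠ 1 := by intro h1; apply hne; rw [hρs, h1]; simp
  have hsn : ∀ n : ℕ, s ≠ -n := by
    intro n hn
    have := congrArg Complex.re hn
    simp at this
    have := Nat.cast_nonneg (α := ℝ) n
    linarith
  have hfe := riemannZeta_one_sub hsn hs1
  rw [← hρs, hz] at hfe
  have hG := Complex.Gamma_ne_zero hsn
  have hzs := riemannZeta_ne_zero_of_one_le_re hsre
  have hcos : Complex.cos (π * s / 2) = 0 := by
    by_contra hc
    exact (mul_ne_zero (mul_ne_zero (mul_ne_zero (mul_ne_zero two_ne_zero (two_pi_cpow_ne _)) hG) hc) hzs) hfe.symm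
  obtain ⟨k, hk⟩ := cos_zero_int hcos
  have hρk : ρ = ((-2 * k : ℝ) : ℂ) := by rw [hρs, hk]; push_cast; ring
  have hre : ρ.re = -2 * k := by rw [hρk, Complex.ofReal_re]
  refine ⟨by rw [hρk, Complex.ofReal_im], ?_⟩
  have hk0 : k ≠ 0 := by rintro rfl; apply hne; rw [hρk]; simp
  have hk1 : (0:ℝ) ≤ k := by linarith
  have hk2 : (0:ℤ) ≤ k := by exact_mod_cast hk1
  have hk3 : (1:ℤ) ≤ k := by omega
  have hk4 : (1:ℝ) ≤ k := by exact_mod_cast hk3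
  linarith

lemma mu_symm {ρ : ℂ} (h0 : 0 < ρ.re) (h1 : ρ.re < 1) : mu (1 - ρ) = mu ρ := by
  unfold mu analyticOrderNatAt
  congr 1
  have hO : IsOpen {s : ℂ | 0 < s.re ∧ s.re < 1} :=
    (isOpen_lt continuous_const Complex.continuous_re).inter (isOpen_lt Complex.continuous_re continuous_const)
  have e1 : analyticOrderAt (riemannZeta₁ ∘ (fun s => 1 - s)) ρ = analyticOrderAt riemannZeta₁ (1 - ρ) := by
    apply analyticOrderAt_comp_of_deriv_ne_zero
    · exact analyticAt_const.sub analyticAt_id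
    · simp
  let G : ℂ → ℂ := fun s => (-s / (s - 1)) * (2 * (2 * π) ^ (-s) * Complex.Gamma s * Complex.cos (π * s / 2))
  have key : ∀ s ∈ {s : ℂ | 0 < s.re ∧ s.re < 1}, s ≠ 0 ∧ s ≠ 1 ∧ ∀ n : ℕ, s ≠ -n := by
    rintro s ⟨hs0, hs1⟩
    refine ⟨by rintro rfl; simp at hs0, by rintro rfl; simp at hs1, ?_⟩
    intro n hn
    have := congrArg Complex.re hn
    simp at this
    have := Nat.cast_nonneg (α := ℝ) n
    linarith
  have e2 : (riemannZeta₁ ∘ (fun s => 1 - s)) =ᶠ[nhds ρ] (G * riemannZeta₁) := by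
    filter_upwards [hO.mem_nhds ⟨h0, h1⟩] with s hs
    obtain ⟨a, b, c⟩ := key s hs
    have hne : 1 - s ≠ 1 := by intro h; apply a; linear_combination -h
    simp only [Function.comp, Pi.mul_apply, G]
    rw [zeta1_eq_mul hne, riemannZeta_one_sub c b, zeta1_eq_mul b]
    have : s - 1 ≠ 0 := sub_ne_zero.2 b
    field_simp
    ring
  have hGan : AnalyticAt ℂ G ρ := by
    have : DifferentiableOn ℂ G {s : ℂ | 0 < s.re ∧ s.re < 1} := by
      intro s hs
      obtain ⟨a, b, c⟩ := key s hs
      apply DifferentiableAt.differentiableWithinAt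
      have hG : DifferentiableAt ℂ Complex.Gamma s := Complex.differentiableAt_Gamma s c
      have hpi : (2 * π : ℂ) ≠ 0 := by
        have : (π:ℂ) ≠ 0 := by exact_mod_cast Real.pi_ne_zero
        simp [this]
      have hp : DifferentiableAt ℂ (fun s : ℂ => (2 * π : ℂ) ^ (-s)) s :=
        differentiableAt_id.neg.const_cpow (Or.inl hpi)
      have : s - 1 ≠ 0 := sub_ne_zero.2 b
      fun_prop (disch := assumption)
    exact this.analyticAt (hO.mem_nhds ⟨h0, h1⟩)
  have hGne : G ρ ≠ 0 := by
    obtain ⟨a, b, c⟩ := key ρ ⟨h0, h1⟩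
    have hcos : Complex.cos (π * ρ / 2) ≠ 0 := by
      intro hc
      obtain ⟨k, hk⟩ := cos_zero_int hc
      have hre : ρ.re = 2 * k + 1 := by rw [hk]; simp
      rw [hre] at h0 h1
      have hk1 : (k:ℝ) < 0 := by linarith
      have hk2 : k < 0 := by exact_mod_cast hk1
      have hk3 : k ≤ -1 := by omega
      have hk4 : (k:ℝ) ≤ -1 := by exact_mod_cast hk3
      linarith
    exact mul_ne_zero (div_ne_zero (neg_ne_zero.2 a) (sub_ne_zero.2 b))
      (mul_ne_zero (mul_ne_zero (mul_ne_zero two_ne_zero (two_pi_cpow_ne _)) (Complex.Gamma_ne_zero c)) hcos)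
  rw [← e1, analyticOrderAt_congr e2, analyticOrderAt_mul hGan (differentiable_riemannZeta₁.analyticAt ρ),
    hGan.analyticOrderAt_eq_zero.2 hGne, zero_add]

lemma mu_eq_mult {ρ : ℂ} (h1 : ρ ≠ 1) : zetaZeroMultiplicity ρ = mu ρ := by
  have hO : IsOpen {s : ℂ | s ≠ 1} := isOpen_ne
  have han : AnalyticAt ℂ riemannZeta ρ := by
    have : DifferentiableOn ℂ riemannZeta {s : ℂ | s ≠ 1} :=
      fun s hs => (differentiableAt_riemannZeta hs).differentiableWithinAt
    exact this.analyticAt (hO.mem_nhds h1)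
  unfold zetaZeroMultiplicity mu analyticOrderNatAt
  rw [dif_pos han]
  congr 1
  have e2 : riemannZeta₁ =ᶠ[nhds ρ] ((fun s => s - 1) * riemannZeta) := by
    filter_upwards [hO.mem_nhds h1] with s hs
    exact zeta1_eq_mul hs
  have hb : AnalyticAt ℂ (fun s : ℂ => s - 1) ρ := analyticAt_id.sub analyticAt_const
  rw [analyticOrderAt_congr e2, analyticOrderAt_mul hb han,
    hb.analyticOrderAt_eq_zero.2 (sub_ne_zero.2 h1), zero_add]

lemma zeta_two_lower (t : ℝ) : 1/4 ≤ ‖riemannZeta (2 + t * Complex.I)‖ := by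
  have hre : (2 + t * Complex.I : ℂ).re = 2 := by simp
  have h1 := zeta_eq_tsum_one_div_nat_add_one_cpow (s := 2 + t * Complex.I) (by rw [hre]; norm_num)
  have hs := (summable_nat_add_iff 1).2 hasSum_zeta_two.summable
  have hn : ∀ n : ℕ, ‖1 / ((n:ℂ) + 1) ^ (2 + t * Complex.I : ℂ)‖ = 1 / ((n + 1 : ℕ) : ℝ) ^ 2 := by
    intro n
    rw [norm_div, show ((n:ℂ) + 1) = (((n + 1 : ℕ) : ℝ) : ℂ) by push_cast; ring,
      Complex.norm_cpow_eq_rpow_re_of_pos (by positivity), hre]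
    norm_num
  have hsum : Summable (fun n : ℕ => 1 / ((n:ℂ) + 1) ^ (2 + t * Complex.I : ℂ)) := by
    apply Summable.of_norm
    simp_rw [hn]
    exact hs
  have hsum2 := (summable_nat_add_iff 1).2 hsum
  rw [hsum.tsum_eq_zero_add] at h1
  have hs2 := (summable_nat_add_iff 1).2 hs
  have h2 : ‖∑' n : ℕ, 1 / (((n + 1 : ℕ):ℂ) + 1) ^ (2 + t * Complex.I : ℂ)‖ ≤
      ∑' n : ℕ, 1 / ((n + 1 + 1 : ℕ) : ℝ) ^ 2 := by
    refine tsum_of_norm_bounded hs2.hasSum ?_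
    intro n
    rw [hn (n+1)]
  have h3 : ∑' n : ℕ, 1 / ((n + 1 + 1 : ℕ) : ℝ) ^ 2 = π ^ 2 / 6 - 1 := by
    have a1 := hasSum_zeta_two.summable.tsum_eq_zero_add
    have a2 := hs.tsum_eq_zero_add
    rw [hasSum_zeta_two.tsum_eq] at a1
    simp at a1 a2 ⊢
    rw [a1, a2]; ring
  rw [h3] at h2
  rw [h1]
  have h4 : (1 / (((0:ℕ):ℂ) + 1) ^ (2 + t * Complex.I : ℂ)) = 1 := by simp
  rw [h4]
  have h5 := norm_sub_norm_le (1:ℂ) (-∑' n : ℕ, 1 / (((n + 1 : ℕ):ℂ) + 1) ^ (2 + t * Complex.I : ℂ))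
  rw [norm_neg, norm_one, sub_neg_eq_add] at h5
  have hpi : π ^ 2 ≤ 10 := by nlinarith [Real.pi_lt_d2, Real.pi_pos]
  linarith

lemma local_count_right (t : ℝ) (S : Finset ℂ)
    (hS : ∀ ρ ∈ S, 1/2 ≤ ρ.re ∧ ρ.re ≤ 1 ∧ |ρ.im - t| ≤ 1/2) :
    (∑ ρ ∈ S, (mu ρ : ℝ)) * Real.log (9/8) ≤ 4 * Real.log (|t| + 5) := by
  set c : ℂ := 2 + t * Complex.I with hc
  have hc1 : c ≠ 1 := by intro h; have := congrArg Complex.re h; simp [hc] at this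
  have hlow : 1/4 ≤ ‖riemannZeta₁ c‖ := by
    rw [zeta1_eq_mul hc1, norm_mul]
    have h1 := zeta_two_lower t
    have h2 : 1 ≤ ‖c - 1‖ := by
      have := Complex.re_le_norm (c - 1)
      simp [hc] at this
      rw [hc]; linarith
    nlinarith
  have hcn : ‖c‖ ≤ 2 + |t| := by
    refine (norm_add_le _ _).trans ?_
    simp
  have h := count_bound riemannZeta₁ differentiable_riemannZeta₁ (c := c) (r := 8/5)
    (R := 9/5) (M := 6 * (5 + |t|)^2) (by intro h; rw [h] at hlow; norm_num at hlow) (by norm_num) (by norm_num) (by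
      intro z hz
      refine (zeta1_growth_right ?_).trans ?_
      · have h1 := Complex.abs_re_le_norm (z - c)
        rw [hz] at h1
        have := (abs_le.1 h1).1
        simp [hc] at this
        linarith
      · have : ‖z‖ ≤ ‖z - c‖ + ‖c‖ := by simpa using norm_add_le (z - c) c
        have h2 : 1 + ‖z‖ ≤ 5 + |t| := by rw [hz] at this; linarith
        gcongr) S (by
      intro ρ hρ
      obtain ⟨a, b, d⟩ := hS ρ hρ
      rw [Complex.norm_def, Real.sqrt_le_left (by norm_num), Complex.normSq_apply]
      obtain ⟨d1, d2⟩ := abs_le.1 d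
      simp [hc]
      nlinarith)
  rw [show (9/5 / (8/5) : ℝ) = 9/8 by norm_num] at h
  have hN : (∑ ρ ∈ S, (mu ρ : ℝ)) = ((∑ ρ ∈ S, analyticOrderNatAt riemannZeta₁ ρ : ℕ) : ℝ) := by
    push_cast; rfl
  rw [hN]
  generalize (∑ ρ ∈ S, analyticOrderNatAt riemannZeta₁ ρ) = N at *
  rw [← Real.log_pow, show (4:ℝ) = (4:ℕ) by norm_num, ← Real.log_pow]
  apply Real.log_le_log (by positivity)
  have h1 : 1/4 * (9/8:ℝ)^N ≤ ‖riemannZeta₁ c‖ * (9/8)^N := by gcongr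
  have h2 : (9/8:ℝ)^N ≤ 24 * (5 + |t|)^2 := by linarith
  refine h2.trans ?_
  have : 25 ≤ (5 + |t|)^2 := by nlinarith [abs_nonneg t]
  nlinarith

lemma local_count_one (t : ℝ) (S : Finset ℂ)
    (hS : ∀ ρ ∈ S, 0 < ρ.re ∧ ρ.re < 1 ∧ |ρ.im - t| ≤ 1/2) :
    (∑ ρ ∈ S, (mu ρ : ℝ)) * Real.log (9/8) ≤ 8 * Real.log (|t| + 5) := by
  classical
  rw [← sum_filter_add_sum_filter_not S (fun ρ => 1/2 ≤ ρ.re), add_mul]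
  have h1 := local_count_right t (S.filter (fun ρ => 1/2 ≤ ρ.re)) (by
    intro ρ h
    simp only [mem_filter] at h
    obtain ⟨a, b, d⟩ := hS ρ h.1
    exact ⟨h.2, b.le, d⟩)
  have h2 := local_count_right (-t) ((S.filter (fun ρ => ¬ 1/2 ≤ ρ.re)).image (fun ρ => 1 - ρ)) (by
    intro ρ h
    simp only [mem_image, mem_filter] at h
    obtain ⟨ρ', h, rfl⟩ := h
    obtain ⟨a, b, d⟩ := hS ρ' h.1
    have := h.2
    push Not at this
    refine ⟨by simp; linarith, by simp; linarith, ?_⟩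
    rw [abs_sub_comm]
    convert! d using 2
    simp; ring)
  rw [sum_image (by intro a _ b _ hab; simpa using hab), abs_neg] at h2
  have h3 : ∑ ρ ∈ S.filter (fun ρ => ¬ 1/2 ≤ ρ.re), (mu (1 - ρ) : ℝ) =
      ∑ ρ ∈ S.filter (fun ρ => ¬ 1/2 ≤ ρ.re), (mu ρ : ℝ) := by
    apply sum_congr rfl
    intro ρ h
    simp only [mem_filter] at h
    obtain ⟨a, b, d⟩ := hS ρ h.1
    rw [mu_symm a b]
  rw [h3] at h2
  linarith

lemma local_count (t : ℝ) (S : Finset ℂ)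
    (hS : ∀ ρ ∈ S, 0 < ρ.re ∧ ρ.re < 1 ∧ |(|ρ.im|) - t| ≤ 1/2) :
    (∑ ρ ∈ S, (mu ρ : ℝ)) * Real.log (9/8) ≤ 16 * Real.log (|t| + 5) := by
  classical
  rw [← sum_filter_add_sum_filter_not S (fun ρ => 0 ≤ ρ.im), add_mul]
  have h1 := local_count_one t (S.filter (fun ρ => 0 ≤ ρ.im)) (by
    intro ρ h
    simp only [mem_filter] at h
    obtain ⟨a, b, d⟩ := hS ρ h.1
    rw [abs_of_nonneg h.2] at d
    exact ⟨a, b, d⟩)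
  have h2 := local_count_one (-t) (S.filter (fun ρ => ¬ 0 ≤ ρ.im)) (by
    intro ρ h
    simp only [mem_filter, not_le] at h
    obtain ⟨a, b, d⟩ := hS ρ h.1
    rw [abs_of_neg h.2, abs_sub_comm] at d
    refine ⟨a, b, ?_⟩
    convert! d using 2
    ring)
  rw [abs_neg] at h2
  linarith

end TEL

namespace TEL

/-- truncated Perron integral -/
noncomputable def PI (l T : ℝ) (a : ℂ) : ℂ :=
  ∫ y : ℝ in (-T)..T, Complex.exp (l * (2 + y * Complex.I)) / (2 + y * Complex.I - a)

lemma line_ne {a : ℂ} (ha : a.re < 2) (y : ℝ) : (2 + y * Complex.I - a : ℂ) ≠ 0 := by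
  intro h
  have := congrArg Complex.re h
  simp at this
  linarith

lemma PI_cont (l : ℝ) {a : ℂ} (ha : a.re < 2) :
    Continuous (fun y : ℝ => Complex.exp (l * (2 + y * Complex.I)) / (2 + y * Complex.I - a)) := by
  apply Continuous.div (by fun_prop) (by fun_prop)
  intro y; exact line_ne ha y

lemma norm_E (l y : ℝ) : ‖Complex.exp (l * (2 + y * Complex.I))‖ = Real.exp (2 * l) := by
  rw [Complex.norm_exp]
  congr 1
  simp [mul_comm]

lemma PI_eq (l T : ℝ) (a : ℂ) : PI l T a = Complex.exp (l * a) *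
    ∫ y : ℝ in (-T - a.im)..(T - a.im), Complex.exp (l * ((2 - a.re : ℝ) + y * Complex.I)) / ((2 - a.re : ℝ) + y * Complex.I) := by
  rw [← intervalIntegral.integral_comp_sub_right (fun y : ℝ => Complex.exp (l * ((2 - a.re : ℝ) + y * Complex.I)) / ((2 - a.re : ℝ) + y * Complex.I)),
    ← intervalIntegral.integral_const_mul, PI]
  apply intervalIntegral.integral_congr
  intro y _
  simp only []
  have h1 : (2 + y * Complex.I - a : ℂ) = ((2 - a.re : ℝ) : ℂ) + ((y - a.im : ℝ) : ℂ) * Complex.I := by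
    apply Complex.ext <;> simp
  rw [← h1, mul_div_assoc', ← Complex.exp_add]
  congr 2
  ring

lemma PI_bound {l T : ℝ} (hl : 0 < l) (hT : 0 < T) {a : ℂ} (ha : a.re < 2) (hne : |a.im| ≠ T) :
    ‖PI l T a - (if |a.im| < T then 2 * π else 0 : ℝ) * Complex.exp (l * a)‖ ≤
      2 * Real.exp (2 * l) / l / |(|a.im|) - T| := by
  classical
  have hu : -T - a.im ≠ 0 := by
    intro h; apply hne
    rw [show a.im = -T by linarith, abs_neg, abs_of_pos hT]
  have hv : T - a.im ≠ 0 := by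
    intro h; apply hne
    rw [show a.im = T by linarith, abs_of_pos hT]
  have h := kernel_pos l (2 - a.re) (-T - a.im) (T - a.im) hl (by linarith) hu hv (by linarith)
  have hiff : (-T - a.im < 0 ∧ 0 < T - a.im) ↔ |a.im| < T := by
    rw [abs_lt]; constructor <;> rintro ⟨h1, h2⟩ <;> constructor <;> linarith
  simp only [hiff] at h
  have hd : 0 < |(|a.im|) - T| := abs_pos.2 (sub_ne_zero.2 hne)
  have d1 : |(|a.im|) - T| ≤ |-T - a.im| := by
    have := abs_abs_sub_abs_le a.im (-T)
    rw [abs_neg, abs_of_pos hT] at this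
    rwa [abs_sub_comm (-T)]
  have d2 : |(|a.im|) - T| ≤ |T - a.im| := by
    have := abs_abs_sub_abs_le a.im T
    rw [abs_of_pos hT] at this
    rwa [abs_sub_comm T]
  rw [PI_eq, mul_comm (Complex.ofReal (ite _ _ _)), ← mul_sub, norm_mul, Complex.norm_exp]
  have hre : ((l:ℂ) * a).re = l * a.re := by simp
  rw [hre]
  calc _ ≤ Real.exp (l * a.re) * (Real.exp (l * (2 - a.re)) / l * (1 / |-T - a.im| + 1 / |T - a.im|)) := by
        gcongr
    _ = Real.exp (2 * l) / l * (1 / |-T - a.im| + 1 / |T - a.im|) := by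
        have : Real.exp (2 * l) = Real.exp (l * a.re) * Real.exp (l * (2 - a.re)) := by
          rw [← Real.exp_add]; congr 1; ring
        rw [this]; ring
    _ ≤ Real.exp (2 * l) / l * (1 / |(|a.im|) - T| + 1 / |(|a.im|) - T|) := by gcongr
    _ = _ := by ring

lemma PI_tendsto {l : ℝ} (hl : 0 < l) {a : ℂ} (ha : a.re < 2) :
    Tendsto (fun T => PI l T a) atTop (nhds (2 * π * Complex.exp (l * a))) := by
  rw [tendsto_iff_norm_sub_tendsto_zero]
  have h0 : Tendsto (fun T : ℝ => 2 * Real.exp (2 * l) / l / (T - |a.im|)) atTop (nhds 0) := by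
    apply Tendsto.div_atTop tendsto_const_nhds
    exact tendsto_atTop_add_const_right _ _ tendsto_id
  refine squeeze_zero' (Eventually.of_forall fun _ => norm_nonneg _) ?_ h0
  filter_upwards [eventually_gt_atTop (|a.im|)] with T hT
  have hT0 : 0 < T := (abs_nonneg _).trans_lt hT
  have := PI_bound hl hT0 ha hT.ne
  rw [if_pos hT, abs_sub_comm, abs_of_pos (by linarith)] at this
  rw [Complex.ofReal_mul, Complex.ofReal_ofNat] at this
  exact this

lemma PI_direct {l T c : ℝ} (hT : 0 ≤ T) (hc : 0 < c) {a : ℂ} (h : ∀ y : ℝ, c ≤ ‖(2 + y * Complex.I - a : ℂ)‖) :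
    ‖PI l T a‖ ≤ 2 * T * (Real.exp (2 * l) / c) := by
  have := intervalIntegral.norm_integral_le_of_norm_le_const (a := -T) (b := T)
    (f := fun y : ℝ => Complex.exp (l * (2 + y * Complex.I)) / (2 + y * Complex.I - a))
    (C := Real.exp (2 * l) / c) (by
      intro y _
      rw [norm_div, norm_E]
      have := h y
      gcongr)
  rw [PI]
  refine this.trans (le_of_eq ?_)
  rw [abs_of_nonneg (by linarith)]; ring

lemma PI_shift {l T : ℝ} {a : ℂ} (ha : a.re ≤ 1) :
    ‖PI l (T + 2) a - PI l T a‖ ≤ 4 * Real.exp (2 * l) := by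
  have hc := PI_cont l (a := a) (by linarith)
  have hb : ∀ y : ℝ, ‖Complex.exp (l * (2 + y * Complex.I)) / (2 + y * Complex.I - a)‖ ≤ Real.exp (2 * l) := by
    intro y
    rw [norm_div, norm_E]
    apply div_le_self (Real.exp_pos _).le
    have := Complex.re_le_norm (2 + y * Complex.I - a)
    simp at this
    linarith
  have e : PI l (T + 2) a - PI l T a =
      (∫ y : ℝ in (-(T+2))..(-T), Complex.exp (l * (2 + y * Complex.I)) / (2 + y * Complex.I - a)) +
      ∫ y : ℝ in T..(T+2), Complex.exp (l * (2 + y * Complex.I)) / (2 + y * Complex.I - a) := by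
    unfold PI
    rw [← intervalIntegral.integral_add_adjacent_intervals (b := -T) (hc.intervalIntegrable _ _) (hc.intervalIntegrable _ _),
      ← intervalIntegral.integral_add_adjacent_intervals (a := -T) (b := T) (c := T+2) (hc.intervalIntegrable _ _) (hc.intervalIntegrable _ _)]
    ring
  have h1 := intervalIntegral.norm_integral_le_of_norm_le_const (a := -(T+2)) (b := -T) (fun y _ => hb y)
  have h2 := intervalIntegral.norm_integral_le_of_norm_le_const (a := T) (b := T + 2) (fun y _ => hb y)
  rw [show |-T - -(T+2)| = 2 by rw [show -T - -(T+2) = 2 by ring]; norm_num] at h1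
  rw [show |T+2-T| = 2 by rw [show T+2-T = 2 by ring]; norm_num] at h2
  rw [e]
  refine (norm_add_le _ _).trans ?_
  linarith

/-- uniform bound for the strip -/
lemma PI_unif {l T : ℝ} (hl : 0 < l) (hT : 0 < T) {a : ℂ} (ha1 : a.re ≤ 1) :
    ‖PI l T a‖ ≤ 2 * π * Real.exp l + 2 * Real.exp (2 * l) / l + 4 * Real.exp (2 * l) := by
  have main : ∀ T : ℝ, 0 < T → 1 ≤ |(|a.im|) - T| → ‖PI l T a‖ ≤ 2 * π * Real.exp l + 2 * Real.exp (2 * l) / l := by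
    intro T hT hd
    have hne : |a.im| ≠ T := by intro h; rw [h] at hd; norm_num at hd
    have h := PI_bound hl hT (a := a) (by linarith) hne
    have h1 : 2 * Real.exp (2 * l) / l / |(|a.im|) - T| ≤ 2 * Real.exp (2 * l) / l :=
      div_le_self (by positivity) hd
    have h2 : ‖((if |a.im| < T then 2 * π else 0 : ℝ) : ℂ) * Complex.exp (l * a)‖ ≤ 2 * π * Real.exp l := by
      rw [norm_mul, Complex.norm_real, Complex.norm_exp]
      have hre : ((l:ℂ) * a).re = l * a.re := by simp
      rw [hre]
      have : Real.exp (l * a.re) ≤ Real.exp l := Real.exp_le_exp.2 (by nlinarith)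
      have h3 : ‖(if |a.im| < T then 2 * π else 0 : ℝ)‖ ≤ 2 * π := by
        split_ifs
        · rw [Real.norm_eq_abs, abs_of_pos (by positivity)]
        · rw [norm_zero]; positivity
      gcongr
    have h4 := norm_le_norm_sub_add (PI l T a) (((if |a.im| < T then 2 * π else 0 : ℝ) : ℂ) * Complex.exp (l * a))
    linarith
  by_cases hd : 1 ≤ |(|a.im|) - T|
  · have := main T hT hd
    have h5 : 0 < Real.exp (2 * l) := Real.exp_pos _
    linarith
  · push Not at hd
    have h1 := main (T + 2) (by linarith) (by
      rw [le_abs]; right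
      have := (abs_lt.1 hd).2
      linarith)
    have h2 := PI_shift (l := l) (T := T) ha1
    rw [norm_sub_rev] at h2
    have h3 := norm_le_norm_sub_add (PI l T a) (PI l (T+2) a)
    linarith

/-- bound for real negative points -/
lemma PI_triv {l T : ℝ} (hl : 0 < l) (hT : 1 ≤ T) {a : ℂ} (ha0 : a.im = 0) (ha1 : a.re ≤ -2) :
    ‖PI l T a‖ ≤ (2 * Real.exp (2 * l) + 2 * Real.exp (2 * l) / l + 2 * π / l) / ‖a‖ ^ (1/2 : ℝ) := by
  have hn : ‖a‖ = -a.re := by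
    have : a = (a.re : ℂ) := by apply Complex.ext <;> simp [ha0]
    rw [this, Complex.norm_real, Real.norm_eq_abs, abs_of_nonpos (by linarith)]
    simp
  have hpos : 0 < ‖a‖ := by linarith
  rw [← Real.sqrt_eq_rpow]
  set q := Real.sqrt ‖a‖ with hq
  have hq2 : q * q = ‖a‖ := Real.mul_self_sqrt hpos.le
  have hq0 : 0 < q := Real.sqrt_pos.2 hpos
  have hq1 : 1 ≤ q := by rw [hq, Real.one_le_sqrt]; linarith
  rw [le_div_iff₀ hq0]
  have hE := Real.exp_pos (2 * l)
  have hpi := Real.pi_pos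
  by_cases hc : T ≤ q
  · have h := PI_direct (l := l) (T := T) (c := ‖a‖) (a := a) (by linarith) hpos (by
      intro y
      have := Complex.re_le_norm (2 + y * Complex.I - a)
      simp at this
      linarith)
    calc ‖PI l T a‖ * q ≤ (2 * q * (Real.exp (2 * l) / ‖a‖)) * q := by
          gcongr
          refine h.trans ?_
          gcongr
      _ = 2 * Real.exp (2 * l) := by rw [← hq2]; field_simp
      _ ≤ _ := by
        have : 0 ≤ 2 * Real.exp (2 * l) / l + 2 * π / l := by positivity
        linarith
  · push Not at hc
    have h := PI_bound hl (show 0 < T by linarith) (a := a) (by linarith) (by rw [ha0, abs_zero]; linarith)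
    rw [ha0, abs_zero, if_pos (by linarith), zero_sub, abs_neg, abs_of_pos (by linarith : 0 < T)] at h
    have h4 := norm_le_norm_sub_add (PI l T a) (((2 * π : ℝ) : ℂ) * Complex.exp (l * a))
    have h5 : ‖((2 * π : ℝ) : ℂ) * Complex.exp (l * a)‖ ≤ 2 * π / l / (q * q) := by
      rw [norm_mul, Complex.norm_real, Complex.norm_exp, Real.norm_eq_abs, abs_of_pos (by positivity)]
      have hre : ((l:ℂ) * a).re = -(l * ‖a‖) := by simp [hn]
      rw [hre, Real.exp_neg, hq2, div_div, div_eq_mul_inv (2 * π)]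
      gcongr
      linarith [Real.add_one_le_exp (l * ‖a‖)]
    have h6 : 2 * Real.exp (2 * l) / l / T ≤ 2 * Real.exp (2 * l) / l / q := by gcongr
    have h7 : 2 * π / l / (q * q) ≤ 2 * π / l / q := by
      apply div_le_div_of_nonneg_left (by positivity) hq0; nlinarith
    have h8 : ‖PI l T a‖ ≤ (2 * Real.exp (2 * l) / l + 2 * π / l) / q := by
      rw [add_div]; linarith
    calc ‖PI l T a‖ * q ≤ (2 * Real.exp (2 * l) / l + 2 * π / l) / q * q := by gcongr
      _ = 2 * Real.exp (2 * l) / l + 2 * π / l := by field_simp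
      _ ≤ _ := by linarith

end TEL

namespace TEL

lemma tannery {β : Type*} {f : ℝ → β → ℂ} {g : β → ℂ} {b : β → ℝ} (hb : Summable b) (F : Finset β)
    (hlim : ∀ k, Tendsto (fun T => f T k) atTop (nhds (g k)))
    (h : ∀ᶠ T in atTop, ∀ k, k ∉ F → ‖f T k‖ ≤ b k) :
    Tendsto (fun T => ∑' k, f T k) atTop (nhds (∑' k, g k)) := by
  classical
  have hF : ∀ᶠ T in atTop, ∀ k ∈ F, ‖f T k‖ ≤ ‖g k‖ + 1 := by
    rw [Filter.eventually_all_finset]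
    intro k _
    have := (hlim k).norm.eventually (gt_mem_nhds (show ‖g k‖ < ‖g k‖ + 1 by linarith))
    filter_upwards [this] with T hT using hT.le
  refine tendsto_tsum_of_dominated_convergence (bound := fun k => if k ∈ F then ‖g k‖ + 1 else b k) ?_ hlim ?_
  · refine hb.congr_cofinite ?_
    rw [EventuallyEq, eventually_cofinite]
    refine F.finite_toSet.subset ?_
    intro k hk
    by_contra h0
    apply hk
    have h0 : k ∉ F := h0
    simp [h0]
  · filter_upwards [h, hF] with T h1 h2 k
    split_ifs with hk
    · exact h2 k hk
    · exact h1 k hk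

lemma swap {ι : Type*} (F : ι → ℝ → ℂ) (b : ι → ℝ) (f : ℝ → ℂ) {T : ℝ} (hT : 0 ≤ T) (hF : ∀ i, Continuous (F i))
    (hb : Summable b) (h : ∀ i, ∀ y, |y| ≤ T → ‖F i y‖ ≤ b i) (hs : ∀ y, HasSum (fun i => F i y) (f y)) :
    HasSum (fun i => ∫ y in (-T)..T, F i y) (∫ y in (-T)..T, f y) := by
  have hcount := hb.countable_support
  set s := Function.support b with hsdef
  have : Countable s := hcount
  have hz : ∀ i, i ∉ s → ∀ y, |y| ≤ T → F i y = 0 := by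
    intro i hi y hy
    have := h i y hy
    rw [Function.notMem_support.1 hi] at this
    simpa using this
  have habs : ∀ y ∈ Set.uIoc (-T) T, |y| ≤ T := by
    intro y hy
    rw [Set.uIoc_of_le (by linarith)] at hy
    exact abs_le.2 ⟨hy.1.le, hy.2⟩
  have h1 : HasSum (fun i : s => ∫ y in (-T)..T, F i y) (∫ y in (-T)..T, f y) := by
    apply intervalIntegral.hasSum_integral_of_dominated_convergence (fun (i : s) _ => b i)
    · intro i; exact (hF i).aestronglyMeasurable
    · intro i; filter_upwards with y hy using h i y (habs y hy)
    · filter_upwards with y hy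
      exact hb.subtype s
    · exact intervalIntegrable_const
    · filter_upwards with y hy
      have : Function.support (fun i => F i y) ⊆ s := by
        intro i hi
        by_contra h0
        exact hi (hz i h0 y (habs y hy))
      exact (hasSum_subtype_iff_of_support_subset this).2 (hs y)
  refine (hasSum_subtype_iff_of_support_subset (f := fun i => ∫ y in (-T)..T, F i y) ?_).1 h1
  intro i hi
  by_contra h0
  apply hi
  have : ∫ y in (-T)..T, F i y = ∫ y in (-T)..T, (0:ℂ) := by
    apply intervalIntegral.integral_congr_ae
    filter_upwards with y hy using hz i h0 y (habs y hy)
  simp only [this]; simp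

lemma PI_neg_bound {r T : ℝ} (hr : r < 0) (hT : 0 < T) : ‖PI r T 0‖ ≤ Real.exp (2 * r) / |r| * (2 / T) := by
  have h := kernel_neg r 2 (-T) T hr (by norm_num) (by linarith) (by linarith) (by linarith)
  rw [abs_neg, abs_of_pos hT] at h
  unfold PI
  simp only [sub_zero]
  rw [Complex.ofReal_ofNat] at h
  refine h.trans (le_of_eq ?_)
  rw [mul_comm 2 r]; ring

lemma PI_zero_eq {T : ℝ} : PI 0 T 0 = ((2 * Real.arctan (T / 2) : ℝ) : ℂ) := by
  have hc : Continuous (fun y : ℝ => (1:ℂ) / (2 + y * Complex.I)) := by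
    apply Continuous.div (by fun_prop) (by fun_prop)
    intro y
    simpa using line_ne (a := 0) (by simp) y
  have hc2 : Continuous (fun y : ℝ => (1:ℂ) / (2 + ((-y : ℝ) : ℂ) * Complex.I)) := hc.comp continuous_neg
  have h1 : PI 0 T 0 = ∫ y in (-T)..T, (1:ℂ) / (2 + y * Complex.I) := by unfold PI; simp
  have h2 : (∫ y in (-T)..T, (1:ℂ) / (2 + ((-y : ℝ) : ℂ) * Complex.I)) = ∫ y in (-T)..T, (1:ℂ) / (2 + y * Complex.I) := by
    rw [intervalIntegral.integral_comp_neg (fun y : ℝ => (1:ℂ) / (2 + y * Complex.I))]; simp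
  have h3 : PI 0 T 0 + PI 0 T 0 = ∫ y in (-T)..T, (((4 / (4 + y^2) : ℝ)) : ℂ) := by
    conv_lhs => arg 2; rw [h1, ← h2]
    rw [h1, ← intervalIntegral.integral_add (hc.intervalIntegrable _ _) (hc2.intervalIntegrable _ _)]
    apply intervalIntegral.integral_congr
    intro y _
    simp only []
    have a1 := line_ne (a := 0) (by simp) y
    have a2 := line_ne (a := 0) (by simp) (-y)
    rw [sub_zero] at a1 a2
    have a3 : (4 + y^2 : ℂ) ≠ 0 := by
      have : (4 + y^2 : ℝ) ≠ 0 := by positivity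
      exact_mod_cast this
    rw [div_add_div _ _ a1 a2]
    push_cast
    have e : (2 + y * Complex.I) * (2 + -(y:ℂ) * Complex.I) = 4 + y^2 := by
      linear_combination (-(y:ℂ)^2) * Complex.I_sq
    rw [e]; congr 1; ring
  have h4 : ∫ y in (-T)..T, (4 / (4 + y^2) : ℝ) = 2 * Real.arctan (T/2) - 2 * Real.arctan (-T/2) := by
    rw [intervalIntegral.integral_eq_sub_of_hasDerivAt (f := fun y => 2 * Real.arctan (y / 2))]
    · intro y _
      have := ((Real.hasDerivAt_arctan (y/2)).comp y ((hasDerivAt_id y).div_const 2)).const_mul 2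
      convert! this using 1
      field_simp
      ring
    · apply Continuous.intervalIntegrable
      apply Continuous.div (by fun_prop) (by fun_prop)
      intro y; positivity
  rw [intervalIntegral.integral_ofReal, h4, neg_div, Real.arctan_neg] at h3
  push_cast at h3 ⊢
  linear_combination (1/2) * h3

/-- the limit weights -/
noncomputable def dl (r : ℝ) : ℝ := if 0 < r then 1 else if r = 0 then 1/2 else 0

lemma PI_dl (r : ℝ) : Tendsto (fun T => PI r T 0) atTop (nhds ((2 * π * dl r : ℝ) : ℂ)) := by
  rcases lt_trichotomy r 0 with h | h | h
  · have : dl r = 0 := by unfold dl; rw [if_neg (by linarith), if_neg (by linarith)]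
    rw [this, mul_zero, Complex.ofReal_zero]
    apply squeeze_zero_norm' (a := fun T => Real.exp (2 * r) / |r| * (2 / T))
    · filter_upwards [eventually_gt_atTop 0] with T hT using PI_neg_bound h hT
    · rw [← mul_zero (Real.exp (2 * r) / |r|)]
      exact (Tendsto.div_atTop tendsto_const_nhds tendsto_id).const_mul _
  · subst h
    simp_rw [PI_zero_eq]
    have : dl 0 = 1/2 := by simp [dl]
    rw [this]
    apply (Complex.continuous_ofReal.tendsto _).comp
    have h1 : Tendsto (fun T : ℝ => Real.arctan (T / 2)) atTop (nhds (π/2)) :=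
      (tendsto_nhds_of_tendsto_nhdsWithin Real.tendsto_arctan_atTop).comp (tendsto_id.atTop_div_const (by norm_num))
    convert h1.const_mul 2 using 2
    ring
  · have : dl r = 1 := by unfold dl; rw [if_pos h]
    rw [this]
    have h1 := PI_tendsto h (a := 0) (by simp)
    convert h1 using 2
    push_cast; simp

open ArithmeticFunction in
lemma lam_summable : Summable (fun n : ℕ => vonMangoldt n / (n:ℝ)^2) := by
  have h := (LSeriesSummable_vonMangoldt (s := 2) (by norm_num)).norm
  refine h.congr ?_
  intro n
  rw [LSeries.term_def]
  split_ifs with h0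
  · simp [h0]
  · rw [norm_div, Complex.norm_real, Real.norm_eq_abs, abs_of_nonneg vonMangoldt_nonneg, Complex.norm_natCast_cpow_of_pos (Nat.pos_of_ne_zero h0)]
    norm_num

open ArithmeticFunction in
lemma lam_swap (l : ℝ) {T : ℝ} (hT : 0 ≤ T) :
    HasSum (fun n : ℕ => (vonMangoldt n : ℂ) * PI (l - Real.log n) T 0)
      (∫ y : ℝ in (-T)..T, Complex.exp (l * (2 + y * Complex.I)) / (2 + y * Complex.I) *
        LSeries (fun n => (vonMangoldt n : ℂ)) (2 + y * Complex.I)) := by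
  have h := swap (fun (n : ℕ) (y : ℝ) => (vonMangoldt n : ℂ) * (Complex.exp ((l - Real.log n : ℝ) * (2 + y * Complex.I)) / (2 + y * Complex.I - 0)))
    (fun n => Real.exp (2 * l) * (vonMangoldt n / (n:ℝ)^2))
    (fun y : ℝ => Complex.exp (l * (2 + y * Complex.I)) / (2 + y * Complex.I) *
        LSeries (fun n => (vonMangoldt n : ℂ)) (2 + y * Complex.I)) hT ?_ (lam_summable.mul_left _) ?_ ?_
  · convert h using 2 with n
    rw [PI, intervalIntegral.integral_const_mul]
  · intro n
    exact continuous_const.mul (PI_cont _ (by simp))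
  · intro n y _
    rcases Nat.eq_zero_or_pos n with h0 | h0
    · simp [h0]
    · rw [norm_mul, Complex.norm_real, Real.norm_eq_abs, abs_of_nonneg vonMangoldt_nonneg, norm_div, norm_E]
      have hn : (0:ℝ) < n := by exact_mod_cast h0
      have e : Real.exp (2 * (l - Real.log n)) = Real.exp (2 * l) / (n:ℝ)^2 := by
        rw [mul_sub, Real.exp_sub]
        congr 1
        rw [mul_comm, Real.exp_mul, Real.exp_log hn]; norm_num
      rw [e]
      have h1 : 1 ≤ ‖(2 + y * Complex.I - 0 : ℂ)‖ := by
        have := Complex.re_le_norm (2 + y * Complex.I - 0)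
        simp at this ⊢
        linarith
      calc _ ≤ vonMangoldt n * (Real.exp (2 * l) / (n:ℝ)^2) := by
            refine mul_le_mul_of_nonneg_left ?_ vonMangoldt_nonneg
            exact div_le_self (by positivity) h1
        _ = _ := by ring
  · intro y
    have hre : 1 < (2 + y * Complex.I : ℂ).re := by simp
    have h1 := LSeriesSummable.LSeriesHasSum (LSeriesSummable_vonMangoldt hre)
    have h2 := h1.mul_left (Complex.exp (l * (2 + y * Complex.I)) / (2 + y * Complex.I))
    refine h2.congr_fun ?_
    intro n
    rw [LSeries.term_def]
    split_ifs with h0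
    · simp [h0]
    · have hn : (n:ℂ) ≠ 0 := by exact_mod_cast h0
      rw [Complex.cpow_def_of_ne_zero hn, sub_zero, ← Complex.natCast_log]
      push_cast
      rw [sub_mul, Complex.exp_sub]
      ring

open ArithmeticFunction in
lemma lam_limit (l : ℝ) :
    Tendsto (fun T => ∑' n : ℕ, (vonMangoldt n : ℂ) * PI (l - Real.log n) T 0) atTop
      (nhds (∑' n : ℕ, (vonMangoldt n : ℂ) * ((2 * π * dl (l - Real.log n) : ℝ) : ℂ))) := by
  refine tannery (b := fun n => (2 * Real.exp (2 * l) / Real.log 2) * (vonMangoldt n / (n:ℝ)^2)) (lam_summable.mul_left _)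
    (range (⌈2 * Real.exp l⌉₊ + 1)) (fun n => (PI_dl _).const_mul _) ?_
  filter_upwards [eventually_ge_atTop 1] with T hT n hn
  have h1 : 2 * Real.exp l ≤ n := by
    have : ⌈2 * Real.exp l⌉₊ ≤ n := by simp at hn; omega
    exact Nat.ceil_le.1 this
  have hn0 : (0:ℝ) < n := lt_of_lt_of_le (by positivity) h1
  have h2 : Real.log 2 + l ≤ Real.log n := by
    have := Real.log_le_log (by positivity) h1
    rwa [Real.log_mul (by norm_num) (by positivity), Real.log_exp] at this
  have hl2 : 0 < Real.log 2 := Real.log_pos (by norm_num)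
  have hr : l - Real.log n < 0 := by linarith
  have h3 := PI_neg_bound hr (show 0 < T by linarith)
  rw [norm_mul, Complex.norm_real, Real.norm_eq_abs, abs_of_nonneg vonMangoldt_nonneg]
  have e : Real.exp (2 * (l - Real.log n)) = Real.exp (2 * l) / (n:ℝ)^2 := by
    rw [mul_sub, Real.exp_sub]
    congr 1
    rw [mul_comm, Real.exp_mul, Real.exp_log hn0]; norm_num
  rw [e] at h3
  have h4 : Real.log 2 ≤ |l - Real.log n| := by rw [abs_of_neg hr]; linarith
  have h5 : 2 / T ≤ 2 := div_le_self (by norm_num) hT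
  calc _ ≤ vonMangoldt n * (Real.exp (2 * l) / (n:ℝ)^2 / Real.log 2 * 2) := by
        refine mul_le_mul_of_nonneg_left (h3.trans ?_) vonMangoldt_nonneg
        gcongr
    _ = _ := by ring

end TEL

namespace TEL

lemma zero_re_lt {ρ : ℂ} (h : riemannZeta₁ ρ = 0) : ρ.re < 1 := by
  by_contra h2; exact zeta1_ne_of_one_le (not_lt.1 h2) h

lemma mu_re {ρ : ℂ} (h : mu ρ ≠ 0) : ρ.re < 1 := zero_re_lt ((mu_ne_zero_iff ρ).1 h)

lemma zero_swap (l : ℝ) {T : ℝ} (hT : 0 ≤ T) :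
    HasSum (fun ρ : ℂ => (mu ρ : ℂ) / ρ * PI l T ρ)
      (∫ y : ℝ in (-T)..T, Complex.exp (l * (2 + y * Complex.I)) / (2 + y * Complex.I) *
        (logDeriv riemannZeta₁ (2 + y * Complex.I) - (-1 + Real.log (2 * π)))) := by
  have h := swap (fun (ρ : ℂ) (y : ℝ) => (mu ρ : ℂ) / ρ * (Complex.exp (l * (2 + y * Complex.I)) / (2 + y * Complex.I - ρ)))
    (fun ρ => (2 * (2 + T) * Real.exp (2 * l)) * ((mu ρ : ℝ) / ‖ρ‖^2))
    (fun y : ℝ => Complex.exp (l * (2 + y * Complex.I)) / (2 + y * Complex.I) *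
        (logDeriv riemannZeta₁ (2 + y * Complex.I) - (-1 + Real.log (2 * π)))) hT ?_ (mu_summable_two.mul_left _) ?_ ?_
  · convert h using 2 with n
    rw [PI, intervalIntegral.integral_const_mul]
  · intro ρ
    by_cases h0 : mu ρ = 0
    · simp only [h0, Nat.cast_zero, zero_div, zero_mul]; exact continuous_const
    · exact continuous_const.mul (PI_cont _ (by linarith [mu_re h0]))
  · intro ρ y hy
    by_cases h0 : mu ρ = 0
    · simp [h0]
    have hre := mu_re h0
    have hρ0 : ρ ≠ 0 := by rintro rfl; exact zeta1_zero_ne ((mu_ne_zero_iff 0).1 h0)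
    have hρ : 0 < ‖ρ‖ := norm_pos_iff.2 hρ0
    have hge1 : 1 ≤ ‖(2 + y * Complex.I - ρ : ℂ)‖ := by
      have := Complex.re_le_norm (2 + y * Complex.I - ρ)
      simp at this
      linarith
    have hsn : ‖(2 + y * Complex.I : ℂ)‖ ≤ 2 + T := by
      refine (norm_add_le _ _).trans ?_
      simp; exact hy
    have hd : ‖ρ‖ / (2 * (2 + T)) ≤ ‖(2 + y * Complex.I - ρ : ℂ)‖ := by
      rw [div_le_iff₀ (by positivity)]
      have h3 := norm_sub_norm_le ρ (2 + y * Complex.I)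
      rw [norm_sub_rev] at h3
      by_cases hc : ‖ρ‖ ≤ 2 * (2 + T)
      · nlinarith
      · push Not at hc
        nlinarith
    rw [norm_mul, norm_div, norm_div, norm_E, Complex.norm_natCast]
    have hTp : 0 < 2 * (2 + T) := by positivity
    calc _ ≤ (mu ρ : ℝ) / ‖ρ‖ * (Real.exp (2 * l) / (‖ρ‖ / (2 * (2 + T)))) := by gcongr
      _ = _ := by field_simp
  · intro y
    have hne : riemannZeta₁ (2 + y * Complex.I) ≠ 0 := zeta1_ne_of_one_le (by simp)
    have h2 := (hadamard_zeta hne).mul_left (Complex.exp (l * (2 + y * Complex.I)) / (2 + y * Complex.I))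
    refine h2.congr_fun ?_
    intro ρ
    by_cases h0 : mu ρ = 0
    · simp [h0]
    have hre := mu_re h0
    have hρ0 : ρ ≠ 0 := by rintro rfl; exact zeta1_zero_ne ((mu_ne_zero_iff 0).1 h0)
    have a1 := line_ne (a := ρ) (by linarith) y
    have a2 := line_ne (a := 0) (by simp) y
    rw [sub_zero] at a2
    field_simp
    ring

lemma logDeriv_zeta1 (y : ℝ) : logDeriv riemannZeta₁ (2 + y * Complex.I) =
    1 / (2 + y * Complex.I - 1) - LSeries (fun n => (ArithmeticFunction.vonMangoldt n : ℂ)) (2 + y * Complex.I) := by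
  set s : ℂ := 2 + y * Complex.I with hs
  have hre : 1 < s.re := by simp [hs]
  have hs1 : s ≠ 1 := by rintro h; rw [h] at hre; simp at hre
  have hz : riemannZeta s ≠ 0 := riemannZeta_ne_zero_of_one_le_re hre.le
  rw [ArithmeticFunction.LSeries_vonMangoldt_eq_deriv_riemannZeta_div hre]
  have e : riemannZeta₁ =ᶠ[nhds s] fun s => (s - 1) * riemannZeta s := by
    filter_upwards [isOpen_ne.mem_nhds hs1] with s hs
    exact zeta1_eq_mul hs
  have h2 := ((hasDerivAt_id s).sub_const 1).mul (differentiableAt_riemannZeta hs1).hasDerivAt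
  have h3 := h2.deriv
  rw [logDeriv_apply, e.deriv_eq, e.eq_of_nhds,
    show (fun s => (s - 1) * riemannZeta s) = ((fun x => id x - 1) * riemannZeta) from rfl, h3]
  simp only [Pi.mul_apply, id]
  have := sub_ne_zero.2 hs1
  field_simp
  ring

lemma logDeriv_cont : Continuous (fun y : ℝ => logDeriv riemannZeta₁ (2 + y * Complex.I)) := by
  unfold logDeriv
  have h1 : Continuous (deriv riemannZeta₁) :=
    (differentiable_riemannZeta₁.contDiff (n := 1)).continuous_deriv le_rfl
  have h2 : Continuous riemannZeta₁ := differentiable_riemannZeta₁.continuous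
  have hl : Continuous (fun y : ℝ => (2 + y * Complex.I : ℂ)) := by fun_prop
  apply Continuous.div (h1.comp hl) (h2.comp hl)
  intro y
  exact zeta1_ne_of_one_le (by simp)

open ArithmeticFunction in
lemma explicit_T (l : ℝ) {T : ℝ} (hT : 0 ≤ T) :
    HasSum (fun ρ : ℂ => (mu ρ : ℂ) / ρ * PI l T ρ)
      (PI l T 1 - Real.log (2 * π) * PI l T 0 - ∑' n : ℕ, (vonMangoldt n : ℂ) * PI (l - Real.log n) T 0) := by
  have h1 := zero_swap l hT
  have h2 := lam_swap l hT
  convert h1 using 1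
  rw [h2.tsum_eq]
  have c1 := PI_cont l (a := 1) (by simp)
  have c0 := PI_cont l (a := 0) (by simp)
  have e : ∀ y : ℝ, Complex.exp (l * (2 + y * Complex.I)) / (2 + y * Complex.I) *
        LSeries (fun n => (vonMangoldt n : ℂ)) (2 + y * Complex.I) =
      Complex.exp (l * (2 + y * Complex.I)) / (2 + y * Complex.I - 1) -
      (Real.log (2 * π) : ℂ) * (Complex.exp (l * (2 + y * Complex.I)) / (2 + y * Complex.I - 0)) -
      Complex.exp (l * (2 + y * Complex.I)) / (2 + y * Complex.I) *
        (logDeriv riemannZeta₁ (2 + y * Complex.I) - (-1 + Real.log (2 * π))) := by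
    intro y
    rw [logDeriv_zeta1]
    have a1 := line_ne (a := 1) (by simp) y
    have a2 := line_ne (a := 0) (by simp) y
    rw [sub_zero] at a2
    rw [sub_zero]
    field_simp
    ring
  simp_rw [e]
  have c2 : Continuous (fun y : ℝ => Complex.exp (l * (2 + y * Complex.I)) / (2 + y * Complex.I) *
        (logDeriv riemannZeta₁ (2 + y * Complex.I) - (-1 + Real.log (2 * π)))) := by
    have c0' := c0
    simp only [sub_zero] at c0'
    exact c0'.mul (logDeriv_cont.sub continuous_const)
  have c3 : Continuous (fun y : ℝ => (Real.log (2 * π) : ℂ) *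
      (Complex.exp (l * (2 + y * Complex.I)) / (2 + y * Complex.I - 0))) := continuous_const.mul c0
  have c4 : Continuous (fun y : ℝ => Complex.exp (l * (2 + y * Complex.I)) / (2 + y * Complex.I - 1) -
      (Real.log (2 * π) : ℂ) *
      (Complex.exp (l * (2 + y * Complex.I)) / (2 + y * Complex.I - 0))) := c1.sub c3
  rw [intervalIntegral.integral_sub (c4.intervalIntegrable _ _) (c2.intervalIntegrable _ _),
    intervalIntegral.integral_sub (c1.intervalIntegrable _ _) (c3.intervalIntegrable _ _),
    intervalIntegral.integral_const_mul]
  unfold PI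
  ring

/-- the counting part -/
noncomputable def V (l : ℝ) : ℂ := ∑' n : ℕ, (ArithmeticFunction.vonMangoldt n : ℂ) * ((2 * π * dl (l - Real.log n) : ℝ) : ℂ)

lemma explicit_lim {l : ℝ} (hl : 0 < l) :
    Tendsto (fun T => ∑' ρ : ℂ, (mu ρ : ℂ) / ρ * PI l T ρ) atTop
      (nhds (2 * π * Complex.exp l - Real.log (2 * π) * (2 * π) - V l)) := by
  have h1 := PI_tendsto hl (a := 1) (by simp)
  have h0 := PI_tendsto hl (a := 0) (by simp)
  rw [mul_one] at h1
  rw [mul_zero, Complex.exp_zero, mul_one] at h0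
  have h := (h1.sub (h0.const_mul (Real.log (2 * π) : ℂ))).sub (lam_limit l)
  refine h.congr' ?_
  filter_upwards [eventually_ge_atTop 0] with T hT
  exact (explicit_T l hT).tsum_eq.symm

end TEL

namespace TEL

lemma zero_norm_le {ρ : ℂ} (h : mu ρ ≠ 0) (h0 : 0 < ρ.re) : ‖ρ‖ ≤ 1 + |ρ.im| := by
  have h1 := mu_re h
  have := Complex.norm_le_abs_re_add_abs_im ρ
  rw [abs_of_pos h0] at this
  linarith

/-- difference between the truncated Perron integral and its residue -/
noncomputable def DD (l T : ℝ) (ρ : ℂ) : ℂ :=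
  (mu ρ : ℂ) / ρ * (PI l T ρ - (if |ρ.im| ≤ T then 2 * π * Complex.exp (l * ρ) else 0))

open Classical in
noncomputable def trv (l T : ℝ) (ρ : ℂ) : ℂ :=
  if ρ.re ≤ 0 then (mu ρ : ℂ) / ρ * PI l T ρ else 0

open Classical in
noncomputable def mnt (l T : ℝ) (ρ : ℂ) : ℂ :=
  if 0 < ρ.re ∧ |ρ.im| ≤ T then (mu ρ : ℂ) / ρ * (2 * π * Complex.exp (l * ρ)) else 0

open Classical in
noncomputable def near (l T : ℝ) (ρ : ℂ) : ℂ :=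
  if 0 < ρ.re ∧ |(|ρ.im|) - T| ≤ √T then DD l T ρ else 0

open Classical in
noncomputable def far (l T : ℝ) (ρ : ℂ) : ℂ :=
  if 0 < ρ.re ∧ √T < |(|ρ.im|) - T| then DD l T ρ else 0

lemma decomp (l T : ℝ) (ρ : ℂ) : (mu ρ : ℂ) / ρ * PI l T ρ =
    trv l T ρ + far l T ρ + near l T ρ + mnt l T ρ := by
  unfold trv far near mnt
  by_cases h : ρ.re ≤ 0
  · simp [h, not_lt.2 h]
  · have h' := not_le.1 h
    by_cases h2 : |(|ρ.im|) - T| ≤ √T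
    · by_cases h3 : |ρ.im| ≤ T
      · simp only [h, h', h2, h3, not_lt.2 h2, DD, and_true, and_false, if_true, if_false]; ring
      · simp only [h, h', h2, h3, not_lt.2 h2, DD, and_true, and_false, if_true, if_false]; ring
    · by_cases h3 : |ρ.im| ≤ T
      · simp only [h, h', h2, h3, not_le.1 h2, DD, and_true, and_false, if_true, if_false]; ring
      · simp only [h, h', h2, h3, not_le.1 h2, DD, and_true, and_false, if_true, if_false]; ring

lemma far_bound {l T : ℝ} (hl : 0 < l) (hT : 1 ≤ T) (ρ : ℂ) :
    ‖far l T ρ‖ ≤ (mu ρ : ℝ) / ‖ρ‖ * (2 * Real.exp (2 * l) / l) / √T := by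
  have hK : 0 ≤ (mu ρ : ℝ) / ‖ρ‖ * (2 * Real.exp (2 * l) / l) := by positivity
  have hs : 0 < √T := Real.sqrt_pos.2 (by linarith)
  unfold far
  split_ifs with h
  · by_cases hm : mu ρ = 0
    · simp [DD, hm]
    · have hne : |ρ.im| ≠ T := by
        intro h0
        rw [h0, sub_self, abs_zero] at h
        linarith [h.2]
      have hb := PI_bound hl (by linarith : (0:ℝ) < T) (a := ρ) (by linarith [mu_re hm]) hne
      unfold DD
      have e : (if |ρ.im| ≤ T then 2 * π * Complex.exp (l * ρ) else 0 : ℂ) =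
          (if |ρ.im| < T then 2*π else 0 : ℝ) * Complex.exp (l*ρ) := by
        by_cases h3 : |ρ.im| ≤ T
        · simp [h3, lt_of_le_of_ne h3 hne]
        · simp [h3, not_lt.2 (not_le.1 h3).le]
      rw [e, norm_mul, norm_div, Complex.norm_natCast, mul_div_assoc]
      apply mul_le_mul_of_nonneg_left _ (by positivity)
      refine hb.trans ?_
      apply div_le_div_of_nonneg_left (by positivity) hs h.2.le
  · simp; positivity

lemma far_bound2 {l T : ℝ} (hl : 0 < l) (hT : 1 ≤ T) (ρ : ℂ) :
    ‖far l T ρ‖ ≤ 2 * (2 * Real.exp (2 * l) / l) * ((mu ρ : ℝ) / ‖ρ‖ ^ (3/2 : ℝ)) := by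
  have hs : 1 ≤ √T := by rw [← Real.sqrt_one]; exact Real.sqrt_le_sqrt hT
  unfold far
  split_ifs with h
  · by_cases hm : mu ρ = 0
    · simp [DD, hm]
    · have hne : |ρ.im| ≠ T := by
        intro h0
        rw [h0, sub_self, abs_zero] at h
        linarith [h.2]
      have hb := PI_bound hl (by linarith : (0:ℝ) < T) (a := ρ) (by linarith [mu_re hm]) hne
      unfold DD
      have e : (if |ρ.im| ≤ T then 2 * π * Complex.exp (l * ρ) else 0 : ℂ) =
          (if |ρ.im| < T then 2*π else 0 : ℝ) * Complex.exp (l*ρ) := by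
        by_cases h3 : |ρ.im| ≤ T
        · simp [h3, lt_of_le_of_ne h3 hne]
        · simp [h3, not_lt.2 (not_le.1 h3).le]
      rw [e, norm_mul, norm_div, Complex.norm_natCast]
      set d := |(|ρ.im|) - T| with hd
      have hρ : 0 < ‖ρ‖ := by
        rw [norm_pos_iff]; rintro rfl; simp at h
      have hn := zero_norm_le hm h.1
      have h1 : |ρ.im| ≤ T + d := by linarith [le_abs_self (|ρ.im| - T)]
      have hd1 : 1 < d := lt_of_le_of_lt hs h.2
      have hT2 : T ≤ d ^ 2 := by
        have := Real.sq_sqrt (show 0 ≤ T by linarith)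
        nlinarith [h.2]
      have h4 : ‖ρ‖ ≤ (2 * d) ^ 2 := by nlinarith
      have h5 : √‖ρ‖ ≤ 2 * d := by
        rw [Real.sqrt_le_left (by linarith)]; exact h4
      have hsq : 0 < √‖ρ‖ := Real.sqrt_pos.2 hρ
      have h6 : ‖ρ‖ ^ (3/2 : ℝ) = ‖ρ‖ * √‖ρ‖ := by
        rw [Real.sqrt_eq_rpow, show (3/2 : ℝ) = 1 + 1/2 by norm_num, Real.rpow_add hρ, Real.rpow_one]
      rw [h6]
      have h7 : 2 * Real.exp (2 * l) / l / d ≤ (2 * Real.exp (2 * l) / l) * (2 / √‖ρ‖) := by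
        rw [div_eq_mul_inv]
        apply mul_le_mul_of_nonneg_left _ (by positivity)
        rw [inv_eq_one_div, div_le_div_iff₀ (by linarith) hsq]
        linarith
      calc _ ≤ (mu ρ : ℝ) / ‖ρ‖ * ((2 * Real.exp (2 * l) / l) * (2 / √‖ρ‖)) :=
            mul_le_mul_of_nonneg_left (hb.trans h7) (by positivity)
        _ = _ := by field_simp
  · simp; positivity

lemma far_summable {l T : ℝ} (hl : 0 < l) (hT : 1 ≤ T) : Summable (far l T) :=
  Summable.of_norm_bounded (mu_summable.mul_left _) (far_bound2 hl hT)

lemma far_tendsto {l : ℝ} (hl : 0 < l) : Tendsto (fun T => ∑' ρ, far l T ρ) atTop (nhds 0) := by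
  have h := tannery (f := far l) (g := fun _ => 0)
    (mu_summable.mul_left (2 * (2 * Real.exp (2 * l) / l))) ∅ ?_ ?_
  · simpa using h
  · intro ρ
    rw [tendsto_zero_iff_norm_tendsto_zero]
    refine squeeze_zero' (g := fun T => (mu ρ : ℝ) / ‖ρ‖ * (2 * Real.exp (2 * l) / l) / √T)
      (Eventually.of_forall fun T => norm_nonneg _) ?_ ?_
    · filter_upwards [eventually_ge_atTop 1] with T hT using far_bound hl hT ρ
    · exact tendsto_const_nhds.div_atTop Real.tendsto_sqrt_atTop
  · filter_upwards [eventually_ge_atTop 1] with T hT k _ using far_bound2 hl hT k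

open Classical in
noncomputable def trl (l : ℝ) (ρ : ℂ) : ℂ :=
  if ρ.re ≤ 0 then (mu ρ : ℂ) / ρ * (2 * π * Complex.exp (l * ρ)) else 0

lemma trv_tendsto {l : ℝ} (hl : 0 < l) :
    Tendsto (fun T => ∑' ρ, trv l T ρ) atTop (nhds (∑' ρ, trl l ρ)) := by
  refine tannery (f := trv l) (mu_summable.mul_left (2*Real.exp (2*l) + 2*Real.exp (2*l)/l + 2*π/l)) ∅ ?_ ?_
  · intro ρ
    unfold trv trl
    by_cases h : ρ.re ≤ 0
    · simp only [h, if_true]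
      exact (PI_tendsto hl (by linarith)).const_mul _
    · simp only [h, if_false]; exact tendsto_const_nhds
  · filter_upwards [eventually_ge_atTop 1] with T hT ρ _
    unfold trv
    split_ifs with h
    · by_cases hm : mu ρ = 0
      · simp [hm]
      · rcases zero_class ((mu_ne_zero_iff ρ).1 hm) with h1 | h1
        · linarith
        · have hb := PI_triv hl hT h1.1 h1.2
          have hρ : 0 < ‖ρ‖ := by
            rw [norm_pos_iff]; rintro rfl; simp at h1; linarith
          have h6 : ‖ρ‖ ^ (3/2 : ℝ) = ‖ρ‖ * ‖ρ‖ ^ (1/2:ℝ) := by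
            rw [show (3/2 : ℝ) = 1 + 1/2 by norm_num, Real.rpow_add hρ, Real.rpow_one]
          rw [norm_mul, norm_div, Complex.norm_natCast, h6]
          have h7 : 0 < ‖ρ‖ ^ (1/2:ℝ) := Real.rpow_pos_of_pos hρ _
          calc _ ≤ (mu ρ : ℝ) / ‖ρ‖ * _ := mul_le_mul_of_nonneg_left hb (by positivity)
            _ = _ := by field_simp
    · simp; positivity

/-- the trivial zeros contribute a nonpositive real number -/
lemma trl_real (l : ℝ) : ∃ r : ℝ, r ≤ 0 ∧ ∑' ρ, trl l ρ = (r : ℂ) := by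
  have h : ∀ ρ, ∃ r : ℝ, r ≤ 0 ∧ trl l ρ = (r : ℂ) := by
    intro ρ
    unfold trl
    split_ifs with h
    · by_cases hm : mu ρ = 0
      · exact ⟨0, le_rfl, by simp [hm]⟩
      · rcases zero_class ((mu_ne_zero_iff ρ).1 hm) with h1 | h1
        · linarith
        · have e : ρ = (ρ.re : ℂ) := by apply Complex.ext <;> simp [h1.1]
          refine ⟨(mu ρ : ℝ) / ρ.re * (2 * π * Real.exp (l * ρ.re)), ?_, ?_⟩
          · apply mul_nonpos_of_nonpos_of_nonneg
            · exact div_nonpos_of_nonneg_of_nonpos (by positivity) (by linarith)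
            · positivity
          · conv_lhs => rw [e]
            simp only [Complex.ofReal_mul, Complex.ofReal_div, Complex.ofReal_exp, Complex.ofReal_natCast,
              Complex.ofReal_ofNat, ← e]
    · exact ⟨0, le_rfl, by simp⟩
  choose r hr he using h
  refine ⟨∑' ρ, r ρ, tsum_nonpos hr, ?_⟩
  rw [Complex.ofReal_tsum]
  exact tsum_congr he

end TEL

namespace TEL

open Classical in
noncomputable def NS (T : ℝ) : Finset ℂ :=
  (Z (2 * T + 2)).filter (fun ρ => 0 < ρ.re ∧ |(|ρ.im|) - T| ≤ √T)

lemma near_support {l T : ℝ} (hT : 1 ≤ T) (ρ : ℂ) (h : ρ ∉ NS T) : near l T ρ = 0 := by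
  unfold near
  split_ifs with h1
  · by_cases hm : mu ρ = 0
    · simp [DD, hm]
    · exfalso
      apply h
      unfold NS
      rw [Finset.mem_filter, mem_Z]
      refine ⟨⟨(mu_ne_zero_iff ρ).1 hm, ?_⟩, h1⟩
      have := zero_norm_le hm h1.1
      have h2 := (abs_le.1 h1.2).2
      have h3 : √T ≤ T := by
        rw [Real.sqrt_le_left (by linarith)]; nlinarith
      linarith
  · rfl

lemma NS_count {T : ℝ} (hT : 4 ≤ T) :
    (∑ ρ ∈ NS T, (mu ρ : ℝ)) ≤ 64 / Real.log (9/8) * (√T * Real.log (4 * T)) := by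
  classical
  have hs2 : 2 ≤ √T := by
    rw [Real.le_sqrt (by norm_num) (by linarith)]; linarith
  have hsq := Real.sq_sqrt (show 0 ≤ T by linarith)
  have hst : 2 * √T ≤ T := by nlinarith
  have hl9 : 0 < Real.log (9/8) := Real.log_pos (by norm_num)
  have hlT : 0 ≤ Real.log (4 * T) := Real.log_nonneg (by linarith)
  set I := Finset.Icc ⌊T - √T⌋₊ ⌊T + √T⌋₊ with hI
  have hmap : ∀ ρ ∈ NS T, ⌊|ρ.im|⌋₊ ∈ I := by
    intro ρ hρ
    unfold NS at hρ
    rw [Finset.mem_filter] at hρ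
    have h := abs_le.1 hρ.2.2
    rw [hI, Finset.mem_Icc]
    exact ⟨Nat.floor_le_floor (by linarith), Nat.floor_le_floor (by linarith)⟩
  rw [← Finset.sum_fiberwise_of_maps_to hmap]
  have hk : ∀ k ∈ I, ∑ ρ ∈ NS T with ⌊|ρ.im|⌋₊ = k, (mu ρ : ℝ) ≤ 16 * Real.log (4 * T) / Real.log (9/8) := by
    intro k hk
    rw [le_div_iff₀ hl9]
    have hkT : (k:ℝ) ≤ T + √T := by
      rw [hI, Finset.mem_Icc] at hk
      exact (Nat.cast_le.2 hk.2).trans (Nat.floor_le (by linarith))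
    refine (local_count ((k:ℝ) + 1/2) _ ?_).trans ?_
    · intro ρ hρ
      rw [Finset.mem_filter] at hρ
      obtain ⟨h1, h2⟩ := hρ
      unfold NS at h1
      rw [Finset.mem_filter, mem_Z] at h1
      refine ⟨h1.2.1, mu_re ((mu_ne_zero_iff ρ).2 h1.1.1), ?_⟩
      have h3 := Nat.floor_le (abs_nonneg ρ.im)
      have h4 := Nat.lt_floor_add_one |ρ.im|
      rw [h2] at h3 h4
      rw [abs_le]
      constructor <;> linarith
    · apply mul_le_mul_of_nonneg_left _ (by norm_num)
      apply Real.log_le_log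
      · positivity
      · rw [abs_of_nonneg (by positivity)]
        linarith
  refine (Finset.sum_le_card_nsmul _ _ _ hk).trans ?_
  rw [nsmul_eq_mul]
  have hc : (I.card : ℝ) ≤ 4 * √T := by
    rw [hI, Nat.card_Icc]
    have h1 := Nat.floor_le (show 0 ≤ T + √T by linarith)
    have h2 := Nat.lt_floor_add_one (T - √T)
    have h3 : ⌊T - √T⌋₊ ≤ ⌊T + √T⌋₊ + 1 := (Nat.floor_le_floor (by linarith)).trans (Nat.le_succ _)
    rw [Nat.cast_sub h3]
    push_cast
    linarith
  calc (I.card : ℝ) * (16 * Real.log (4 * T) / Real.log (9/8)) ≤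
      (4 * √T) * (16 * Real.log (4 * T) / Real.log (9/8)) :=
        mul_le_mul_of_nonneg_right hc (by positivity)
    _ = _ := by ring

lemma near_bound {l T : ℝ} (hl : 0 < l) (hT : 4 ≤ T) :
    ‖∑' ρ, near l T ρ‖ ≤ (2*π*Real.exp l + 2*Real.exp (2*l)/l + 4*Real.exp (2*l) + 2*π*Real.exp l) * 2 *
      (64 / Real.log (9/8)) * (Real.log (4 * T) / √T) := by
  have hs2 : 2 ≤ √T := by
    rw [Real.le_sqrt (by norm_num) (by linarith)]; linarith
  have hsq := Real.sq_sqrt (show 0 ≤ T by linarith)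
  have hst : 2 * √T ≤ T := by nlinarith
  set K := 2*π*Real.exp l + 2*Real.exp (2*l)/l + 4*Real.exp (2*l) + 2*π*Real.exp l with hK
  have hK0 : 0 < K := by positivity
  rw [tsum_eq_sum (s := NS T) (fun ρ h => near_support (by linarith) ρ h)]
  refine (norm_sum_le _ _).trans ?_
  have h1 : ∀ ρ ∈ NS T, ‖near l T ρ‖ ≤ (mu ρ : ℝ) * (K * 2 / T) := by
    intro ρ hρ
    unfold NS at hρ
    rw [Finset.mem_filter, mem_Z] at hρ
    have hm := (mu_ne_zero_iff ρ).2 hρ.1.1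
    have hre := mu_re hm
    unfold near
    rw [if_pos hρ.2]
    unfold DD
    rw [norm_mul, norm_div, Complex.norm_natCast]
    have hu := PI_unif hl (by linarith : (0:ℝ) < T) hre.le
    have h2 : ‖(if |ρ.im| ≤ T then 2 * π * Complex.exp (l * ρ) else 0 : ℂ)‖ ≤ 2*π*Real.exp l := by
      split_ifs
      · rw [norm_mul, norm_mul, Complex.norm_exp, Complex.norm_real, Complex.norm_ofNat, Real.norm_of_nonneg Real.pi_pos.le]
        apply mul_le_mul_of_nonneg_left _ (by positivity)
        apply Real.exp_le_exp.2
        simp only [Complex.mul_re, Complex.ofReal_re, Complex.ofReal_im, zero_mul, sub_zero]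
        nlinarith
      · simp; positivity
    have h3 : ‖PI l T ρ - (if |ρ.im| ≤ T then 2 * π * Complex.exp (l * ρ) else 0)‖ ≤ K :=
      (norm_sub_le _ _).trans (by rw [hK]; linarith)
    have h4 : T / 2 ≤ ‖ρ‖ := by
      have := (abs_le.1 hρ.2.2).1
      have := Complex.abs_im_le_norm ρ
      linarith
    have h5 : (mu ρ : ℝ) / ‖ρ‖ ≤ (mu ρ : ℝ) / (T/2) :=
      div_le_div_of_nonneg_left (by positivity) (by linarith) h4
    calc _ ≤ (mu ρ : ℝ) / (T/2) * K := mul_le_mul h5 h3 (norm_nonneg _) (by positivity)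
      _ = _ := by field_simp
  refine (Finset.sum_le_sum h1).trans ?_
  rw [← Finset.sum_mul]
  have := mul_le_mul_of_nonneg_right (NS_count hT) (show 0 ≤ K * 2 / T by positivity)
  refine this.trans (le_of_eq ?_)
  have hT' : T = √T * √T := by rw [← hsq]; ring_nf; simp
  have hs0 : √T ≠ 0 := by positivity
  have hl9 : 0 < Real.log (9/8) := Real.log_pos (by norm_num)
  have e : K * 2 / T = K * 2 / (√T * √T) := by rw [← hT']
  rw [e]
  field_simp

lemma log_sqrt_tendsto : Tendsto (fun T : ℝ => Real.log (4 * T) / √T) atTop (nhds 0) := by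
  have h1 : Tendsto (fun T : ℝ => Real.log T / √T) atTop (nhds 0) := by
    have := (isLittleO_log_rpow_atTop (show (0:ℝ) < 1/2 by norm_num)).tendsto_div_nhds_zero
    simpa only [Real.sqrt_eq_rpow] using this
  have h2 : Tendsto (fun T : ℝ => Real.log 4 / √T) atTop (nhds 0) :=
    tendsto_const_nhds.div_atTop Real.tendsto_sqrt_atTop
  have := h2.add h1
  rw [add_zero] at this
  refine this.congr' ?_
  filter_upwards [eventually_gt_atTop 0] with T hT
  rw [Real.log_mul (by norm_num) hT.ne']
  ring

lemma near_tendsto {l : ℝ} (hl : 0 < l) : Tendsto (fun T => ∑' ρ, near l T ρ) atTop (nhds 0) := by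
  rw [tendsto_zero_iff_norm_tendsto_zero]
  have := log_sqrt_tendsto.const_mul ((2*π*Real.exp l + 2*Real.exp (2*l)/l + 4*Real.exp (2*l) + 2*π*Real.exp l) * 2 *
      (64 / Real.log (9/8)))
  rw [mul_zero] at this
  refine squeeze_zero' (Eventually.of_forall fun T => norm_nonneg _) ?_ this
  filter_upwards [eventually_ge_atTop 4] with T hT using near_bound hl hT

open Classical in
noncomputable def MS (T : ℝ) : Finset ℂ :=
  (Z (T + 1)).filter (fun ρ => 0 < ρ.re ∧ |ρ.im| ≤ T)

lemma mnt_support {l T : ℝ} (ρ : ℂ) (h : ρ ∉ MS T) : mnt l T ρ = 0 := by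
  unfold mnt
  split_ifs with h1
  · by_cases hm : mu ρ = 0
    · simp [hm]
    · exfalso
      apply h
      unfold MS
      rw [Finset.mem_filter, mem_Z]
      refine ⟨⟨(mu_ne_zero_iff ρ).1 hm, ?_⟩, h1⟩
      have := zero_norm_le hm h1.1
      linarith
  · rfl

lemma mnt_tendsto {l : ℝ} (hl : 0 < l) : Tendsto (fun T => ∑' ρ, mnt l T ρ) atTop
    (nhds (2 * π * Complex.exp l - Real.log (2 * π) * (2 * π) - V l - ∑' ρ, trl l ρ)) := by
  have h := (((explicit_lim hl).sub (trv_tendsto hl)).sub (far_tendsto hl)).sub (near_tendsto hl)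
  rw [sub_zero, sub_zero] at h
  refine h.congr' ?_
  filter_upwards [eventually_ge_atTop 1] with T hT
  have s1 : Summable (trv l T) := by
    classical
    have := (explicit_T l (show 0 ≤ T by linarith)).summable.indicator {ρ : ℂ | ρ.re ≤ 0}
    refine this.congr ?_
    intro ρ
    unfold trv
    simp only [Set.indicator_apply, Set.mem_setOf_eq]
  have s2 := far_summable hl hT
  have s3 : Summable (near l T) := summable_of_ne_finset_zero (s := NS T) (fun ρ h => near_support hT ρ h)
  have s4 : Summable (mnt l T) := summable_of_ne_finset_zero (s := MS T) (fun ρ h => mnt_support ρ h)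
  rw [tsum_congr (decomp l T), ((s1.add s2).add s3).tsum_add s4, (s1.add s2).tsum_add s3, s1.tsum_add s2]
  ring

lemma V_real (l : ℝ) : V l = ((2 * π * ∑' n : ℕ, ArithmeticFunction.vonMangoldt n * dl (l - Real.log n) : ℝ) : ℂ) := by
  unfold V
  rw [← tsum_mul_left, Complex.ofReal_tsum]
  apply tsum_congr
  intro n
  rw [← Complex.ofReal_mul]
  congr 1
  ring

lemma V_le {x : ℝ} (hx : 1 < x) :
    ∑' n : ℕ, ArithmeticFunction.vonMangoldt n * dl (Real.log x - Real.log n) ≤ Chebyshev.psi x := by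
  have h0 : ∀ n : ℕ, n ∉ Finset.Ioc 0 ⌊x⌋₊ → ArithmeticFunction.vonMangoldt n * dl (Real.log x - Real.log n) = 0 := by
    intro n hn
    rw [Finset.mem_Ioc, not_and_or] at hn
    rcases Nat.eq_zero_or_pos n with rfl | hp
    · simp
    · have h1 : ⌊x⌋₊ < n := by
        rcases hn with h | h
        · exact absurd hp h
        · exact not_le.1 h
      have h2 : x < n := (Nat.floor_lt (by linarith)).1 h1
      have h3 : Real.log x < Real.log n := Real.log_lt_log (by linarith) h2
      unfold dl
      rw [if_neg (by linarith), if_neg (by linarith)]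
      ring
  rw [tsum_eq_sum h0, Chebyshev.psi]
  apply Finset.sum_le_sum
  intro n _
  have : dl (Real.log x - Real.log n) ≤ 1 := by
    unfold dl; split_ifs <;> norm_num
  calc _ ≤ ArithmeticFunction.vonMangoldt n * 1 :=
        mul_le_mul_of_nonneg_left this ArithmeticFunction.vonMangoldt_nonneg
    _ = _ := mul_one _

/-- The limit of the sum over nontrivial zeros exists and is bounded below. -/
lemma main_limit {x : ℝ} (hx : 1 < x) : ∃ L : ℝ,
    Tendsto (fun T : ℝ => ∑ ρ ∈ MS T, (mu ρ : ℂ) / ρ * Complex.exp (Real.log x * ρ)) atTop (nhds (L : ℂ)) ∧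
    x - Real.log (2 * π) - Chebyshev.psi x ≤ L := by
  have hl : 0 < Real.log x := Real.log_pos hx
  obtain ⟨r, hr, he⟩ := trl_real (Real.log x)
  set v := ∑' n : ℕ, ArithmeticFunction.vonMangoldt n * dl (Real.log x - Real.log n) with hv
  have hp : (2 * π : ℂ) ≠ 0 := by
    have := Real.pi_ne_zero
    simpa using this
  refine ⟨x - Real.log (2 * π) - v - r / (2 * π), ?_, ?_⟩
  · have h := (mnt_tendsto hl).div_const (2 * π : ℂ)
    have e1 : (fun T => (∑' ρ, mnt (Real.log x) T ρ) / (2 * π : ℂ)) =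
        fun T : ℝ => ∑ ρ ∈ MS T, (mu ρ : ℂ) / ρ * Complex.exp (Real.log x * ρ) := by
      funext T
      rw [tsum_eq_sum (s := MS T) (fun ρ h => mnt_support ρ h), Finset.sum_div]
      apply Finset.sum_congr rfl
      intro ρ hρ
      unfold MS at hρ
      rw [Finset.mem_filter] at hρ
      unfold mnt
      rw [if_pos hρ.2]
      field_simp
    rw [e1, he, V_real, ← hv, ← Complex.ofReal_exp, Real.exp_log (by linarith)] at h
    convert h using 2
    simp only [Complex.ofReal_sub, Complex.ofReal_mul, Complex.ofReal_div, Complex.ofReal_ofNat]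
    field_simp
  · have h1 := V_le hx
    have h2 : r / (2 * π) ≤ 0 := div_nonpos_of_nonpos_of_nonneg hr (by positivity)
    linarith

end TEL

namespace TEL

/-- primes below 256 -/
def smallPrimes : List ℕ := [2, 3, 5, 7, 11, 13, 17, 19, 23, 29, 31, 37, 41, 43, 47, 53, 59, 61, 67, 71, 73, 79,
  83, 89, 97, 101, 103, 107, 109, 113, 127, 131, 137, 139, 149, 151, 157, 163, 167, 173, 179, 181, 191, 193,
  197, 199, 211, 223, 227, 229, 233, 239, 241, 251]

lemma mem_smallPrimes {p : ℕ} (hp : p.Prime) (h : p < 256) : p ∈ smallPrimes := by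
  by_contra hn
  have key : ∀ p < 256, p ∉ smallPrimes → p < 2 ∨ ∃ d ∈ [2, 3, 5, 7, 11, 13], d < p ∧ p % d = 0 := by decide +kernel
  rcases key p h hn with h2 | ⟨d, hd, hlt, hm⟩
  · exact absurd hp.two_le (by omega)
  · have h1 := (Nat.dvd_prime hp).1 (Nat.dvd_of_mod_eq_zero hm)
    have h2 : 2 ≤ d := by
      simp only [List.mem_cons, List.not_mem_nil, or_false] at hd
      omega
    omega

/-- product of the primes with `p ^ j < N` -/
def rootPrimorial (N j : ℕ) : ℕ := (smallPrimes.filter (fun p => p ^ j < N)).prod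

lemma smallPrimes_nodup : smallPrimes.Nodup := by decide +kernel

lemma smallPrimes_pos : ∀ p ∈ smallPrimes, 1 ≤ p := by decide +kernel

lemma theta_root_le {x : ℝ} (hx : 0 ≤ x) {k j : ℕ} (hk : k + 1 ≤ 24) (hj : 3 ≤ j) (hxk : x < 2 ^ (k + 1)) :
    Chebyshev.theta (x ^ ((1:ℝ) / j)) ≤ Real.log (rootPrimorial (2 ^ (k + 1)) j) := by
  rw [Chebyshev.theta_eq_log_primorial]
  apply Real.log_le_log
  · exact_mod_cast primorial_pos _
  · norm_cast
    have e : rootPrimorial (2 ^ (k + 1)) j =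
        ∏ p ∈ (smallPrimes.filter (fun p => p ^ j < 2 ^ (k + 1))).toFinset, p := by
      rw [List.prod_toFinset _ (smallPrimes_nodup.filter _)]
      simp [rootPrimorial]
    rw [e, primorial]
    apply Finset.prod_le_prod_of_subset_of_one_le'
    · intro p hp
      rw [Finset.mem_filter, Finset.mem_range] at hp
      rw [List.mem_toFinset, List.mem_filter]
      have h1 : (p:ℝ) ≤ x ^ ((1:ℝ)/j) := (Nat.le_floor_iff (by positivity)).1 (Nat.lt_succ_iff.1 hp.1)
      have h2 : (p:ℝ) ^ j ≤ x := by
        calc (p:ℝ) ^ j ≤ (x ^ ((1:ℝ)/j)) ^ j := pow_le_pow_left₀ (by positivity) h1 j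
          _ = x := by
            rw [one_div]; exact Real.rpow_inv_natCast_pow hx (by omega)
      have h3 : p ^ j < 2 ^ (k + 1) := by
        have : (p:ℝ) ^ j < 2 ^ (k + 1) := lt_of_le_of_lt h2 hxk
        exact_mod_cast this
      refine ⟨mem_smallPrimes hp.2 ?_, by simpa using h3⟩
      by_contra h
      have h4 : 256 ^ 3 ≤ p ^ j := by
        calc 256 ^ 3 ≤ p ^ 3 := Nat.pow_le_pow_left (by omega) 3
          _ ≤ p ^ j := Nat.pow_le_pow_right (by omega) hj
      have h5 : 2 ^ (k + 1) ≤ 2 ^ 24 := Nat.pow_le_pow_right (by norm_num) hk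
      norm_num at h4 h5
      omega
    · intro p hp _
      rw [List.mem_toFinset, List.mem_filter] at hp
      exact smallPrimes_pos p hp.1

def qtab : List ℕ := [3, 3, 4, 6, 7, 9, 12, 15, 19, 24, 30, 38, 48, 60, 76, 96, 120, 152, 192, 241, 304, 384, 483, 609]

def rootProd (k : ℕ) : ℕ := ((List.range' 3 22).map (fun j => rootPrimorial (2 ^ (k + 1)) j)).prod

lemma check_tab : ∀ k < 24, 0 < qtab.getD k 0 ∧ (qtab.getD k 0) ^ 3 ≤ 27 * 2 ^ k ∧ 0 < rootProd k ∧
    rootProd k * 10 ^ (qtab.getD k 0) ≤ 27 ^ (qtab.getD k 0) := by decide +kernel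

lemma log_27 : Real.log (27/10) < 1 := by
  rw [Real.log_lt_iff_lt_exp (by norm_num)]
  linarith [Real.exp_one_gt_d9]

lemma elem_small {x : ℝ} (h2 : 2 ≤ x) (h24 : x < 2 ^ 24) :
    Chebyshev.psi x - Chebyshev.theta x - Chebyshev.theta (x ^ ((1:ℝ)/2)) < 3 * x ^ ((1:ℝ)/3) := by
  obtain ⟨k, hk1, hk2⟩ : ∃ k : ℕ, (2:ℝ) ^ k ≤ x ∧ x < 2 ^ (k + 1) :=
    exists_nat_pow_near (by linarith) (by norm_num)
  have hk24 : k < 24 := by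
    have : (2:ℝ) ^ k < 2 ^ 24 := lt_of_le_of_lt hk1 h24
    exact (pow_lt_pow_iff_right₀ (by norm_num)).1 this
  obtain ⟨q, q0, q1, q2, q3⟩ : ∃ q : ℕ, 0 < q ∧ q ^ 3 ≤ 27 * 2 ^ k ∧ 0 < rootProd k ∧
    rootProd k * 10 ^ q ≤ 27 ^ q := ⟨_, check_tab k hk24⟩
  have hl2 : 0 < Real.log 2 := Real.log_pos (by norm_num)
  have hN : ⌊Real.log x / Real.log 2⌋₊ ≤ 24 := by
    apply Nat.floor_le_of_le
    rw [div_le_iff₀ hl2]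
    have := Real.log_le_log (by linarith) h24.le
    rw [Real.log_pow] at this
    exact_mod_cast this
  rw [Chebyshev.psi_eq_theta_add_sum_theta' h2 hN, ← Finset.add_sum_Ioc_eq_sum_Icc (by norm_num)]
  have hb : ∑ n ∈ Finset.Ioc 2 24, Chebyshev.theta (x ^ ((1:ℝ)/(n:ℕ))) ≤ Real.log (rootProd k) := by
    have e : Real.log (rootProd k) = ∑ n ∈ Finset.Ioc 2 24, Real.log (rootPrimorial (2 ^ (k + 1)) n) := by
      have hp : ∀ n, (rootPrimorial (2 ^ (k + 1)) n : ℝ) ≠ 0 := by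
        intro n
        have : rootPrimorial (2 ^ (k + 1)) n ≠ 0 := by
          unfold rootPrimorial
          intro h
          rw [List.prod_eq_zero_iff, List.mem_filter] at h
          exact absurd (smallPrimes_pos 0 h.1) (by norm_num)
        exact_mod_cast this
      rw [← Real.log_prod (fun n _ => hp n), ← Nat.cast_prod]
      congr 2
    rw [e]
    apply Finset.sum_le_sum
    intro n hn
    rw [Finset.mem_Ioc] at hn
    exact theta_root_le (by linarith) (by omega) (by omega) hk2
  have hq : Real.log (rootProd k) < q := by
    have h1 : (rootProd k : ℝ) ≤ (27/10) ^ q := by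
      rw [div_pow, le_div_iff₀ (by positivity)]
      exact_mod_cast q3
    have h3 := Real.log_le_log (by exact_mod_cast q2) h1
    rw [Real.log_pow] at h3
    have : (0:ℝ) < q := by exact_mod_cast q0
    have h4 := mul_lt_mul_of_pos_left log_27 this
    rw [mul_one] at h4
    exact lt_of_le_of_lt h3 h4
  have hq3 : (q:ℝ) ≤ 3 * x ^ ((1:ℝ)/3) := by
    apply le_of_pow_le_pow_left₀ (n := 3) (by norm_num) (by positivity)
    have h1 : (x ^ ((1:ℝ)/3)) ^ 3 = x := by
      rw [one_div]; exact Real.rpow_inv_natCast_pow (by linarith) (by norm_num)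
    rw [mul_pow, h1]
    have : (q:ℝ)^3 ≤ 27 * 2 ^ k := by exact_mod_cast q1
    linarith
  have e2 : Chebyshev.theta (x ^ ((1:ℝ)/(2:ℕ))) = Chebyshev.theta (x ^ ((1:ℝ)/2)) := by norm_num
  rw [e2]
  have hfin := lt_of_le_of_lt hb (lt_of_lt_of_le hq hq3)
  clear hb hq hq3 q1 q2 q3
  linarith

lemma elem_large {x : ℝ} (h24 : 2 ^ 24 ≤ x) :
    Chebyshev.psi x - Chebyshev.theta x - Chebyshev.theta (x ^ ((1:ℝ)/2)) < 3 * x ^ ((1:ℝ)/3) := by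
  have hx0 : 0 < x := lt_of_lt_of_le (by positivity) h24
  have hx1 : 1 ≤ x := le_trans (by norm_num) h24
  have hl2 : 0 < Real.log 2 := Real.log_pos (by norm_num)
  set u := x ^ ((1:ℝ)/12) with hu
  have hpow : ∀ m : ℕ, u ^ m = x ^ ((m:ℝ)/12) := by
    intro m
    rw [hu, ← Real.rpow_mul_natCast hx0.le]
    congr 1; ring
  have hu4 : 4 ≤ u := by
    apply le_of_pow_le_pow_left₀ (n := 12) (by norm_num) (by positivity)
    rw [hpow]
    norm_num at h24 ⊢
    exact h24
  have hux : Real.log x = 12 * Real.log u := by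
    rw [hu, Real.log_rpow hx0]; ring
  have hL : Real.log u ≤ u / 2 * Real.log 2 := by
    have h1 : Real.log u = Real.log 4 + Real.log (u / 4) := by
      rw [← Real.log_mul (by norm_num) (by positivity)]; congr 1; ring
    have h2 : Real.log 4 = 2 * Real.log 2 := by
      rw [show (4:ℝ) = 2 ^ 2 by norm_num, Real.log_pow]; norm_num
    have h3 := Real.log_le_sub_one_of_pos (show 0 < u / 4 by positivity)
    have h4 := Real.log_two_gt_d9
    nlinarith
  set N := ⌊Real.log x / Real.log 2⌋₊ with hN
  have hN1 : (N:ℝ) ≤ 6 * u := by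
    have := Nat.floor_le (show 0 ≤ Real.log x / Real.log 2 from div_nonneg (Real.log_nonneg hx1) hl2.le)
    refine this.trans ?_
    rw [div_le_iff₀ hl2, hux]
    linarith
  have hN2 : 24 ≤ N := by
    apply Nat.le_floor
    rw [le_div_iff₀ hl2]
    have := Real.log_le_log (by positivity) h24
    rw [Real.log_pow] at this
    exact_mod_cast this
  have hth : ∀ j m : ℕ, 0 < j → 12 ≤ m * j → Chebyshev.theta (x ^ ((1:ℝ)/j)) ≤ Real.log 4 * u ^ m := by
    intro j m hj hm
    refine (Chebyshev.theta_le_log4_mul_x (by positivity)).trans ?_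
    apply mul_le_mul_of_nonneg_left _ (Real.log_nonneg (by norm_num))
    rw [hpow]
    apply Real.rpow_le_rpow_of_exponent_le hx1
    rw [div_le_div_iff₀ (by exact_mod_cast hj) (by norm_num)]
    have : (12:ℝ) ≤ m * j := by exact_mod_cast hm
    linarith
  rw [Chebyshev.psi_eq_theta_add_sum_theta (by linarith), ← Finset.add_sum_Ioc_eq_sum_Icc (by omega),
    ← Finset.sum_Ioc_consecutive _ (show 2 ≤ 11 by norm_num) (show 11 ≤ N by omega)]
  have hA : ∑ n ∈ Finset.Ioc 2 11, Chebyshev.theta (x ^ ((1:ℝ)/(n:ℕ))) ≤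
      Real.log 4 * (u ^ 4 + 2 * u ^ 3 + 6 * u ^ 2) := by
    have e : Finset.Ioc 2 11 = ({3, 4, 5, 6, 7, 8, 9, 10, 11} : Finset ℕ) := by decide
    rw [e]
    simp only [Finset.sum_insert, Finset.mem_insert, Finset.mem_singleton, Finset.sum_singleton,
      Nat.reduceEqDiff, or_self, not_false_eq_true]
    have h3 := hth 3 4 (by norm_num) (by norm_num)
    have h4 := hth 4 3 (by norm_num) (by norm_num)
    have h5 := hth 5 3 (by norm_num) (by norm_num)
    have h6 := hth 6 2 (by norm_num) (by norm_num)
    have h7 := hth 7 2 (by norm_num) (by norm_num)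
    have h8 := hth 8 2 (by norm_num) (by norm_num)
    have h9 := hth 9 2 (by norm_num) (by norm_num)
    have h10 := hth 10 2 (by norm_num) (by norm_num)
    have h11 := hth 11 2 (by norm_num) (by norm_num)
    linarith
  have hB : ∑ n ∈ Finset.Ioc 11 N, Chebyshev.theta (x ^ ((1:ℝ)/(n:ℕ))) ≤ (N - 11) * (Real.log 4 * u) := by
    have h := Finset.sum_le_card_nsmul (Finset.Ioc 11 N) (fun n : ℕ => Chebyshev.theta (x ^ ((1:ℝ)/n)))
      (Real.log 4 * u) (fun n hn => by
        rw [Finset.mem_Ioc] at hn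
        have := hth n 1 (by omega) (by omega)
        rwa [pow_one] at this)
    rw [Nat.card_Ioc, nsmul_eq_mul, Nat.cast_sub (by omega)] at h
    exact_mod_cast h
  have e2 : Chebyshev.theta (x ^ ((1:ℝ)/(2:ℕ))) = Chebyshev.theta (x ^ ((1:ℝ)/2)) := by norm_num
  rw [e2]
  have e3 : x ^ ((1:ℝ)/3) = u ^ 4 := by rw [hpow]; norm_num
  rw [e3]
  have hl4 : Real.log 4 < 1.3863 := by
    have h2 : Real.log 4 = 2 * Real.log 2 := by
      rw [show (4:ℝ) = 2 ^ 2 by norm_num, Real.log_pow]; norm_num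
    have := Real.log_two_lt_d9
    linarith
  have hl40 : 0 < Real.log 4 := Real.log_pos (by norm_num)
  have hB2 : (N - 11) * (Real.log 4 * u) ≤ (6 * u - 11) * (Real.log 4 * u) :=
    mul_le_mul_of_nonneg_right (by linarith) (by positivity)
  have hfin : Real.log 4 * (u ^ 4 + 2 * u ^ 3 + 6 * u ^ 2) + (6 * u - 11) * (Real.log 4 * u) < 3 * u ^ 4 := by
    have e : Real.log 4 * (u ^ 4 + 2 * u ^ 3 + 6 * u ^ 2) + (6 * u - 11) * (Real.log 4 * u) =
      Real.log 4 * (u * (u ^ 3 + 2 * u ^ 2 + 12 * u - 11)) := by ring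
    have hp : 0 < u ^ 3 + 2 * u ^ 2 + 12 * u - 11 := by nlinarith [pow_pos (show 0 < u by linarith) 3]
    have h1 : 1.3863 * (u ^ 3 + 2 * u ^ 2 + 12 * u - 11) < 3 * u ^ 3 := by
      nlinarith [mul_nonneg (mul_nonneg (sub_nonneg.2 hu4) (sub_nonneg.2 hu4)) (sub_nonneg.2 hu4),
        mul_nonneg (sub_nonneg.2 hu4) (sub_nonneg.2 hu4)]
    rw [e]
    have hup : 0 < u := by linarith
    calc _ ≤ 1.3863 * (u * (u ^ 3 + 2 * u ^ 2 + 12 * u - 11)) :=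
          mul_le_mul_of_nonneg_right hl4.le (by positivity)
      _ = u * (1.3863 * (u ^ 3 + 2 * u ^ 2 + 12 * u - 11)) := by ring
      _ < u * (3 * u ^ 3) := mul_lt_mul_of_pos_left h1 hup
      _ = _ := by ring
  linarith

lemma elem {x : ℝ} (hx : 1 < x) :
    Chebyshev.psi x - Chebyshev.theta x - Chebyshev.theta (x ^ ((1:ℝ)/2)) < 3 * x ^ ((1:ℝ)/3) := by
  rcases lt_or_ge x 2 with h | h
  · rw [Chebyshev.psi_eq_zero_of_lt_two h]
    have h1 := Chebyshev.theta_nonneg x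
    have h2 := Chebyshev.theta_nonneg (x ^ ((1:ℝ)/2))
    have h3 : 0 < x ^ ((1:ℝ)/3) := by positivity
    linarith
  · rcases lt_or_ge x (2 ^ 24) with h3 | h3
    · exact elem_small h h3
    · exact elem_large h3

end TEL

theorem theta_explicit_lower_bound (x : ℝ) (hx : 1 < x) :
    ∃ L : ℝ,
      Tendsto
        (fun T : ℝ =>
          ∑ᶠ ρ ∈ {ρ : ℂ | IsNontrivialZetaZero ρ ∧ |ρ.im| ≤ T},
            (zetaZeroMultiplicity ρ : ℂ) * ((x : ℂ) ^ ρ / ρ))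
        atTop (nhds (L : ℂ)) ∧
      chebyshevTheta x - x >
        -chebyshevTheta (x ^ ((1 : ℝ) / 2)) - L - Real.log (2 * π) -
          3 * x ^ ((1 : ℝ) / 3) := by
  obtain ⟨L, hL, hb⟩ := TEL.main_limit hx
  refine ⟨L, ?_, ?_⟩
  · refine hL.congr ?_
    intro T
    symm
    have hsub : Function.support (fun ρ : ℂ => (zetaZeroMultiplicity ρ : ℂ) * ((x : ℂ) ^ ρ / ρ)) ∩
        {ρ : ℂ | IsNontrivialZetaZero ρ ∧ |ρ.im| ≤ T} =
        Function.support (fun ρ : ℂ => (zetaZeroMultiplicity ρ : ℂ) * ((x : ℂ) ^ ρ / ρ)) ∩ ↑(TEL.MS T) := by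
      congr 1
      ext ρ
      constructor
      · rintro ⟨⟨h1, h2, h3⟩, h4⟩
        have hne : ρ ≠ 1 := by rintro rfl; simp at h3
        have hz : riemannZeta₁ ρ = 0 := by rw [TEL.zeta1_eq_mul hne, h1, mul_zero]
        rw [Finset.mem_coe, TEL.MS, Finset.mem_filter, TEL.mem_Z]
        refine ⟨⟨hz, ?_⟩, h2, h4⟩
        have := TEL.zero_norm_le ((TEL.mu_ne_zero_iff ρ).2 hz) h2
        linarith
      · intro h
        rw [Finset.mem_coe, TEL.MS, Finset.mem_filter, TEL.mem_Z] at h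
        exact ⟨⟨(TEL.zeta_zero_of_zeta1 h.1.1).2, h.2.1, TEL.mu_re ((TEL.mu_ne_zero_iff ρ).2 h.1.1)⟩, h.2.2⟩
    have e := finsum_mem_inter_support_eq (fun ρ : ℂ => (zetaZeroMultiplicity ρ : ℂ) * ((x : ℂ) ^ ρ / ρ))
      {ρ : ℂ | IsNontrivialZetaZero ρ ∧ |ρ.im| ≤ T} (↑(TEL.MS T)) (by
        rw [Set.inter_comm, hsub, Set.inter_comm])
    rw [e, finsum_mem_coe_finset]
    apply Finset.sum_congr rfl
    intro ρ hρ
    rw [TEL.MS, Finset.mem_filter, TEL.mem_Z] at hρ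
    rw [TEL.mu_eq_mult (TEL.zeta_zero_of_zeta1 hρ.1.1).1, Complex.cpow_def_of_ne_zero (by
      exact_mod_cast (by linarith : x ≠ 0)), ← Complex.ofReal_log (by linarith)]
    ring
  · have he := TEL.elem hx
    have hθ : ∀ y, chebyshevTheta y = Chebyshev.theta y := by
      intro y
      rw [Chebyshev.theta_eq_sum_Icc]
      unfold chebyshevTheta
      rw [Finset.range_eq_Ico]
      rfl
    rw [hθ, hθ]
    linarith
end
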